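/- There exists ε > 0 such that for every origin-symmetric convex body K ⊂ ℝ³ with (1−ε)B³ ⊆ K ⊆ (1+ε)B³ which is not an ellipsoid (i.e., K ≠ T(B³) for every invertible linear map T), the optimal lattice packing fraction satisfies φ(K) > φ(B³). In other words, B³ is a local pessimum for lattice packing among origin-symmetric convex bodies. -/

import Mathlib

open scoped RealInnerProductSpace
open Metric MeasureTheory

noncomputable section

abbrev Euc (n : ℕ) := EuclideanSpace ℝ (Fin n)

/-- The rank-one symmetric map `P_x : y ↦ ⟪y, x⟫ • x`. -/
def projMap {F : Type*} [NormedAddCommGroup F] [InnerProductSpace ℝ F] (x : F) :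
    F →ₗ[ℝ] F where
  toFun y := (⟪y, x⟫) • x
  map_add' y z := by simp [inner_add_left, add_smul]
  map_smul' c y := by simp [real_inner_smul_left, mul_smul]

/-- A configuration is perfect if the maps `P_x`, `x ∈ S`, span the symmetric maps. -/
def IsPerfectCfg {F : Type*} [NormedAddCommGroup F] [InnerProductSpace ℝ F]
    (S : Set F) : Prop :=
  ∀ T : F →ₗ[ℝ] F, T.IsSymmetric → T ∈ Submodule.span ℝ (projMap '' S)

/-- A configuration is eutactic if `Id = Σ_{x∈S} υ_x P_x` with `υ_x > 0`, `υ_x = υ_{-x}`. -/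
def IsEutacticCfg {F : Type*} [NormedAddCommGroup F] [InnerProductSpace ℝ F]
    (S : Set F) : Prop :=
  ∃ υ : F → ℝ, (∀ x ∈ S, 0 < υ x) ∧ (∀ x ∉ S, υ x = 0) ∧
    (Function.support υ).Finite ∧ (∀ x, υ x = υ (-x)) ∧
    ∑ᶠ x, υ x • projMap x = (LinearMap.id : F →ₗ[ℝ] F)

/-- A configuration is semi-eutactic if `Id = Σ_{x∈S} υ_x P_x` with `υ_x ≥ 0`, `υ_x = υ_{-x}`. -/
def IsSemiEutacticCfg {F : Type*} [NormedAddCommGroup F] [InnerProductSpace ℝ F]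
    (S : Set F) : Prop :=
  ∃ υ : F → ℝ, (∀ x ∈ S, 0 ≤ υ x) ∧ (∀ x ∉ S, υ x = 0) ∧
    (Function.support υ).Finite ∧ (∀ x, υ x = υ (-x)) ∧
    ∑ᶠ x, υ x • projMap x = (LinearMap.id : F →ₗ[ℝ] F)

/-- A configuration is extreme if it is perfect and eutactic. -/
def IsExtremeCfg {F : Type*} [NormedAddCommGroup F] [InnerProductSpace ℝ F]
    (S : Set F) : Prop :=
  IsPerfectCfg S ∧ IsEutacticCfg S

/-- Hilbert–Schmidt (Frobenius) norm of a linear map on `ℝ^n`. -/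
def frobNorm {n : ℕ} (T : Euc n →ₗ[ℝ] Euc n) : ℝ :=
  Real.sqrt (∑ j, ∑ i, (T (EuclideanSpace.single j 1) i) ^ 2)

/-- The lattice `T ℤ^n` as a set of points. -/
def latticeSet {n : ℕ} (T : Euc n →ₗ[ℝ] Euc n) : Set (Euc n) :=
  {v | ∃ z : Fin n → ℤ, v = T (∑ i, (z i : ℝ) • EuclideanSpace.single i 1)}

/-- A set is an (n-dimensional) lattice if it is `T ℤ^n` for an invertible `T`. -/
def IsLattice {n : ℕ} (Λ : Set (Euc n)) : Prop :=
  ∃ T : Euc n →ₗ[ℝ] Euc n, LinearMap.det T ≠ 0 ∧ Λ = latticeSet T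

/-- The determinant `d(Λ) = |det T|` of a lattice. -/
def latDet {n : ℕ} (Λ : Set (Euc n)) : ℝ :=
  sInf {d | ∃ T : Euc n →ₗ[ℝ] Euc n, Λ = latticeSet T ∧ d = |LinearMap.det T|}

/-- The metric `δ(Λ, Λ') = inf ‖T - T'‖` on the space of lattices. -/
def latDist {n : ℕ} (Λ Λ' : Set (Euc n)) : ℝ :=
  sInf {d | ∃ T T' : Euc n →ₗ[ℝ] Euc n,
    Λ = latticeSet T ∧ Λ' = latticeSet T' ∧ d = frobNorm (T - T')}

/-- The minimal norm `m(Λ)`. -/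
def minNorm {n : ℕ} (Λ : Set (Euc n)) : ℝ :=
  sInf {r | ∃ x ∈ Λ, x ≠ 0 ∧ r = ‖x‖ ^ 2}

/-- The set `S(Λ)` of minimal vectors of a lattice. -/
def minVecs {n : ℕ} (Λ : Set (Euc n)) : Set (Euc n) :=
  {x | x ∈ Λ ∧ x ≠ 0 ∧ ‖x‖ ^ 2 = minNorm Λ}

/-- An origin-symmetric convex body. -/
structure IsSymCB {n : ℕ} (K : Set (Euc n)) : Prop where
  convex : Convex ℝ K
  compact : IsCompact K
  nonempty_interior : (interior K).Nonempty
  symm : -K = K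

/-- A lattice is admissible for a body if it meets the interior only at the origin. -/
def IsAdmissible {n : ℕ} (Λ K : Set (Euc n)) : Prop :=
  Λ ∩ interior K ⊆ {0}

/-- The critical determinant `d_K`. -/
def critDet {n : ℕ} (K : Set (Euc n)) : ℝ :=
  sInf {d | ∃ Λ : Set (Euc n), IsLattice Λ ∧ IsAdmissible Λ K ∧ d = latDet Λ}

/-- A critical lattice of `K`: an admissible lattice attaining the critical determinant. -/
def IsCriticalLattice {n : ℕ} (Λ K : Set (Euc n)) : Prop :=
  IsLattice Λ ∧ IsAdmissible Λ K ∧ latDet Λ = critDet K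

/-- The optimal lattice packing fraction `φ(K) = 2⁻ⁿ vol(K) / d_K`. -/
def packFrac {n : ℕ} (K : Set (Euc n)) : ℝ :=
  (volume K).toReal / (2 ^ n * critDet K)

/-- The closed unit ball `Bⁿ`. -/
def unitBall (n : ℕ) : Set (Euc n) := Metric.closedBall 0 1

/-- The support function of a body. -/
def suppFn {n : ℕ} (K : Set (Euc n)) (x : Euc n) : ℝ :=
  sSup ((fun y => ⟪x, y⟫) '' K)

/-- The radial function of a body. -/
def radFn {n : ℕ} (K : Set (Euc n)) (x : Euc n) : ℝ :=
  sSup {t : ℝ | 0 ≤ t ∧ t • x ∈ K}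

/-! ### The orthogonal group and its Haar probability measure -/

/-- The orthogonal group of `ℝ³`. -/
abbrev G3 := Matrix.orthogonalGroup (Fin 3) ℝ

instance G3.measSpace : MeasurableSpace G3 := borel _
instance G3.borelSpace : BorelSpace G3 := ⟨rfl⟩

instance G3.secondCountable : SecondCountableTopology G3 := by
  have : SecondCountableTopology (Matrix (Fin 3) (Fin 3) ℝ) :=
    inferInstanceAs (SecondCountableTopology (Fin 3 → Fin 3 → ℝ))
  exact TopologicalSpace.Subtype.secondCountableTopology _

instance G3.compactSpace : CompactSpace G3 := by
  have hcl : IsClosed (unitary (Matrix (Fin 3) (Fin 3) ℝ) : Set (Matrix (Fin 3) (Fin 3) ℝ)) :=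
    isClosed_unitary
  have hcomp : IsCompact (Set.pi Set.univ fun _ : Fin 3 =>
      (Set.pi Set.univ fun _ : Fin 3 => Set.Icc (-1 : ℝ) 1)) :=
    isCompact_univ_pi fun _ => isCompact_univ_pi fun _ => isCompact_Icc
  have hsub : (unitary (Matrix (Fin 3) (Fin 3) ℝ) : Set (Matrix (Fin 3) (Fin 3) ℝ)) ⊆
      (Set.pi Set.univ fun _ : Fin 3 => (Set.pi Set.univ fun _ : Fin 3 => Set.Icc (-1 : ℝ) 1)) := by
    intro U hU i _ j _
    have := entry_norm_bound_of_unitary (𝕜 := ℝ) (n := Fin 3) hU i j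
    rw [Real.norm_eq_abs, abs_le] at this
    exact this
  exact isCompact_iff_compactSpace.mp (hcomp.of_isClosed_subset hcl hsub)

/-- The Haar probability measure. -/
def mu3 : Measure G3 := Measure.haarMeasure ⊤

instance mu3.isHaar : mu3.IsHaarMeasure := by unfold mu3; infer_instance

instance mu3.isProb : IsProbabilityMeasure mu3 := by
  constructor
  have := Measure.haarMeasure_self (K₀ := (⊤ : TopologicalSpace.PositiveCompacts G3))
  simpa [mu3] using this

instance mu3.rightInv : mu3.IsMulRightInvariant := by
  constructor
  intro g
  have h1 : IsProbabilityMeasure (Measure.map (· * g) mu3) :=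
    Measure.isProbabilityMeasure_map (by fun_prop)
  have h2 : (Measure.map (· * g) mu3).IsHaarMeasure := by
    infer_instance
  exact Measure.isHaarMeasure_eq_of_isProbabilityMeasure _ _

/-- Action of the orthogonal group on `ℝ³`. -/
def rot (R : G3) : Euc 3 →ₗ[ℝ] Euc 3 := Matrix.toEuclideanLin R.1

lemma rot_apply (R : G3) (x : Euc 3) (i : Fin 3) : rot R x i = ∑ j, R.1 i j * x j := by
  simp [rot, Matrix.toEuclideanLin, Matrix.mulVec, dotProduct]

lemma rot_mul (R S : G3) (x : Euc 3) : rot (R * S) x = rot R (rot S x) := by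
  simp [rot, Matrix.toEuclideanLin]

lemma rot_one (x : Euc 3) : rot 1 x = x := by
  simp [rot, Matrix.toEuclideanLin]

lemma rot_inv_rot (R : G3) (x : Euc 3) : rot R⁻¹ (rot R x) = x := by
  rw [← rot_mul, inv_mul_cancel, rot_one]

lemma rot_rot_inv (R : G3) (x : Euc 3) : rot R (rot R⁻¹ x) = x := by
  rw [← rot_mul, mul_inv_cancel, rot_one]

lemma rot_inner (R : G3) (x y : Euc 3) : ⟪rot R x, rot R y⟫ = ⟪x, y⟫ := by
  have hU : Matrix.transpose R.1 * R.1 = 1 := by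
    have := Unitary.star_mul_self_of_mem R.2
    simpa [Matrix.star_eq_conjTranspose] using this
  have h (i j : Fin 3) : ∑ k, R.1 k i * R.1 k j = if i = j then 1 else 0 := by
    have := congrFun (congrFun hU i) j
    simpa [Matrix.mul_apply, Matrix.one_apply] using this
  have h00 := h 0 0; have h01 := h 0 1; have h02 := h 0 2
  have h11 := h 1 1; have h12 := h 1 2; have h22 := h 2 2
  simp [Fin.sum_univ_three] at h00 h01 h02 h11 h12 h22
  simp only [PiLp.inner_apply, rot_apply, Fin.sum_univ_three, RCLike.inner_apply, conj_trivial]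
  linear_combination (x 0 * y 0) * h00 + (x 0 * y 1 + x 1 * y 0) * h01 +
    (x 0 * y 2 + x 2 * y 0) * h02 + x 1 * y 1 * h11 + (x 1 * y 2 + x 2 * y 1) * h12 +
    x 2 * y 2 * h22

lemma rot_norm (R : G3) (x : Euc 3) : ‖rot R x‖ = ‖x‖ := by
  rw [← sq_eq_sq₀ (norm_nonneg _) (norm_nonneg _), ← real_inner_self_eq_norm_sq,
    ← real_inner_self_eq_norm_sq, rot_inner]

lemma rot_inner_left (R : G3) (x y : Euc 3) : ⟪rot R x, y⟫ = ⟪x, rot R⁻¹ y⟫ := by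
  rw [← rot_inner R x (rot R⁻¹ y), rot_rot_inv]

lemma continuous_rot : Continuous fun p : G3 × Euc 3 => rot p.1 p.2 := by
  have hv : Continuous fun p : G3 × Euc 3 => ((p.1 : G3) : Matrix (Fin 3) (Fin 3) ℝ) :=
    continuous_subtype_val.comp continuous_fst
  have h : Continuous fun p : G3 × Euc 3 => fun i : Fin 3 =>
      ∑ j, ((p.1 : G3) : Matrix (Fin 3) (Fin 3) ℝ) i j * p.2 j := by
    refine continuous_pi fun i => continuous_finsetSum _ fun j _ => Continuous.mul ?_ ?_
    · exact hv.matrix_elem i j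
    · fun_prop
  have h2 := (PiLp.continuous_toLp 2 (fun _ : Fin 3 => ℝ)).comp h
  refine h2.congr fun p => ?_
  ext i
  simp [rot_apply]

lemma continuous_rot_left (x : Euc 3) : Continuous fun R : G3 => rot R x :=
  continuous_rot.comp (by fun_prop : Continuous fun R : G3 => (R, x))

/-- The element of `G3` given by a linear isometry. -/
lemma exists_G3_of_isometry (e : Euc 3 ≃ₗᵢ[ℝ] Euc 3) : ∃ S : G3, ∀ x, rot S x = e x := by
  let A : Matrix (Fin 3) (Fin 3) ℝ := Matrix.toEuclideanLin.symm e.toLinearEquiv.toLinearMap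
  have hA : ∀ x, Matrix.toEuclideanLin A x = e x := by
    intro x; simp [A]
  have hmem : A ∈ Matrix.orthogonalGroup (Fin 3) ℝ := by
    rw [Matrix.mem_orthogonalGroup_iff']
    ext i j
    have := e.inner_map_map (EuclideanSpace.single i 1) (EuclideanSpace.single j 1)
    rw [← hA, ← hA] at this
    simp [Matrix.toEuclideanLin, PiLp.inner_apply, Matrix.mulVec, dotProduct] at this
    simp [Matrix.mul_apply, Matrix.one_apply, Fin.sum_univ_three, Pi.single_apply] at this ⊢
    rw [← this]
    ring
  exact ⟨⟨A, hmem⟩, hA⟩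

lemma exists_rot_eq {x y : Euc 3} (h : ‖x‖ = ‖y‖) : ∃ S : G3, rot S x = y := by
  obtain ⟨S, hS⟩ := exists_G3_of_isometry (Submodule.reflection (ℝ ∙ (x - y))ᗮ)
  exact ⟨S, by rw [hS]; exact Submodule.reflection_sub h⟩

/-- Rotation about the third axis. -/
def axisRot (θ : ℝ) : G3 :=
  ⟨!![Real.cos θ, -Real.sin θ, 0; Real.sin θ, Real.cos θ, 0; 0, 0, 1], by
    rw [Matrix.mem_orthogonalGroup_iff]
    have := Real.sin_sq_add_cos_sq θ
    ext i j
    fin_cases i <;> fin_cases j <;> simp [Matrix.mul_apply, Fin.sum_univ_three] <;> nlinarith⟩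

lemma continuous_axisRot : Continuous axisRot := by
  refine Continuous.subtype_mk ?_ _
  refine continuous_pi fun i => continuous_pi fun j => ?_
  fin_cases i <;> fin_cases j <;> simp <;> fun_prop

/-- The third basis vector. -/
def e3 : Euc 3 := EuclideanSpace.single 2 1

lemma norm_e3 : ‖e3‖ = 1 := by simp [e3]

lemma axisRot_e3 (θ : ℝ) : rot (axisRot θ) e3 = e3 := by
  ext i
  rw [rot_apply]
  fin_cases i <;> simp [axisRot, e3]

lemma rot_smul_e3 (x : Euc 3) : ∃ S : G3, x = ‖x‖ • rot S e3 := by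
  obtain ⟨S, hS⟩ := exists_rot_eq (x := ‖x‖ • e3) (y := x) (by simp [norm_smul, norm_e3])
  exact ⟨S, by rw [← map_smul, hS]⟩

/-- Continuous functions of the group element are integrable. -/
lemma intG {F : G3 → ℝ} (hF : Continuous F) : Integrable F mu3 :=
  hF.integrable_of_hasCompactSupport (HasCompactSupport.of_compactSpace F)

/-- The mean over the sphere does not depend on the base point. -/
lemma mean_base (f : Euc 3 → ℝ) {x y : Euc 3} (h : ‖x‖ = ‖y‖) :
    ∫ R, f (rot R x) ∂mu3 = ∫ R, f (rot R y) ∂mu3 := by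
  obtain ⟨S, rfl⟩ := exists_rot_eq h
  simp_rw [← rot_mul]
  exact (integral_mul_right_eq_self (fun R => f (rot R x)) S).symm



/-! ### Legendre-type numbers -/

/-- The mean of `cos ^ (2k)`. -/
def kap (k : ℕ) : ℝ := (Nat.centralBinom k : ℝ) / 4 ^ k

/-- The Legendre polynomial of degree `2n`, by Laplace's formula. -/
def pleg (n : ℕ) (t : ℝ) : ℝ :=
  ∑ k ∈ Finset.range (n + 1), ((2 * n).choose (2 * k) : ℝ) * t ^ (2 * (n - k)) * (t ^ 2 - 1) ^ k * kap k

lemma integral_cos_pow_two_pi (m : ℕ) :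
    (∫ θ in (0 : ℝ)..2 * Real.pi, Real.cos θ ^ (m + 2)) =
      (m + 1) / (m + 2) * ∫ θ in (0 : ℝ)..2 * Real.pi, Real.cos θ ^ m := by
  rw [integral_cos_pow]
  simp

lemma integral_cos_even (k : ℕ) :
    (∫ θ in (0 : ℝ)..2 * Real.pi, Real.cos θ ^ (2 * k)) = 2 * Real.pi * kap k := by
  induction k with
  | zero => simp [kap]
  | succ k ih =>
    rw [show 2 * (k + 1) = 2 * k + 2 by ring, integral_cos_pow_two_pi, ih]
    have h := Nat.succ_mul_centralBinom_succ k
    have h' : ((k : ℝ) + 1) * (Nat.centralBinom (k + 1) : ℝ) = 2 * (2 * k + 1) * Nat.centralBinom k := by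
      exact_mod_cast h
    unfold kap
    have hk : (k : ℝ) + 1 ≠ 0 := by positivity
    have : (Nat.centralBinom (k + 1) : ℝ) = 2 * (2 * k + 1) * Nat.centralBinom k / (k + 1) := by
      field_simp
      linarith
    rw [this]
    push_cast
    field_simp
    ring

lemma integral_cos_odd (k : ℕ) :
    (∫ θ in (0 : ℝ)..2 * Real.pi, Real.cos θ ^ (2 * k + 1)) = 0 := by
  induction k with
  | zero => simp
  | succ k ih =>
    rw [show 2 * (k + 1) + 1 = (2 * k + 1) + 2 by ring, integral_cos_pow_two_pi, ih, mul_zero]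

/-- A sum over an initial segment of even length splits into even and odd parts. -/
lemma sum_range_even_odd {M : Type*} [AddCommMonoid M] (f : ℕ → M) (n : ℕ) :
    ∑ m ∈ Finset.range (2 * n + 1), f m =
      (∑ k ∈ Finset.range (n + 1), f (2 * k)) + ∑ k ∈ Finset.range n, f (2 * k + 1) := by
  induction n with
  | zero => simp
  | succ n ih =>
    rw [show 2 * (n + 1) + 1 = (2 * n + 1) + 1 + 1 by ring, Finset.sum_range_succ,
      Finset.sum_range_succ, ih, Finset.sum_range_succ _ (n + 1), Finset.sum_range_succ _ n,
      Finset.sum_range_succ _ n]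
    rw [show 2 * n + 1 + 1 = 2 * (n + 1) by ring]
    abel

lemma integral_complex_cos (A B : ℂ) (n : ℕ) :
    (∫ θ in (0 : ℝ)..2 * Real.pi, (A + B * (Real.cos θ : ℂ)) ^ (2 * n)) =
      2 * Real.pi * ∑ k ∈ Finset.range (n + 1),
        ((2 * n).choose (2 * k) : ℂ) * A ^ (2 * (n - k)) * (B ^ 2) ^ k * (kap k : ℂ) := by
  have h1 : ∀ θ : ℝ, (A + B * (Real.cos θ : ℂ)) ^ (2 * n) = ∑ m ∈ Finset.range (2 * n + 1),
      (B ^ m * A ^ (2 * n - m) * ((2 * n).choose m : ℂ)) * ((Real.cos θ ^ m : ℝ) : ℂ) := by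
    intro θ
    rw [add_comm, add_pow]
    refine Finset.sum_congr rfl fun m _ => ?_
    push_cast
    ring
  simp_rw [h1]
  rw [intervalIntegral.integral_finsetSum]
  · simp_rw [intervalIntegral.integral_const_mul, intervalIntegral.integral_ofReal]
    rw [sum_range_even_odd]
    simp_rw [integral_cos_even, integral_cos_odd]
    simp only [Complex.ofReal_zero, mul_zero, Finset.sum_const_zero, add_zero]
    rw [Finset.mul_sum]
    refine Finset.sum_congr rfl fun k hk => ?_
    rw [show 2 * n - 2 * k = 2 * (n - k) by omega]
    push_cast
    rw [pow_mul B]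
    ring
  · intro m _
    exact (Continuous.intervalIntegrable (by fun_prop) _ _)

lemma integral_real_cos (A B : ℝ) (n : ℕ) :
    (∫ θ in (0 : ℝ)..2 * Real.pi, (A + B * Real.cos θ) ^ (2 * n)) =
      2 * Real.pi * ∑ k ∈ Finset.range (n + 1),
        ((2 * n).choose (2 * k) : ℝ) * A ^ (2 * (n - k)) * (B ^ 2) ^ k * kap k := by
  have h := integral_complex_cos A B n
  have h2 : ∀ θ : ℝ, ((A : ℂ) + B * (Real.cos θ : ℂ)) ^ (2 * n) =
    (((A + B * Real.cos θ) ^ (2 * n) : ℝ) : ℂ) := by intro θ; push_cast; ring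
  simp_rw [h2] at h
  rw [intervalIntegral.integral_ofReal] at h
  exact_mod_cast h

lemma integral_cos_sin (A B C : ℝ) (n : ℕ) :
    (∫ θ in (0 : ℝ)..2 * Real.pi, (A + B * Real.cos θ + C * Real.sin θ) ^ (2 * n)) =
      2 * Real.pi * ∑ k ∈ Finset.range (n + 1),
        ((2 * n).choose (2 * k) : ℝ) * A ^ (2 * (n - k)) * (B ^ 2 + C ^ 2) ^ k * kap k := by
  set z : ℂ := ⟨B, C⟩ with hz
  have hB : B = ‖z‖ * Real.cos z.arg := by rw [Complex.norm_mul_cos_arg]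
  have hC : C = ‖z‖ * Real.sin z.arg := by rw [Complex.norm_mul_sin_arg]
  have hn : B ^ 2 + C ^ 2 = ‖z‖ ^ 2 := by
    have := Real.sin_sq_add_cos_sq z.arg
    rw [hB, hC]
    linear_combination ‖z‖ ^ 2 * this
  rw [hn, ← integral_real_cos]
  have h1 : ∀ θ : ℝ, (A + B * Real.cos θ + C * Real.sin θ) ^ (2 * n) =
      (fun θ => (A + ‖z‖ * Real.cos θ) ^ (2 * n)) (θ - z.arg) := by
    intro θ
    simp only
    rw [Real.cos_sub]
    nth_rewrite 1 [hB]
    nth_rewrite 1 [hC]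
    ring
  simp_rw [h1]
  rw [intervalIntegral.integral_comp_sub_right (fun θ => (A + ‖z‖ * Real.cos θ) ^ (2 * n))]
  have hper : Function.Periodic (fun θ => (A + ‖z‖ * Real.cos θ) ^ (2 * n)) (2 * Real.pi) := by
    intro θ; simp
  have := hper.intervalIntegral_add_eq (0 - z.arg) 0
  simp only [zero_add] at this
  rw [← this]
  congr 1
  ring

lemma pleg_bound (n : ℕ) (t : ℝ) (ht : t ^ 2 ≤ 1) :
    2 * Real.pi * |pleg n t| ≤
      ∫ θ in (0 : ℝ)..2 * Real.pi, (t ^ 2 + (1 - t ^ 2) * Real.cos θ ^ 2) ^ n := by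
  have h := integral_complex_cos (t : ℂ) (Complex.I * (Real.sqrt (1 - t ^ 2) : ℝ)) n
  have hs : (Complex.I * ((Real.sqrt (1 - t ^ 2) : ℝ) : ℂ)) ^ 2 = ((t ^ 2 - 1 : ℝ) : ℂ) := by
    rw [mul_pow, Complex.I_sq, ← Complex.ofReal_pow, Real.sq_sqrt (by linarith)]
    push_cast; ring
  rw [hs] at h
  have h2 : 2 * (Real.pi : ℂ) * ∑ k ∈ Finset.range (n + 1),
        ((2 * n).choose (2 * k) : ℂ) * (t : ℂ) ^ (2 * (n - k)) * ((t ^ 2 - 1 : ℝ) : ℂ) ^ k * (kap k : ℂ) =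
      ((2 * Real.pi * pleg n t : ℝ) : ℂ) := by
    unfold pleg; push_cast; rfl
  rw [h2] at h
  have h3 : 2 * Real.pi * |pleg n t| = ‖((2 * Real.pi * pleg n t : ℝ) : ℂ)‖ := by
    rw [Complex.norm_real, Real.norm_eq_abs, abs_mul, abs_of_pos Real.two_pi_pos]
  rw [h3, ← h]
  refine (intervalIntegral.norm_integral_le_integral_norm Real.two_pi_pos.le).trans (le_of_eq ?_)
  refine intervalIntegral.integral_congr fun θ _ => ?_
  rw [norm_pow, pow_mul]
  congr 1
  rw [← Complex.normSq_eq_norm_sq, Complex.normSq_apply]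
  simp [-Complex.ofReal_cos]
  have := Real.sq_sqrt (show 0 ≤ 1 - t ^ 2 by linarith)
  linear_combination (Real.cos θ ^ 2) * this

lemma pleg_tendsto (t : ℝ) (ht : t ^ 2 < 1) :
    Filter.Tendsto (fun n => pleg n t) Filter.atTop (nhds 0) := by
  have key : Filter.Tendsto (fun n : ℕ => ∫ θ in (0 : ℝ)..2 * Real.pi,
      (t ^ 2 + (1 - t ^ 2) * Real.cos θ ^ 2) ^ n) Filter.atTop
      (nhds (∫ θ in (0 : ℝ)..2 * Real.pi, (0 : ℝ))) := by
    refine intervalIntegral.tendsto_integral_filter_of_dominated_convergence (fun _ => 1) ?_ ?_ ?_ ?_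
    · exact Filter.Eventually.of_forall fun n => (Continuous.aestronglyMeasurable (by fun_prop))
    · refine Filter.Eventually.of_forall fun n => Filter.Eventually.of_forall fun θ _ => ?_
      have h1 := Real.cos_sq_le_one θ
      have h2 := sq_nonneg (Real.cos θ)
      have h3 := mul_nonneg (by linarith : 0 ≤ 1 - t ^ 2) h2
      rw [Real.norm_eq_abs, abs_of_nonneg (pow_nonneg (by nlinarith [sq_nonneg t]) n)]
      refine pow_le_one₀ ?_ ?_ <;> nlinarith [sq_nonneg t, mul_nonneg (by linarith : 0 ≤ 1 - t ^ 2) h2]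
    · exact (continuous_const.intervalIntegrable _ _)
    · have hfin : (Real.sin ⁻¹' {0}).Countable := by
        have : Real.sin ⁻¹' {0} ⊆ Set.range (fun n : ℤ => (n : ℝ) * Real.pi) := by
          intro x hx
          exact Real.sin_eq_zero_iff.mp hx
        exact (Set.countable_range _).mono this
      filter_upwards [hfin.ae_notMem volume] with θ hθ _
      have hs : 0 < Real.sin θ ^ 2 := by
        have : Real.sin θ ≠ 0 := fun h => hθ h
        positivity
      have hsc := Real.sin_sq_add_cos_sq θ
      refine tendsto_pow_atTop_nhds_zero_of_lt_one ?_ ?_ <;>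
        nlinarith [sq_nonneg t, sq_nonneg (Real.cos θ), mul_pos (by linarith : 0 < 1 - t ^ 2) hs,
          mul_nonneg (by linarith : 0 ≤ 1 - t ^ 2) (sq_nonneg (Real.cos θ))]
  simp only [intervalIntegral.integral_zero] at key
  refine squeeze_zero_norm (a := fun n : ℕ => (∫ θ in (0 : ℝ)..2 * Real.pi,
      (t ^ 2 + (1 - t ^ 2) * Real.cos θ ^ 2) ^ n) / (2 * Real.pi)) (fun n => ?_) ?_
  · rw [le_div_iff₀ Real.two_pi_pos, Real.norm_eq_abs, mul_comm]
    exact pleg_bound n t ht.le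
  · simpa using key.div_const (2 * Real.pi)

lemma pleg_one (n : ℕ) : pleg n 1 = 1 := by
  unfold pleg
  rw [Finset.sum_range_succ', Finset.sum_eq_zero]
  · simp [kap]
  · intro k _; simp

lemma pleg_neg (n : ℕ) (t : ℝ) : pleg n (-t) = pleg n t := by
  unfold pleg
  refine Finset.sum_congr rfl fun k _ => ?_
  rw [pow_mul (-t), neg_sq, ← pow_mul]

lemma pleg_zero (n : ℕ) : pleg n 0 = (-1) ^ n * kap n := by
  unfold pleg
  rw [Finset.sum_range_succ, Finset.sum_eq_zero]
  · simp
  · intro k hk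
    have : 2 * (n - k) ≠ 0 := by have := Finset.mem_range.mp hk; omega
    simp [this]

/-- The eigenvalue of the face-centered cubic configuration in degree `2n`. -/
def ceig (n : ℕ) : ℝ := 1 + 4 * pleg n (1 / 2) + pleg n 0

lemma centralBinom_two_adic (v m : ℕ) (h : 2 ^ v ∣ Nat.centralBinom (m + 1)) :
    2 ^ v ∣ 2 * Nat.centralBinom m := by
  have h1 := Nat.succ_mul_centralBinom_succ m
  have h2 : 2 ^ v ∣ (2 * m + 1) * (2 * Nat.centralBinom m) := by
    rw [show (2 * m + 1) * (2 * Nat.centralBinom m) = (m + 1) * Nat.centralBinom (m + 1) by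
      rw [h1]; ring]
    exact h.mul_left _
  refine Nat.Coprime.dvd_of_dvd_mul_left (Nat.Coprime.pow_left v ?_) h2
  simp

lemma centralBinom_two_adic_iter (v k j : ℕ) (h : 2 ^ v ∣ Nat.centralBinom (k + j)) :
    2 ^ v ∣ 2 ^ j * Nat.centralBinom k := by
  induction j generalizing k with
  | zero => simpa using h
  | succ j ih =>
    have h1 := ih (k + 1) (by rwa [show k + 1 + j = k + (j + 1) by ring])
    have h2 : Nat.centralBinom (k + 1) * (k + 1) = 2 * (2 * k + 1) * Nat.centralBinom k := by
      rw [mul_comm]; exact Nat.succ_mul_centralBinom_succ k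
    have h3 : 2 ^ v ∣ (2 * k + 1) * (2 ^ (j + 1) * Nat.centralBinom k) := by
      rw [show (2 * k + 1) * (2 ^ (j + 1) * Nat.centralBinom k) =
        2 ^ j * Nat.centralBinom (k + 1) * (k + 1) by rw [mul_assoc, h2]; ring]
      exact h1.mul_right _
    exact Nat.Coprime.dvd_of_dvd_mul_left (Nat.Coprime.pow_left v (by simp)) h3

lemma ceig_int (n : ℕ) : (4 : ℝ) ^ (2 * n) * ceig n =
    (((4 : ℤ) ^ (2 * n) + 4 * (∑ k ∈ Finset.range (n + 1),
      ((2 * n).choose (2 * k) : ℤ) * (-3) ^ k * Nat.centralBinom k * 4 ^ (n - k)) +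
      (-1) ^ n * Nat.centralBinom n * 4 ^ n : ℤ) : ℝ) := by
  unfold ceig
  rw [pleg_zero]
  have h : (4 : ℝ) ^ (2 * n) * pleg n (1 / 2) = ∑ k ∈ Finset.range (n + 1),
      ((2 * n).choose (2 * k) : ℝ) * (-3) ^ k * Nat.centralBinom k * 4 ^ (n - k) := by
    unfold pleg kap
    rw [Finset.mul_sum]
    refine Finset.sum_congr rfl fun k hk => ?_
    obtain ⟨j, rfl⟩ : ∃ j, n = k + j := ⟨n - k, by have := Finset.mem_range.mp hk; omega⟩
    rw [show k + j - k = j by omega, pow_mul (1 / 2 : ℝ), show ((1 / 2 : ℝ) ^ 2 - 1) = (-3) / 4 by norm_num,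
      div_pow (-3 : ℝ) 4 k, show ((1 / 2 : ℝ) ^ 2) ^ j = 1 / 4 ^ j by
        rw [show ((1 / 2 : ℝ) ^ 2) = 1 / 4 by norm_num, div_pow, one_pow],
      show (4 : ℝ) ^ (2 * (k + j)) = 4 ^ k * 4 ^ k * 4 ^ j * 4 ^ j by ring]
    field_simp
  have h3 : (4 : ℝ) ^ (2 * n) * kap n = Nat.centralBinom n * 4 ^ n := by
    unfold kap
    rw [show (4 : ℝ) ^ (2 * n) = 4 ^ n * 4 ^ n by ring]
    field_simp
  push_cast
  linear_combination 4 * h + (-1) ^ n * h3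

lemma ceig_ne_zero (n : ℕ) (hn : 2 ≤ n) : ceig n ≠ 0 := by
  intro h0
  have h := ceig_int n
  rw [h0, mul_zero] at h
  have hz : (4 : ℤ) ^ (2 * n) + 4 * (∑ k ∈ Finset.range (n + 1),
      ((2 * n).choose (2 * k) : ℤ) * (-3) ^ k * Nat.centralBinom k * 4 ^ (n - k)) +
      (-1) ^ n * Nat.centralBinom n * 4 ^ n = 0 := by exact_mod_cast h.symm
  obtain ⟨v, w, hw, hv⟩ := Nat.exists_eq_two_pow_mul_odd (Nat.centralBinom_ne_zero n)
  have hdv : ∀ k j, k + j = n → 2 ^ v ∣ 2 ^ j * Nat.centralBinom k := by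
    intro k j hkj
    apply centralBinom_two_adic_iter
    rw [hkj, hv]; exact Dvd.intro _ rfl
  have hdv1 : ∀ k j, k + j = n → 1 ≤ j → ((2 : ℤ) ^ (v + 1)) ∣ (Nat.centralBinom k : ℤ) * 4 ^ j := by
    intro k j hkj hj
    have h1 : 2 ^ (v + 1) ∣ 2 ^ (j + 1) * Nat.centralBinom k := by
      rw [pow_succ, pow_succ, mul_right_comm]; exact Nat.mul_dvd_mul_right (hdv k j hkj) 2
    have h2 : 2 ^ (v + 1) ∣ Nat.centralBinom k * 4 ^ j := by
      refine h1.trans ?_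
      rw [mul_comm]
      refine Nat.mul_dvd_mul_left _ ?_
      rw [show (4 : ℕ) = 2 ^ 2 by norm_num, ← pow_mul]
      exact pow_dvd_pow 2 (by omega)
    exact_mod_cast h2
  have hsplit := Finset.sum_range_succ (fun k => ((2 * n).choose (2 * k) : ℤ) * (-3) ^ k * Nat.centralBinom k * 4 ^ (n - k)) n
  rw [hsplit] at hz
  have hA : ((2 : ℤ) ^ (v + 1)) ∣ ∑ k ∈ Finset.range n,
      ((2 * n).choose (2 * k) : ℤ) * (-3) ^ k * Nat.centralBinom k * 4 ^ (n - k) := by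
    refine Finset.dvd_sum fun k hk => ?_
    have hk' := Finset.mem_range.mp hk
    rw [mul_assoc]
    exact (hdv1 k (n - k) (by omega) (by omega)).mul_left _
  have hB : ((2 : ℤ) ^ (v + 1)) ∣ 4 ^ (2 * n - 1) := by
    have := hdv1 0 n (by simp) (by omega)
    simp only [Nat.centralBinom_zero, Nat.cast_one, one_mul] at this
    exact this.trans (pow_dvd_pow _ (by omega))
  have hC : ((2 : ℤ) ^ (v + 1)) ∣ (Nat.centralBinom n : ℤ) * 4 ^ (n - 1) := by
    rw [hv]
    push_cast
    rw [pow_succ]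
    obtain ⟨m, rfl⟩ : ∃ m, n = m + 2 := ⟨n - 2, by omega⟩
    rw [show m + 2 - 1 = m + 1 by omega]
    refine ⟨w * 2 * 4 ^ m, ?_⟩
    ring
  have hD : (-3 : ℤ) ^ n * Nat.centralBinom n = -(4 ^ (2 * n - 1) + (∑ k ∈ Finset.range n,
      ((2 * n).choose (2 * k) : ℤ) * (-3) ^ k * Nat.centralBinom k * 4 ^ (n - k)) +
      (-1) ^ n * (Nat.centralBinom n * 4 ^ (n - 1))) := by
    obtain ⟨m, rfl⟩ : ∃ m, n = m + 1 := ⟨n - 1, by omega⟩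
    rw [show m + 1 - 1 = m by omega, show 2 * (m + 1) - 1 = 2 * m + 1 by omega]
    have h4 : (4 : ℤ) ^ (2 * (m + 1)) = 4 * 4 ^ (2 * m + 1) := by ring
    have h5 : (4 : ℤ) ^ (m + 1) = 4 * 4 ^ m := by ring
    rw [h4, h5] at hz
    simp only [Nat.choose_self, Nat.cast_one, one_mul, Nat.sub_self, pow_zero, mul_one] at hz
    linarith
  have hE : ((2 : ℤ) ^ (v + 1)) ∣ (-3 : ℤ) ^ n * Nat.centralBinom n := by
    rw [hD]
    exact (((hB.add hA).add (hC.mul_left _))).neg_right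
  rw [hv, pow_succ] at hE
  push_cast at hE
  have hF : (2 : ℤ) ∣ (-3) ^ n * w := by
    have : (2 : ℤ) ^ v * 2 ∣ 2 ^ v * ((-3) ^ n * w) := by
      rw [show (2 : ℤ) ^ v * ((-3) ^ n * w) = (-3) ^ n * (2 ^ v * w) by ring]; exact hE
    exact (mul_dvd_mul_iff_left (by positivity)).mp this
  have hodd : Odd ((-3 : ℤ) ^ n * w) := by
    refine Odd.mul (Odd.pow (by decide)) ?_
    exact_mod_cast hw
  exact (Int.not_even_iff_odd.mpr hodd) (even_iff_two_dvd.mpr hF)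

lemma exists_c0 : ∃ c > (0 : ℝ), ∀ n, 2 ≤ n → c ≤ |ceig n| := by
  have hlim : Filter.Tendsto ceig Filter.atTop (nhds 1) := by
    have h1 := pleg_tendsto (1 / 2) (by norm_num)
    have h2 := pleg_tendsto 0 (by norm_num)
    have := ((h1.const_mul 4).const_add 1).add h2
    simp only [mul_zero, add_zero] at this
    exact this
  have hev : ∀ᶠ n in Filter.atTop, (1 / 2 : ℝ) < ceig n := hlim.eventually_const_lt (by norm_num)
  obtain ⟨N, hN⟩ := Filter.eventually_atTop.mp hev
  have hfin : ∀ N : ℕ, ∃ c > (0 : ℝ), ∀ n, 2 ≤ n → n < N → c ≤ |ceig n| := by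
    intro N
    induction N with
    | zero => exact ⟨1, one_pos, fun n _ h => absurd h (by omega)⟩
    | succ N ih =>
      obtain ⟨c, hc, h⟩ := ih
      by_cases hN2 : 2 ≤ N
      · refine ⟨min c |ceig N|, lt_min hc (abs_pos.mpr (ceig_ne_zero N hN2)), fun n h2 hn => ?_⟩
        rcases Nat.lt_succ_iff_lt_or_eq.mp hn with h' | rfl
        · exact (min_le_left _ _).trans (h n h2 h')
        · exact min_le_right _ _
      · refine ⟨c, hc, fun n h2 hn => ?_⟩
        omega
  obtain ⟨c, hc, h⟩ := hfin N
  refine ⟨min c (1 / 2), lt_min hc (by norm_num), fun n h2 => ?_⟩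
  by_cases hn : n < N
  · exact (min_le_left _ _).trans (h n h2 hn)
  · exact (min_le_right _ _).trans ((hN n (by omega)).le.trans (le_abs_self _))



/-! ### The Hilbert space of functions on the group -/

/-- Square integrable functions on the orthogonal group. -/
abbrev HG := Lp ℝ 2 mu3

/-- Right translation. -/
def UG (S : G3) : HG →ₗᵢ[ℝ] HG :=
  Lp.compMeasurePreservingₗᵢ ℝ (fun R => R * S) (measurePreserving_mul_right mu3 S)

/-- A continuous function as an element of the Hilbert space. -/
def tlG : C(G3, ℝ) →L[ℝ] HG := ContinuousMap.toLp 2 mu3 ℝ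

lemma UG_coe (S : G3) (F : HG) : (UG S F : G3 → ℝ) =ᵐ[mu3] fun R => (F : G3 → ℝ) (R * S) :=
  Lp.coeFn_compMeasurePreserving F (measurePreserving_mul_right mu3 S)

lemma tlG_coe (F : C(G3, ℝ)) : (tlG F : G3 → ℝ) =ᵐ[mu3] F :=
  ContinuousMap.coeFn_toLp mu3 F

/-- Translate of a continuous function. -/
def trG (S : G3) (F : C(G3, ℝ)) : C(G3, ℝ) := F.comp ⟨fun R => R * S, by fun_prop⟩

lemma UG_tlG (S : G3) (F : C(G3, ℝ)) : UG S (tlG F) = tlG (trG S F) := by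
  apply Lp.ext
  have h1 := (measurePreserving_mul_right mu3 S).quasiMeasurePreserving.ae_eq_comp (tlG_coe F)
  filter_upwards [UG_coe S (tlG F), tlG_coe (trG S F), h1] with R h2 h3 h4
  rw [h2, h3]
  exact h4

lemma UG_mul (S T : G3) (F : HG) : UG S (UG T F) = UG (S * T) F := by
  apply Lp.ext
  have h1 := (measurePreserving_mul_right mu3 S).quasiMeasurePreserving.ae_eq_comp (UG_coe T F)
  filter_upwards [UG_coe S (UG T F), UG_coe (S * T) F, h1] with R h2 h3 h4
  rw [h2, h3]
  have h5 : (UG T F : G3 → ℝ) (R * S) = (F : G3 → ℝ) (R * S * T) := h4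
  rw [h5, mul_assoc]

lemma inner_tlG (F : C(G3, ℝ)) (h : HG) : ⟪tlG F, h⟫ = ∫ R, F R * (h : G3 → ℝ) R ∂mu3 := by
  rw [L2.inner_def]
  refine integral_congr_ae ?_
  filter_upwards [tlG_coe F] with R hR
  rw [hR]
  simp [mul_comm]

lemma inner_tlG_tlG (F F' : C(G3, ℝ)) : ⟪tlG F, tlG F'⟫ = ∫ R, F R * F' R ∂mu3 := by
  rw [inner_tlG]
  refine integral_congr_ae ?_
  filter_upwards [tlG_coe F'] with R hR
  rw [hR]

lemma norm_tlG_sq (F : C(G3, ℝ)) : ‖tlG F‖ ^ 2 = ∫ R, F R ^ 2 ∂mu3 := by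
  rw [← real_inner_self_eq_norm_sq, inner_tlG_tlG]
  simp [sq]

/-- The zonal coordinate. -/
def zon (a : Euc 3) : C(G3, ℝ) := ⟨fun R => ⟪rot R e3, a⟫, by
  have := continuous_rot_left e3
  fun_prop⟩

lemma zon_apply (a : Euc 3) (R : G3) : zon a R = ⟪rot R e3, a⟫ := rfl

/-- Even powers of zonal coordinates. -/
def gen (a : Euc 3) (k : ℕ) : HG := tlG (zon a ^ (2 * k))

/-- Zonal functions of degree at most `2n`. -/
def WG (n : ℕ) : Submodule ℝ HG :=
  (Submodule.span ℝ {F | ∃ a k, k ≤ n ∧ F = gen a k}).topologicalClosure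

lemma gen_mem_WG {a : Euc 3} {k n : ℕ} (h : k ≤ n) : gen a k ∈ WG n :=
  Submodule.le_topologicalClosure _ (Submodule.subset_span ⟨a, k, h, rfl⟩)

lemma WG_closed (n : ℕ) : IsClosed (WG n : Set HG) := Submodule.isClosed_topologicalClosure _

lemma WG_mono : Monotone WG := by
  intro m n h
  refine Submodule.topologicalClosure_mono (Submodule.span_mono ?_)
  rintro F ⟨a, k, hk, rfl⟩
  exact ⟨a, k, hk.trans h, rfl⟩

/-- Induction principle for `WG n`. -/
lemma WG_induction {n : ℕ} {p : HG → Prop} (hgen : ∀ a k, k ≤ n → p (gen a k))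
    (hadd : ∀ F F', p F → p F' → p (F + F')) (hsmul : ∀ (c : ℝ) F, p F → p (c • F))
    (h0 : p 0) (hcl : IsClosed {F | p F}) : ∀ F ∈ WG n, p F := by
  have h1 : ∀ F ∈ Submodule.span ℝ {F | ∃ a k, k ≤ n ∧ F = gen a k}, p F := by
    intro F hF
    induction hF using Submodule.span_induction with
    | mem x h => obtain ⟨a, k, hk, rfl⟩ := h; exact hgen a k hk
    | zero => exact h0
    | add x y _ _ hx hy => exact hadd x y hx hy
    | smul c x _ hx => exact hsmul c x hx
  intro F hF
  exact closure_minimal (s := (Submodule.span ℝ {F | ∃ a k, k ≤ n ∧ F = gen a k} : Set HG))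
    (t := {F | p F}) h1 hcl hF

lemma mem_WG_orthogonal {n : ℕ} {h : HG} : h ∈ (WG n)ᗮ ↔ ∀ a k, k ≤ n → ⟪gen a k, h⟫ = 0 := by
  rw [Submodule.mem_orthogonal]
  constructor
  · intro H a k hk
    exact H _ (gen_mem_WG hk)
  · intro H
    refine WG_induction H ?_ ?_ ?_ ?_
    · intro F F' h1 h2; rw [inner_add_left, h1, h2, add_zero]
    · intro c F h1; rw [real_inner_smul_left, h1, mul_zero]
    · exact inner_zero_left _
    · exact isClosed_eq (by fun_prop) continuous_const

/-- Invariance under rotations about the axis. -/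
def AxInv (h : HG) : Prop := ∀ θ : ℝ, UG (axisRot θ) h = h

lemma AxInv_gen (a : Euc 3) (k : ℕ) : AxInv (gen a k) := by
  intro θ
  rw [gen, UG_tlG]
  congr 1
  ext R
  simp [trG, zon_apply, rot_mul, axisRot_e3]

lemma AxInv_WG {n : ℕ} : ∀ F ∈ WG n, AxInv F := by
  refine WG_induction (fun a k _ => AxInv_gen a k) ?_ ?_ ?_ ?_
  · intro F F' h1 h2 θ; rw [map_add, h1, h2]
  · intro c F h1 θ; rw [map_smul, h1]
  · intro θ; exact map_zero _
  · have : {F | AxInv F} = ⋂ θ : ℝ, {F | UG (axisRot θ) F = F} := by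
      ext F; simp [AxInv]
    rw [this]
    exact isClosed_iInter fun θ => isClosed_eq (UG (axisRot θ)).continuous continuous_id

/-! ### Averaging -/

lemma rot_axisRot_inner (R S : G3) (θ : ℝ) (a : Euc 3) :
    ⟪rot (R * axisRot θ * S) e3, a⟫ =
      rot S e3 2 * rot R⁻¹ a 2 + (rot S e3 0 * rot R⁻¹ a 0 + rot S e3 1 * rot R⁻¹ a 1) * Real.cos θ +
        (rot S e3 0 * rot R⁻¹ a 1 - rot S e3 1 * rot R⁻¹ a 0) * Real.sin θ := by
  rw [mul_assoc, rot_mul, rot_inner_left, rot_mul]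
  generalize rot S e3 = y
  generalize rot R⁻¹ a = b
  rw [PiLp.inner_apply, Fin.sum_univ_three, rot_apply, rot_apply, rot_apply]
  simp [axisRot, Fin.sum_univ_three]
  ring

lemma inner_e3 (x : Euc 3) : ⟪x, e3⟫ = x 2 := by
  simp [e3, EuclideanSpace.inner_single_right]

lemma inner_e3' (x : Euc 3) : ⟪e3, x⟫ = x 2 := by
  rw [real_inner_comm, inner_e3]

/-- Coefficient of the lower order terms. -/
def lowc (n k m : ℕ) (t r : ℝ) : ℝ :=
  ((2 * n).choose (2 * k) : ℝ) * t ^ (2 * (n - k)) * (1 - t ^ 2) ^ k * kap k *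
    ((-1) ^ m * r ^ (k - m) * (k.choose m : ℝ))

lemma avg_expand (n : ℕ) (t y r : ℝ) :
    ∑ k ∈ Finset.range (n + 1), ((2 * n).choose (2 * k) : ℝ) * (t * y) ^ (2 * (n - k)) *
      ((1 - t ^ 2) * (r - y ^ 2)) ^ k * kap k =
    pleg n t * y ^ (2 * n) + ∑ k ∈ Finset.range (n + 1), ∑ m ∈ Finset.range k,
      lowc n k m t r * y ^ (2 * (n - k + m)) := by
  unfold pleg
  rw [Finset.sum_mul, ← Finset.sum_add_distrib]
  refine Finset.sum_congr rfl fun k hk => ?_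
  have hk' : k ≤ n := Nat.lt_succ_iff.mp (Finset.mem_range.mp hk)
  obtain ⟨j, rfl⟩ : ∃ j, n = k + j := ⟨n - k, by omega⟩
  rw [show k + j - k = j by omega]
  have h1 : (r - y ^ 2) ^ k = (∑ m ∈ Finset.range k, (-1) ^ m * y ^ (2 * m) * r ^ (k - m) * (k.choose m : ℝ)) +
      (-1) ^ k * y ^ (2 * k) := by
    rw [show r - y ^ 2 = -(y ^ 2) + r by ring, add_pow, Finset.sum_range_succ]
    simp only [Nat.sub_self, pow_zero, Nat.choose_self, Nat.cast_one, mul_one]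
    congr 1
    · refine Finset.sum_congr rfl fun m _ => ?_
      rw [neg_pow, pow_mul]
    · rw [neg_pow, pow_mul]
  rw [mul_pow (1 - t ^ 2), h1, mul_add]
  unfold lowc
  rw [show k + j - k = j by omega, show (t ^ 2 - 1) ^ k = (-1) ^ k * (1 - t ^ 2) ^ k by rw [← mul_pow]; ring]
  simp only [mul_add, add_mul, Finset.mul_sum, Finset.sum_mul]
  rw [add_comm]
  congr 1
  · ring
  · refine Finset.sum_congr rfl fun m _ => ?_
    ring

lemma avg_point (n : ℕ) (R S : G3) (a : Euc 3) :
    (∫ θ in (0 : ℝ)..2 * Real.pi, ⟪rot (R * axisRot θ * S) e3, a⟫ ^ (2 * n)) =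
      2 * Real.pi * (pleg n ⟪rot S e3, e3⟫ * ⟪rot R e3, a⟫ ^ (2 * n) +
        ∑ k ∈ Finset.range (n + 1), ∑ m ∈ Finset.range k,
          lowc n k m ⟪rot S e3, e3⟫ (‖a‖ ^ 2) * ⟪rot R e3, a⟫ ^ (2 * (n - k + m))) := by
  simp_rw [rot_axisRot_inner]
  rw [integral_cos_sin, inner_e3, ← avg_expand, rot_inner_left, inner_e3']
  congr 1
  refine Finset.sum_congr rfl fun k _ => ?_
  congr 3
  have h1 : rot S e3 0 ^ 2 + rot S e3 1 ^ 2 + rot S e3 2 ^ 2 = 1 := by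
    have := rot_norm S e3
    rw [norm_e3, EuclideanSpace.norm_eq, Real.sqrt_eq_one, Fin.sum_univ_three] at this
    simpa using this
  have h2 : rot R⁻¹ a 0 ^ 2 + rot R⁻¹ a 1 ^ 2 + rot R⁻¹ a 2 ^ 2 = ‖a‖ ^ 2 := by
    rw [← rot_norm R⁻¹ a, EuclideanSpace.norm_sq_eq, Fin.sum_univ_three]
    simp
  rw [← h2]
  linear_combination (rot R⁻¹ a 0 ^ 2 + rot R⁻¹ a 1 ^ 2) * h1

lemma intHG (h : HG) : Integrable (h : G3 → ℝ) mu3 := by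
  have := Lp.memLp h
  exact this.integrable (by norm_num)

lemma inner_avg (n : ℕ) (S : G3) (a : Euc 3) (h : HG) (hax : AxInv h)
    (hlow : ∀ b k, k < n → ⟪gen b k, h⟫ = 0) :
    ⟪UG S (gen a n), h⟫ = pleg n ⟪rot S e3, e3⟫ * ⟪gen a n, h⟫ := by
  have h1 : ∀ θ : ℝ, ⟪UG S (gen a n), h⟫ =
      ∫ R, ⟪rot (R * axisRot θ * S) e3, a⟫ ^ (2 * n) * (h : G3 → ℝ) R ∂mu3 := by
    intro θ
    rw [← (UG (axisRot θ)).inner_map_map, hax θ, UG_mul, gen, UG_tlG, inner_tlG]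
    refine integral_congr_ae (Filter.Eventually.of_forall fun R => ?_)
    simp [trG, zon_apply, mul_assoc]
  have h2 : 2 * Real.pi * ⟪UG S (gen a n), h⟫ = ∫ θ in (0 : ℝ)..2 * Real.pi,
      ∫ R, ⟪rot (R * axisRot θ * S) e3, a⟫ ^ (2 * n) * (h : G3 → ℝ) R ∂mu3 := by
    simp_rw [← h1]
    simp
  have h3 : (∫ θ in (0 : ℝ)..2 * Real.pi,
      ∫ R, ⟪rot (R * axisRot θ * S) e3, a⟫ ^ (2 * n) * (h : G3 → ℝ) R ∂mu3) =
      ∫ R, (∫ θ in (0 : ℝ)..2 * Real.pi, ⟪rot (R * axisRot θ * S) e3, a⟫ ^ (2 * n)) * (h : G3 → ℝ) R ∂mu3 := by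
    simp_rw [intervalIntegral.integral_of_le Real.two_pi_pos.le, ← integral_mul_const]
    apply integral_integral_swap
    have hc : Continuous (fun p : ℝ × G3 => ⟪rot (p.2 * axisRot p.1 * S) e3, a⟫ ^ (2 * n)) := by
      have h4 : Continuous fun p : ℝ × G3 => rot (p.2 * axisRot p.1 * S) e3 := by
        refine (continuous_rot_left e3).comp ?_
        have := continuous_axisRot
        fun_prop
      fun_prop
    refine Integrable.bdd_mul (c := ‖a‖ ^ (2 * n)) ((intHG h).comp_snd _) hc.aestronglyMeasurable ?_
    refine Filter.Eventually.of_forall fun p => ?_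
    rw [norm_pow]
    refine pow_le_pow_left₀ (norm_nonneg _) ?_ _
    refine (norm_inner_le_norm _ _).trans ?_
    rw [rot_norm, norm_e3, one_mul]
  rw [h3] at h2
  simp_rw [avg_point] at h2
  have hpi := Real.two_pi_pos.ne'
  have h5 : ∀ k, Integrable (fun R => ⟪rot R e3, a⟫ ^ (2 * k) * (h : G3 → ℝ) R) mu3 := by
    intro k
    have hc : Continuous (fun R : G3 => ⟪rot R e3, a⟫ ^ (2 * k)) := by
      have := continuous_rot_left e3
      fun_prop
    refine Integrable.bdd_mul (c := ‖a‖ ^ (2 * k)) (intHG h) hc.aestronglyMeasurable ?_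
    refine Filter.Eventually.of_forall fun p => ?_
    rw [norm_pow]
    refine pow_le_pow_left₀ (norm_nonneg _) ?_ _
    refine (norm_inner_le_norm _ _).trans ?_
    rw [rot_norm, norm_e3, one_mul]
  have h6 : ∀ k, ⟪gen a k, h⟫ = ∫ R, ⟪rot R e3, a⟫ ^ (2 * k) * (h : G3 → ℝ) R ∂mu3 := by
    intro k
    rw [gen, inner_tlG]
    rfl
  simp_rw [mul_assoc (2 * Real.pi)] at h2
  rw [integral_const_mul] at h2
  have h7 := mul_left_cancel₀ hpi h2
  rw [h7]
  simp_rw [add_mul, Finset.sum_mul, mul_assoc]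
  rw [integral_add, integral_const_mul, ← h6, integral_finsetSum]
  · rw [add_eq_left]
    refine Finset.sum_eq_zero fun k hk => ?_
    rw [integral_finsetSum]
    · refine Finset.sum_eq_zero fun m hm => ?_
      rw [integral_const_mul, ← h6, hlow, mul_zero]
      have := Finset.mem_range.mp hk
      have := Finset.mem_range.mp hm
      omega
    · intro m _
      exact (h5 _).const_mul _
  · intro k _
    exact integrable_finsetSum _ fun m _ => (h5 _).const_mul _
  · exact (h5 _).const_mul _
  · exact integrable_finsetSum _ fun k _ => integrable_finsetSum _ fun m _ => (h5 _).const_mul _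

lemma lemmaK {n : ℕ} (S : G3) (h : HG) (hax : AxInv h) (hW : h ∈ (WG n)ᗮ) :
    ∀ F ∈ WG (n + 1), ⟪UG S F, h⟫ = pleg (n + 1) ⟪rot S e3, e3⟫ * ⟪F, h⟫ := by
  rw [mem_WG_orthogonal] at hW
  refine WG_induction ?_ ?_ ?_ ?_ ?_
  · intro a k hk
    rw [inner_avg k S a h hax fun b j hj => hW b j (by omega)]
    rcases Nat.lt_or_ge k (n + 1) with h1 | h1
    · rw [hW a k (by omega), mul_zero, mul_zero]
    · rw [show k = n + 1 by omega]
  · intro F F' h1 h2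
    rw [map_add, inner_add_left, inner_add_left, h1, h2]; ring
  · intro c F h1
    rw [map_smul, real_inner_smul_left, real_inner_smul_left, h1]; ring
  · simp
  · have := (UG S).continuous
    exact isClosed_eq (by fun_prop) (by fun_prop)



/-! ### The face-centered cubic minimal vectors -/

/-- Integer coordinates of the minimal vectors. -/
def fz : Fin 6 → Fin 3 → ℤ :=
  ![![1, 1, 0], ![1, -1, 0], ![1, 0, 1], ![1, 0, -1], ![0, 1, 1], ![0, 1, -1]]

/-- The minimal vectors (up to sign) of the face-centered cubic lattice. -/
def fcc (j : Fin 6) : Euc 3 := WithLp.toLp 2 fun i => (fz j i : ℝ) / Real.sqrt 2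

lemma fcc_apply (j : Fin 6) (i : Fin 3) : fcc j i = (fz j i : ℝ) / Real.sqrt 2 := rfl

lemma fcc_inner (j l : Fin 6) : ⟪fcc j, fcc l⟫ = ((∑ i, fz j i * fz l i : ℤ) : ℝ) / 2 := by
  rw [PiLp.inner_apply]
  simp only [fcc_apply, RCLike.inner_apply, conj_trivial]
  push_cast
  rw [Finset.sum_div]
  refine Finset.sum_congr rfl fun i _ => ?_
  rw [div_mul_div_comm, Real.mul_self_sqrt (by norm_num)]
  ring

lemma norm_fcc (j : Fin 6) : ‖fcc j‖ = 1 := by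
  have h : ‖fcc j‖ ^ 2 = 1 := by
    rw [← real_inner_self_eq_norm_sq, fcc_inner]
    have : ∑ i, fz j i * fz j i = 2 := by revert j; decide
    rw [this]; norm_num
  nlinarith [norm_nonneg (fcc j)]

lemma sum_pleg_fcc (n : ℕ) (l : Fin 6) : ∑ j, pleg n ⟪fcc j, fcc l⟫ = ceig n := by
  have h : ∀ j, pleg n ⟪fcc j, fcc l⟫ =
      if (∑ i, fz j i * fz l i) = 2 then 1 else if (∑ i, fz j i * fz l i) = 0 then pleg n 0 else pleg n (1 / 2) := by
    intro j
    rw [fcc_inner]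
    have h4 : (∑ i, fz j i * fz l i) = 2 ∨ (∑ i, fz j i * fz l i) = 0 ∨ (∑ i, fz j i * fz l i) = 1 ∨
      (∑ i, fz j i * fz l i) = -1 := by revert j l; decide
    rcases h4 with h | h | h | h <;> rw [h]
    · norm_num [pleg_one]
    · norm_num
    · norm_num
    · rw [show (((-1 : ℤ) : ℝ) / 2) = -(1 / 2) by norm_num, pleg_neg]
      norm_num
  simp_rw [h]
  unfold ceig
  fin_cases l <;> simp [Fin.sum_univ_six, Fin.sum_univ_three, fz] <;> ring

lemma exists_rotS : ∃ S : Fin 6 → G3, ∀ j, rot (S j) e3 = fcc j := by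
  have : ∀ j, ∃ S : G3, rot S e3 = fcc j := fun j => exists_rot_eq (by rw [norm_e3, norm_fcc])
  choose S hS using this
  exact ⟨S, hS⟩

lemma inner_UG_UG (S T : G3) (F h : HG) : ⟪UG S F, UG T h⟫ = ⟪UG (T⁻¹ * S) F, h⟫ := by
  rw [← (UG T).inner_map_map (UG (T⁻¹ * S) F) h, UG_mul, mul_inv_cancel_left]

lemma inner_sum_sum (S : Fin 6 → G3) (hS : ∀ j, rot (S j) e3 = fcc j) {n : ℕ} (F h : HG)
    (hF : F ∈ WG (n + 1)) (hax : AxInv h) (hW : h ∈ (WG n)ᗮ) :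
    ⟪∑ j, UG (S j) F, ∑ l, UG (S l) h⟫ = 6 * ceig (n + 1) * ⟪F, h⟫ := by
  rw [sum_inner]
  simp_rw [inner_sum, inner_UG_UG]
  rw [Finset.sum_comm]
  have h1 : ∀ l j, ⟪UG ((S l)⁻¹ * S j) F, h⟫ = pleg (n + 1) ⟪fcc j, fcc l⟫ * ⟪F, h⟫ := by
    intro l j
    rw [lemmaK _ h hax hW F hF, rot_mul, rot_inner_left, inv_inv, hS, hS]
  simp_rw [h1, ← Finset.sum_mul, sum_pleg_fcc]
  simp

lemma Q_bound (S : Fin 6 → G3) (hS : ∀ j, rot (S j) e3 = fcc j) {c : ℝ}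
    (hceig : ∀ n, 2 ≤ n → c ≤ |ceig n|) (n : ℕ) :
    ∀ F ∈ WG n, F ∈ (WG 1)ᗮ → 6 * c * ‖F‖ ^ 2 ≤ ‖∑ j, UG (S j) F‖ ^ 2 := by
  induction n with
  | zero =>
    intro F hF hF1
    have h0 : F = 0 := by
      have := (Submodule.mem_orthogonal _ _).mp hF1 F (WG_mono (by norm_num) hF)
      exact inner_self_eq_zero.mp this
    simp [h0]
  | succ n ih =>
    intro F hF hF1
    rcases Nat.eq_zero_or_pos n with rfl | hn
    · have h0 : F = 0 := by
        have := (Submodule.mem_orthogonal _ _).mp hF1 F hF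
        exact inner_self_eq_zero.mp this
      simp [h0]
    have : (WG n).HasOrthogonalProjection := by unfold WG; infer_instance
    set F' := (WG n).starProjection F with hF'
    set p := F - F' with hp
    have hF'W : F' ∈ WG n := Submodule.starProjection_apply_mem _ _
    have hpO : p ∈ (WG n)ᗮ := Submodule.sub_starProjection_mem_orthogonal _
    have hF'1 : F' ∈ (WG 1)ᗮ := by
      have : F' = F - p := by rw [hp]; abel
      rw [this]
      exact Submodule.sub_mem _ hF1 (Submodule.orthogonal_le (WG_mono hn) hpO)
    have hF'W1 : F' ∈ WG (n + 1) := WG_mono (Nat.le_succ n) hF'W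
    have hpW : p ∈ WG (n + 1) := Submodule.sub_mem _ hF hF'W1
    have hpax : AxInv p := AxInv_WG p hpW
    have hFp : F = F' + p := by rw [hp]; abel
    have h0 : ⟪F', p⟫ = 0 := (Submodule.mem_orthogonal _ _).mp hpO F' hF'W
    have hcross := inner_sum_sum S hS F' p hF'W1 hpax hpO
    rw [h0, mul_zero] at hcross
    have hpp := inner_sum_sum S hS p p hpW hpax hpO
    rw [real_inner_self_eq_norm_sq, real_inner_self_eq_norm_sq] at hpp
    have hsum : ∑ j, UG (S j) F = (∑ j, UG (S j) F') + ∑ j, UG (S j) p := by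
      rw [← Finset.sum_add_distrib]
      refine Finset.sum_congr rfl fun j _ => ?_
      rw [hFp, map_add]
    have hn1 : ‖F‖ ^ 2 = ‖F'‖ ^ 2 + ‖p‖ ^ 2 := by
      rw [hFp, @norm_add_sq_real, h0]; ring
    rw [hsum, @norm_add_sq_real, hcross, hn1]
    have h1 := ih F' hF'W hF'1
    have h2 : 6 * c * ‖p‖ ^ 2 ≤ ‖∑ j, UG (S j) p‖ ^ 2 := by
      have h3 : ‖∑ j, UG (S j) p‖ ^ 2 = 6 * |ceig (n + 1)| * ‖p‖ ^ 2 := by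
        rw [← abs_of_nonneg (sq_nonneg ‖∑ j, UG (S j) p‖), hpp, abs_mul, abs_mul]
        simp
      rw [h3]
      have := hceig (n + 1) (by omega)
      gcongr
    linarith

/-! ### Density of zonal functions -/

/-- All zonal functions. -/
def Wall : Submodule ℝ HG := (⨆ n, WG n).topologicalClosure

lemma gen_mem_Wall (a : Euc 3) (k : ℕ) : gen a k ∈ Wall :=
  Submodule.le_topologicalClosure _ (Submodule.mem_iSup_of_mem k (gen_mem_WG le_rfl))

lemma exp_add_exp_mem (a : Euc 3) :
    tlG (NormedSpace.exp (zon a) + NormedSpace.exp (-zon a)) ∈ Wall := by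
  have h1 := NormedSpace.exp_series_hasSum_exp' (𝕂 := ℝ) (zon a)
  have h2 := NormedSpace.exp_series_hasSum_exp' (𝕂 := ℝ) (-zon a)
  have h3 := (h1.add h2).mapL tlG
  refine (Submodule.isClosed_topologicalClosure _).mem_of_tendsto h3
    (Filter.Eventually.of_forall fun s => ?_)
  refine Submodule.sum_mem Wall fun m _ => ?_
  rcases Nat.even_or_odd m with h | h
  · obtain ⟨k, rfl⟩ := h
    rw [Even.neg_pow ⟨k, rfl⟩, map_add, map_smul, ← two_mul]
    exact Submodule.add_mem _ (Submodule.smul_mem _ _ (gen_mem_Wall a k))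
      (Submodule.smul_mem _ _ (gen_mem_Wall a k))
  · rw [h.neg_pow, smul_neg, add_neg_cancel, map_zero]
    exact Submodule.zero_mem _

/-- Exponentials on the sphere. -/
def expS (a : Euc 3) : C(sphere (0 : Euc 3) 1, ℝ) :=
  ⟨fun x => Real.exp ⟪(x : Euc 3), a⟫, by fun_prop⟩

/-- The projection of the group to the sphere. -/
def piG : C(G3, sphere (0 : Euc 3) 1) :=
  ⟨fun R => ⟨rot R e3, by simp [rot_norm, norm_e3]⟩,
    Continuous.subtype_mk (continuous_rot_left e3) fun R => by simp [rot_norm, norm_e3]⟩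

/-- The antipodal projection of the group to the sphere. -/
def piG' : C(G3, sphere (0 : Euc 3) 1) :=
  ⟨fun R => ⟨-rot R e3, by simp [rot_norm, norm_e3]⟩,
    Continuous.subtype_mk (continuous_rot_left e3).neg fun R => by simp [rot_norm, norm_e3]⟩

lemma expS_mem (a : Euc 3) : tlG ((expS a).comp piG + (expS a).comp piG') ∈ Wall := by
  have hev : ∀ (F : C(G3, ℝ)) (R : G3), NormedSpace.exp F R = Real.exp (F R) := by
    intro F R
    have := NormedSpace.map_exp (ContinuousMap.evalAlgHom ℝ ℝ R) (continuous_eval_const (F := C(G3, ℝ)) R) F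
    rw [Real.exp_eq_exp_ℝ]
    exact this
  convert exp_add_exp_mem a using 2
  ext R
  simp [hev, expS, piG, piG', zon_apply]

/-- The submonoid of exponentials. -/
def expM : Submonoid C(sphere (0 : Euc 3) 1, ℝ) where
  carrier := Set.range expS
  one_mem' := ⟨0, by ext x; simp [expS]⟩
  mul_mem' := by
    rintro _ _ ⟨a, rfl⟩ ⟨b, rfl⟩
    refine ⟨a + b, ?_⟩
    ext x
    simp [expS, inner_add_right, Real.exp_add]

lemma even_mem_Wall (f : C(sphere (0 : Euc 3) 1, ℝ)) : tlG (f.comp piG + f.comp piG') ∈ Wall := by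
  have hcl : IsClosed {f : C(sphere (0 : Euc 3) 1, ℝ) | tlG (f.comp piG + f.comp piG') ∈ Wall} := by
    refine (Submodule.isClosed_topologicalClosure (⨆ n, WG n)).preimage ?_
    have h1 := ContinuousMap.continuous_precomp (Z := ℝ) piG
    have h2 := ContinuousMap.continuous_precomp (Z := ℝ) piG'
    exact tlG.continuous.comp (h1.add h2)
  have hspan : ∀ f ∈ Submodule.span ℝ (expM : Set C(sphere (0 : Euc 3) 1, ℝ)),
      tlG (f.comp piG + f.comp piG') ∈ Wall := by
    intro f hf
    induction hf using Submodule.span_induction with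
    | mem x h => obtain ⟨a, rfl⟩ := h; exact expS_mem a
    | zero => simp
    | add x y _ _ hx hy =>
      rw [ContinuousMap.add_comp, ContinuousMap.add_comp, add_add_add_comm, map_add]
      exact Submodule.add_mem _ hx hy
    | smul c x _ hx =>
      rw [ContinuousMap.smul_comp, ContinuousMap.smul_comp, ← smul_add, map_smul]
      exact Submodule.smul_mem _ _ hx
  have hsep : (Algebra.adjoin ℝ (expM : Set C(sphere (0 : Euc 3) 1, ℝ))).SeparatesPoints := by
    intro x y hxy
    have hne : (x : Euc 3) - y ≠ 0 := fun h => hxy (Subtype.ext (sub_eq_zero.mp h))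
    refine ⟨expS ((x : Euc 3) - y), ⟨expS ((x : Euc 3) - y), Algebra.subset_adjoin ⟨_, rfl⟩, rfl⟩, ?_⟩
    intro h
    have h1 : ⟪(x : Euc 3), (x : Euc 3) - y⟫ = ⟪(y : Euc 3), (x : Euc 3) - y⟫ := Real.exp_injective h
    have h2 : ⟪(x : Euc 3) - y, (x : Euc 3) - y⟫ = 0 := by rw [inner_sub_left, h1, sub_self]
    exact hne (inner_self_eq_zero.mp h2)
  have htop := ContinuousMap.subalgebra_topologicalClosure_eq_top_of_separatesPoints _ hsep
  have hmem : f ∈ (Algebra.adjoin ℝ (expM : Set C(sphere (0 : Euc 3) 1, ℝ))).topologicalClosure := by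
    rw [htop]; trivial
  refine closure_minimal
    (s := ((Algebra.adjoin ℝ (expM : Set C(sphere (0 : Euc 3) 1, ℝ)) :
      Subalgebra ℝ C(sphere (0 : Euc 3) 1, ℝ)) : Set C(sphere (0 : Euc 3) 1, ℝ)))
    (fun g hg => hspan g ?_) hcl hmem
  have h3 := Algebra.adjoin_eq_span ℝ (expM : Set C(sphere (0 : Euc 3) 1, ℝ))
  rw [Submonoid.closure_eq] at h3
  rw [← h3]
  exact hg

/-- The spectral gap of the face-centered cubic configuration. -/
theorem lemmaS : ∃ c > (0 : ℝ), ∀ f : Euc 3 → ℝ, Continuous f → (∀ x, f (-x) = f x) →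
    (∀ a, ∫ R, f (rot R e3) * ⟪rot R e3, a⟫ ^ 2 ∂mu3 = 0) →
    c * ∫ R, f (rot R e3) ^ 2 ∂mu3 ≤ ∫ R, (∑ j, f (rot R (fcc j))) ^ 2 ∂mu3 := by
  obtain ⟨c, hc, hceig⟩ := exists_c0
  obtain ⟨S, hS⟩ := exists_rotS
  refine ⟨6 * c, by positivity, fun f hf heven horth => ?_⟩
  have hmean : ∫ R, f (rot R e3) ∂mu3 = 0 := by
    have h1 : ∀ R : G3, f (rot R e3) = ∑ i : Fin 3, f (rot R e3) * ⟪rot R e3, EuclideanSpace.single i (1 : ℝ)⟫ ^ 2 := by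
      intro R
      have h2 : ∑ i : Fin 3, ⟪rot R e3, EuclideanSpace.single i (1 : ℝ)⟫ ^ 2 = 1 := by
        have := rot_norm R e3
        rw [norm_e3, EuclideanSpace.norm_eq, Real.sqrt_eq_one] at this
        simpa [EuclideanSpace.inner_single_right] using this
      rw [← Finset.mul_sum, h2, mul_one]
    rw [integral_congr_ae (Filter.Eventually.of_forall h1), integral_finsetSum]
    · exact Finset.sum_eq_zero fun i _ => horth _
    · intro i _
      apply intG
      have := continuous_rot_left e3
      fun_prop
  let F0 : C(G3, ℝ) := ⟨fun R => f (rot R e3), hf.comp (continuous_rot_left e3)⟩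
  set F := tlG F0 with hF
  have hFW : F ∈ Wall := by
    have h1 := even_mem_Wall ⟨fun x => f x, by fun_prop⟩
    have h2 : F = (1 / 2 : ℝ) • tlG ((⟨fun x => f x, by fun_prop⟩ : C(sphere (0 : Euc 3) 1, ℝ)).comp piG +
        (⟨fun x => f x, by fun_prop⟩ : C(sphere (0 : Euc 3) 1, ℝ)).comp piG') := by
      rw [hF, ← map_smul]
      congr 1
      ext R
      simp [F0, piG, piG', heven]
      ring
    rw [h2]
    exact Submodule.smul_mem _ _ h1
  have hF1 : F ∈ (WG 1)ᗮ := by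
    rw [mem_WG_orthogonal]
    intro a k hk
    rw [real_inner_comm, hF, gen, inner_tlG_tlG]
    interval_cases k
    · simpa [F0] using hmean
    · simpa [F0, zon_apply] using horth a
  have : ∀ n, (WG n).HasOrthogonalProjection := by intro n; unfold WG; infer_instance
  have : (⨆ n, WG n).topologicalClosure.HasOrthogonalProjection := inferInstance
  have hlim := Submodule.starProjection_tendsto_closure_iSup WG WG_mono F
  rw [Submodule.starProjection_eq_self_iff.mpr (show F ∈ (⨆ n, WG n).topologicalClosure from hFW)] at hlim
  have hbd : ∀ n, 1 ≤ n → 6 * c * ‖(WG n).starProjection F‖ ^ 2 ≤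
      ‖∑ j, UG (S j) ((WG n).starProjection F)‖ ^ 2 := by
    intro n hn
    refine Q_bound S hS hceig n _ (Submodule.starProjection_apply_mem _ _) ?_
    have h1 : F - (WG n).starProjection F ∈ (WG n)ᗮ := Submodule.sub_starProjection_mem_orthogonal _
    have h2 : (WG n).starProjection F = F - (F - (WG n).starProjection F) := by abel
    rw [h2]
    exact Submodule.sub_mem _ hF1 (Submodule.orthogonal_le (WG_mono hn) h1)
  have hUc : ∀ j, Continuous (UG (S j)) := fun j => (UG (S j)).continuous
  have hfinal : 6 * c * ‖F‖ ^ 2 ≤ ‖∑ j, UG (S j) F‖ ^ 2 := by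
    have hc1 : Continuous fun F : HG => 6 * c * ‖F‖ ^ 2 := by fun_prop
    have hc2 : Continuous fun F : HG => ‖∑ j, UG (S j) F‖ ^ 2 := by fun_prop
    exact le_of_tendsto_of_tendsto ((hc1.tendsto F).comp hlim) ((hc2.tendsto F).comp hlim)
      (Filter.eventually_atTop.mpr ⟨1, hbd⟩)
  have hsum : ∑ j, UG (S j) F = tlG (∑ j, trG (S j) F0) := by
    rw [map_sum]
    exact Finset.sum_congr rfl fun j _ => UG_tlG _ _
  rw [hsum, hF, norm_tlG_sq, norm_tlG_sq] at hfinal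
  have hev : ∀ R, (∑ j, trG (S j) F0) R = ∑ j, f (rot R (fcc j)) := by
    intro R
    rw [ContinuousMap.sum_apply]
    refine Finset.sum_congr rfl fun j _ => ?_
    simp [trG, F0, rot_mul, hS]
  simp_rw [hev] at hfinal
  exact hfinal



/-! ### Polar coordinates through the orthogonal group -/

/-- The rotation as a linear isometric equivalence. -/
def rotE (R : G3) : Euc 3 ≃ₗᵢ[ℝ] Euc 3 where
  toLinearEquiv := LinearEquiv.ofLinearMap (rot R) (rot R⁻¹)
    (by ext x; simp [rot_rot_inv]) (by ext x; simp [rot_inv_rot])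
  norm_map' x := rot_norm R x

lemma rotE_apply (R : G3) (x : Euc 3) : rotE R x = rot R x := rfl

lemma rot_measurePreserving (R : G3) : MeasurePreserving (fun x : Euc 3 => rot R x) volume volume :=
  (rotE R).measurePreserving

lemma lintegral_base (f : Euc 3 → ENNReal) {x y : Euc 3} (h : ‖x‖ = ‖y‖) :
    ∫⁻ R, f (rot R x) ∂mu3 = ∫⁻ R, f (rot R y) ∂mu3 := by
  obtain ⟨S, rfl⟩ := exists_rot_eq h
  simp_rw [← rot_mul]
  exact (lintegral_mul_right_eq_self (fun R => f (rot R x)) S).symm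

lemma polar {F : Euc 3 → ENNReal} (hF : Measurable F) :
    ∫⁻ x, F x = ∫⁻ R, (∫⁻ y : Euc 3, F (‖y‖ • rot R e3)) ∂mu3 := by
  have h1 : ∀ R : G3, ∫⁻ x, F x = ∫⁻ y : Euc 3, F (rot R y) := fun R =>
    ((rot_measurePreserving R).lintegral_comp hF).symm
  have h2 : ∫⁻ x, F x = ∫⁻ R, (∫⁻ y : Euc 3, F (rot R y)) ∂mu3 := by
    simp_rw [← h1]
    simp
  have m1 : AEMeasurable (Function.uncurry fun (R : G3) (y : Euc 3) => F (‖y‖ • rot R e3)) (mu3.prod volume) := by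
    refine (hF.comp ?_).aemeasurable
    have : Continuous fun p : G3 × Euc 3 => ‖p.2‖ • rot p.1 e3 := by
      have := (continuous_rot_left e3).comp (continuous_fst (X := G3) (Y := Euc 3))
      fun_prop
    exact this.measurable
  have m2 : AEMeasurable (Function.uncurry fun (R : G3) (y : Euc 3) => F (rot R y)) (mu3.prod volume) :=
    (hF.comp continuous_rot.measurable).aemeasurable
  rw [h2, lintegral_lintegral_swap m2, lintegral_lintegral_swap m1]
  refine lintegral_congr fun y => ?_
  simp_rw [← map_smul]
  exact lintegral_base F (by simp [norm_smul, norm_e3])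

lemma rot_e3_ne (R : G3) : rot R e3 ≠ 0 := by
  intro h
  have := rot_norm R e3
  rw [h, norm_e3] at this
  simp at this

lemma polar_cone {φ : Euc 3 → ENNReal} (hφ : Measurable φ) (hom : ∀ r : ℝ, 0 < r → ∀ x, φ (r • x) = φ x)
    {ρ : Euc 3 → ℝ} (hρ : Continuous ρ) (hρh : ∀ r : ℝ, 0 < r → ∀ x, ρ (r • x) = r * ρ x)
    (hpos : ∀ x, x ≠ 0 → 0 < ρ x) :
    ∫⁻ x in {x | ρ x ≤ 1}, φ x =
      volume (ball (0 : Euc 3) 1) * ∫⁻ R, φ (rot R e3) * ENNReal.ofReal (1 / ρ (rot R e3) ^ 3) ∂mu3 := by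
  have hms : MeasurableSet {x | ρ x ≤ 1} := (isClosed_le hρ continuous_const).measurableSet
  rw [← lintegral_indicator hms, polar (hφ.indicator hms), ← lintegral_const_mul']
  · refine lintegral_congr fun R => ?_
    have h0 := hpos _ (rot_e3_ne R)
    have h1 : ∫⁻ y : Euc 3, ({x | ρ x ≤ 1}.indicator φ) (‖y‖ • rot R e3) =
        ∫⁻ y : Euc 3, (closedBall (0 : Euc 3) (1 / ρ (rot R e3))).indicator (fun _ => φ (rot R e3)) y := by
      refine lintegral_congr_ae ?_
      have : ∀ᵐ y : Euc 3, y ≠ 0 := by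
        simp [ae_iff]
      filter_upwards [this] with y hy
      have hy' : 0 < ‖y‖ := norm_pos_iff.mpr hy
      simp only [Set.indicator, Set.mem_ofPred_eq, hρh _ hy', hom _ hy', mem_closedBall,
        dist_zero_right, le_div_iff₀ h0]
    rw [h1, lintegral_indicator isClosed_closedBall.measurableSet, setLIntegral_const,
      Measure.addHaar_closedBall _ _ (by positivity)]
    simp only [finrank_euclideanSpace, Fintype.card_fin, one_div, inv_pow]
    ring
  · exact measure_ball_lt_top.ne

lemma vol_ball_ne_zero : volume (ball (0 : Euc 3) 1) ≠ 0 :=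
  (measure_ball_pos volume (0 : Euc 3) one_pos).ne'

lemma vol_ball_ne_top : volume (ball (0 : Euc 3) 1) ≠ ⊤ := measure_ball_lt_top.ne

lemma vol_unitBall : volume (unitBall 3) = volume (ball (0 : Euc 3) 1) := by
  unfold unitBall
  rw [Measure.addHaar_closedBall_eq_addHaar_ball]

lemma lintegral_ofReal_mu {F : G3 → ℝ} (hF : Continuous F) (h0 : ∀ R, 0 ≤ F R) :
    ∫⁻ R, ENNReal.ofReal (F R) ∂mu3 = ENNReal.ofReal (∫ R, F R ∂mu3) :=
  (ofReal_integral_eq_lintegral_ofReal (intG hF) (Filter.Eventually.of_forall h0)).symm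

lemma continuous_comp_e3 {f : Euc 3 → ℝ} (hf : Continuous f) : Continuous fun R : G3 => f (rot R e3) :=
  hf.comp (continuous_rot_left e3)

/-- Volume of a star body. -/
lemma vol_star {ρ : Euc 3 → ℝ} (hρ : Continuous ρ) (hρh : ∀ r : ℝ, 0 < r → ∀ x, ρ (r • x) = r * ρ x)
    (hpos : ∀ x, x ≠ 0 → 0 < ρ x) :
    (volume {x | ρ x ≤ 1}).toReal =
      (volume (unitBall 3)).toReal * ∫ R, 1 / ρ (rot R e3) ^ 3 ∂mu3 := by
  have h := polar_cone (φ := fun _ => 1) measurable_const (fun _ _ _ => rfl) hρ hρh hpos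
  simp only [one_mul, setLIntegral_const] at h
  rw [lintegral_ofReal_mu] at h
  · rw [h, ENNReal.toReal_mul, vol_unitBall, ENNReal.toReal_ofReal]
    exact integral_nonneg fun R => by have := hpos _ (rot_e3_ne R); positivity
  · have := continuous_comp_e3 hρ
    exact continuous_const.div (this.pow 3) fun R => (pow_pos (hpos _ (rot_e3_ne R)) 3).ne'
  · intro R
    have := hpos _ (rot_e3_ne R); positivity

lemma linear_ne_zero {T : Euc 3 →ₗ[ℝ] Euc 3} (hT : LinearMap.det T ≠ 0) {x : Euc 3} (hx : x ≠ 0) :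
    T x ≠ 0 := by
  intro h
  have h2 : LinearMap.equivOfDetNeZero T hT x = 0 := h
  exact hx ((LinearEquiv.map_eq_zero_iff _).mp h2)

lemma chvar_nonneg {ψ : Euc 3 → ℝ} (hm : Measurable ψ) (hc : ContinuousOn ψ {0}ᶜ) (h0 : ∀ x, 0 ≤ ψ x)
    (hom : ∀ r : ℝ, 0 < r → ∀ x, ψ (r • x) = ψ x) (T : Euc 3 →ₗ[ℝ] Euc 3) (hT : LinearMap.det T ≠ 0) :
    ∫ R, ψ (rot R e3) ∂mu3 = |LinearMap.det T| * ∫ R, ψ (T (rot R e3)) / ‖T (rot R e3)‖ ^ 3 ∂mu3 := by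
  have hTc : Continuous T := T.continuous_of_finiteDimensional
  have hTinj : ∀ x, x ≠ 0 → T x ≠ 0 := fun x hx => linear_ne_zero hT hx
  have hm' : Measurable fun x => ENNReal.ofReal (ψ x) := hm.ennreal_ofReal
  have e1 := polar_cone (φ := fun x => ENNReal.ofReal (ψ x)) hm' (fun r hr x => by rw [hom r hr])
    (ρ := fun x => ‖x‖) continuous_norm (fun r hr x => by rw [norm_smul, Real.norm_of_nonneg hr.le])
    (fun x hx => norm_pos_iff.mpr hx)
  have e2 := polar_cone (φ := fun x => ENNReal.ofReal (ψ (T x))) (hm'.comp hTc.measurable)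
    (fun r hr x => by rw [map_smul, hom r hr])
    (ρ := fun x => ‖T x‖) (hTc.norm) (fun r hr x => by rw [map_smul, norm_smul, Real.norm_of_nonneg hr.le])
    (fun x hx => norm_pos_iff.mpr (hTinj x hx))
  have hms : MeasurableSet {x : Euc 3 | ‖x‖ ≤ 1} := (isClosed_le continuous_norm continuous_const).measurableSet
  have hms' : MeasurableSet {x : Euc 3 | ‖T x‖ ≤ 1} := (isClosed_le hTc.norm continuous_const).measurableSet
  have e3' : ∫⁻ x in {x : Euc 3 | ‖x‖ ≤ 1}, ENNReal.ofReal (ψ x) = ENNReal.ofReal |LinearMap.det T| *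
      ∫⁻ x in {x : Euc 3 | ‖T x‖ ≤ 1}, ENNReal.ofReal (ψ (T x)) := by
    have hmap := Measure.map_linearMap_addHaar_eq_smul_addHaar (volume : Measure (Euc 3)) hT
    have h1 : ∫⁻ x in {x : Euc 3 | ‖T x‖ ≤ 1}, ENNReal.ofReal (ψ (T x)) =
        ENNReal.ofReal |(LinearMap.det T)⁻¹| * ∫⁻ x in {x : Euc 3 | ‖x‖ ≤ 1}, ENNReal.ofReal (ψ x) := by
      rw [← lintegral_indicator hms', ← lintegral_indicator hms, ← smul_eq_mul, ← lintegral_smul_measure, ← hmap,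
        lintegral_map (hm'.indicator hms) hTc.measurable]
      rfl
    rw [h1, ← mul_assoc, ← ENNReal.ofReal_mul (abs_nonneg _), ← abs_mul, mul_inv_cancel₀ hT]
    simp
  rw [e1, e2] at e3'
  have hc1 : Continuous fun R : G3 => ψ (rot R e3) :=
    hc.comp_continuous (continuous_rot_left e3) fun R => rot_e3_ne R
  have hc2 : Continuous fun R : G3 => ψ (T (rot R e3)) :=
    hc.comp_continuous (hTc.comp (continuous_rot_left e3)) fun R => hTinj _ (rot_e3_ne R)
  have hc3 : Continuous fun R : G3 => ψ (T (rot R e3)) / ‖T (rot R e3)‖ ^ 3 := by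
    refine hc2.div ((hTc.comp (continuous_rot_left e3)).norm.pow 3) fun R => ?_
    exact (pow_pos (norm_pos_iff.mpr (hTinj _ (rot_e3_ne R))) 3).ne'
  simp_rw [← ENNReal.ofReal_mul (h0 _), mul_one_div, rot_norm, norm_e3] at e3'
  simp only [one_pow, div_one] at e3'
  rw [lintegral_ofReal_mu hc1 (fun R => h0 _), lintegral_ofReal_mu hc3 (fun R => div_nonneg (h0 _) (by positivity)),
    mul_left_comm, ENNReal.mul_right_inj vol_ball_ne_zero vol_ball_ne_top, ← ENNReal.ofReal_mul (abs_nonneg _)] at e3'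
  refine (ENNReal.ofReal_eq_ofReal_iff ?_ ?_).mp e3'
  · exact integral_nonneg fun R => h0 _
  · exact mul_nonneg (abs_nonneg _) (integral_nonneg fun R => div_nonneg (h0 _) (by positivity))

/-- Change of variables for spherical means. -/
lemma chvar {ψ : Euc 3 → ℝ} (hm : Measurable ψ) (hc : ContinuousOn ψ {0}ᶜ)
    (hom : ∀ r : ℝ, 0 < r → ∀ x, ψ (r • x) = ψ x) (T : Euc 3 →ₗ[ℝ] Euc 3) (hT : LinearMap.det T ≠ 0) :
    ∫ R, ψ (rot R e3) ∂mu3 = |LinearMap.det T| * ∫ R, ψ (T (rot R e3)) / ‖T (rot R e3)‖ ^ 3 ∂mu3 := by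
  have hTc : Continuous T := T.continuous_of_finiteDimensional
  have h1 := chvar_nonneg (ψ := fun x => max (ψ x) 0) (hm.max measurable_const)
    (hc.sup continuousOn_const) (fun x => le_max_right _ _) (fun r hr x => by rw [hom r hr]) T hT
  have h2 := chvar_nonneg (ψ := fun x => max (-ψ x) 0) (hm.neg.max measurable_const)
    (hc.neg.sup continuousOn_const) (fun x => le_max_right _ _) (fun r hr x => by rw [hom r hr]) T hT
  have hd : ∀ x, ψ x = max (ψ x) 0 - max (-ψ x) 0 := by
    intro x
    rcases le_total 0 (ψ x) with h | h
    · rw [max_eq_left h, max_eq_right (by linarith)]; ring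
    · rw [max_eq_right h, max_eq_left (by linarith)]; ring
  have hc1 : Continuous fun R : G3 => ψ (rot R e3) :=
    hc.comp_continuous (continuous_rot_left e3) fun R => rot_e3_ne R
  have hc2 : Continuous fun R : G3 => ψ (T (rot R e3)) :=
    hc.comp_continuous (hTc.comp (continuous_rot_left e3)) fun R => linear_ne_zero hT (rot_e3_ne R)
  have hcn : Continuous fun R : G3 => ‖T (rot R e3)‖ ^ 3 :=
    (hTc.comp (continuous_rot_left e3)).norm.pow 3
  have hn : ∀ R : G3, ‖T (rot R e3)‖ ^ 3 ≠ 0 := fun R =>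
    (pow_pos (norm_pos_iff.mpr (linear_ne_zero hT (rot_e3_ne R))) 3).ne'
  have e1 : ∫ R, ψ (rot R e3) ∂mu3 =
      ∫ R, max (ψ (rot R e3)) 0 ∂mu3 - ∫ R, max (-ψ (rot R e3)) 0 ∂mu3 := by
    have i1 : Integrable (fun R => max (ψ (rot R e3)) 0) mu3 := intG (hc1.max continuous_const)
    have i2 : Integrable (fun R => max (-ψ (rot R e3)) 0) mu3 := intG (hc1.neg.max continuous_const)
    rw [← integral_sub i1 i2]
    exact integral_congr_ae (Filter.Eventually.of_forall fun R => hd _)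
  have e2 : ∫ R, ψ (T (rot R e3)) / ‖T (rot R e3)‖ ^ 3 ∂mu3 =
      ∫ R, max (ψ (T (rot R e3))) 0 / ‖T (rot R e3)‖ ^ 3 ∂mu3 -
      ∫ R, max (-ψ (T (rot R e3))) 0 / ‖T (rot R e3)‖ ^ 3 ∂mu3 := by
    have i1 : Integrable (fun R => max (ψ (T (rot R e3))) 0 / ‖T (rot R e3)‖ ^ 3) mu3 :=
      intG ((hc2.max continuous_const).div hcn hn)
    have i2 : Integrable (fun R => max (-ψ (T (rot R e3))) 0 / ‖T (rot R e3)‖ ^ 3) mu3 :=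
      intG ((hc2.neg.max continuous_const).div hcn hn)
    rw [← integral_sub i1 i2]
    refine integral_congr_ae (Filter.Eventually.of_forall fun R => ?_)
    simp only
    rw [← sub_div, ← hd]
  rw [e1, e2, mul_sub, ← h1, ← h2]

/-! ### Caps -/

lemma vol_box (s : ℝ) (hs : 0 ≤ s) :
    volume {x : Euc 3 | x 0 ∈ Set.Icc (-(s / 8)) (s / 8) ∧ x 1 ∈ Set.Icc (-(s / 8)) (s / 8) ∧
      x 2 ∈ Set.Icc (1 / 2 : ℝ) (3 / 4)} = ENNReal.ofReal (s ^ 2 / 64) := by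
  have h := (PiLp.volume_preserving_ofLp (Fin 3)).measure_preimage
    (s := Set.Icc (![-(s / 8), -(s / 8), 1 / 2] : Fin 3 → ℝ) ![s / 8, s / 8, 3 / 4])
    measurableSet_Icc.nullMeasurableSet
  rw [Real.volume_Icc_pi] at h
  have hset : {x : Euc 3 | x 0 ∈ Set.Icc (-(s / 8)) (s / 8) ∧ x 1 ∈ Set.Icc (-(s / 8)) (s / 8) ∧
      x 2 ∈ Set.Icc (1 / 2 : ℝ) (3 / 4)} = (WithLp.ofLp ⁻¹'
        Set.Icc (![-(s / 8), -(s / 8), 1 / 2] : Fin 3 → ℝ) ![s / 8, s / 8, 3 / 4] : Set (Euc 3)) := by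
    ext x
    simp only [Set.mem_ofPred_eq, Set.mem_preimage, Set.mem_Icc, Pi.le_def, Fin.forall_fin_succ]
    simp
    tauto
  rw [hset, h]
  simp only [Fin.prod_univ_three, Matrix.cons_val_zero, Matrix.cons_val_one, Matrix.cons_val]
  rw [← ENNReal.ofReal_mul (by linarith), ← ENNReal.ofReal_mul (by nlinarith)]
  congr 1
  ring

lemma box_in_cone {s : ℝ} (hs : 0 ≤ s) (hs1 : s ≤ 1) {x : Euc 3}
    (hx : x 0 ∈ Set.Icc (-(s / 8)) (s / 8) ∧ x 1 ∈ Set.Icc (-(s / 8)) (s / 8) ∧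
      x 2 ∈ Set.Icc (1 / 2 : ℝ) (3 / 4)) : ‖x‖ ≤ 1 ∧ ‖x - ‖x‖ • e3‖ ≤ s * ‖x‖ := by
  obtain ⟨⟨h1, h2⟩, ⟨h3, h4⟩, ⟨h5, h6⟩⟩ := hx
  have hn : ‖x‖ ^ 2 = x 0 ^ 2 + x 1 ^ 2 + x 2 ^ 2 := by
    rw [EuclideanSpace.norm_sq_eq, Fin.sum_univ_three]; simp
  have h01 : x 0 ^ 2 ≤ s ^ 2 / 64 := by nlinarith
  have h11 : x 1 ^ 2 ≤ s ^ 2 / 64 := by nlinarith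
  have hp := norm_nonneg x
  have hge : x 2 ≤ ‖x‖ := by
    by_contra hlt; push Not at hlt; nlinarith
  refine ⟨by nlinarith, ?_⟩
  have hd : ‖x - ‖x‖ • e3‖ ^ 2 = 2 * ‖x‖ * (‖x‖ - x 2) := by
    rw [@norm_sub_sq_real, real_inner_smul_right, norm_smul, norm_e3]
    have : ⟪x, e3⟫ = x 2 := by simp [e3, EuclideanSpace.inner_single_right]
    rw [this]; simp; ring
  have hprod : (‖x‖ - x 2) * (‖x‖ + x 2) = x 0 ^ 2 + x 1 ^ 2 := by linarith
  refine abs_le_of_sq_le_sq' ?_ (by positivity) |>.2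
  rw [hd]
  have : 2 * ‖x‖ * (‖x‖ - x 2) ≤ 2 * (x 0 ^ 2 + x 1 ^ 2) := by
    rw [← hprod]; nlinarith
  nlinarith [mul_nonneg (sq_nonneg s) (by nlinarith : 0 ≤ ‖x‖ ^ 2 - 1 / 4)]

lemma cap_e3 : ∃ c > (0 : ℝ), ∀ s : ℝ, 0 ≤ s → s ≤ 1 →
    ENNReal.ofReal (c * s ^ 2) ≤ mu3 {R | ‖rot R e3 - e3‖ ≤ s} := by
  have hV : 0 < (volume (ball (0 : Euc 3) 1)).toReal := ENNReal.toReal_pos vol_ball_ne_zero vol_ball_ne_top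
  refine ⟨1 / (64 * (volume (ball (0 : Euc 3) 1)).toReal), by positivity, fun s hs hs1 => ?_⟩
  set C : Set (Euc 3) := {x | ‖x - ‖x‖ • e3‖ ≤ s * ‖x‖} with hC
  have hCm : MeasurableSet C := (isClosed_le (by fun_prop) (by fun_prop)).measurableSet
  have h1 := polar_cone (φ := C.indicator 1) (measurable_one.indicator hCm) (fun r hr x => by
      have : r • x ∈ C ↔ x ∈ C := by
        simp only [hC, Set.mem_ofPred_eq, norm_smul, Real.norm_of_nonneg hr.le]
        rw [mul_smul, ← smul_sub, norm_smul, Real.norm_of_nonneg hr.le, mul_left_comm]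
        exact mul_le_mul_iff_right₀ hr
      simp [Set.indicator, this])
    (ρ := fun x => ‖x‖) continuous_norm (fun r hr x => by rw [norm_smul, Real.norm_of_nonneg hr.le])
    (fun x hx => norm_pos_iff.mpr hx)
  simp only [rot_norm, norm_e3, one_pow, div_one, ENNReal.ofReal_one, mul_one] at h1
  have h2 : ∀ R : G3, C.indicator (1 : Euc 3 → ENNReal) (rot R e3) = {R : G3 | ‖rot R e3 - e3‖ ≤ s}.indicator 1 R := by
    intro R
    simp [Set.indicator, hC, rot_norm, norm_e3]
  simp_rw [h2] at h1
  have hcapm : MeasurableSet {R : G3 | ‖rot R e3 - e3‖ ≤ s} := by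
    have := continuous_rot_left e3
    exact (isClosed_le (by fun_prop) (by fun_prop)).measurableSet
  rw [lintegral_indicator_one hcapm, lintegral_indicator_one hCm] at h1
  have h3 : ENNReal.ofReal (s ^ 2 / 64) ≤ volume (ball (0 : Euc 3) 1) * mu3 {R : G3 | ‖rot R e3 - e3‖ ≤ s} := by
    rw [← h1, ← vol_box s hs, Measure.restrict_apply hCm]
    refine measure_mono fun x hx => ?_
    have := box_in_cone hs hs1 hx
    exact ⟨this.2, this.1⟩
  have h4 : ENNReal.ofReal (1 / (64 * (volume (ball (0 : Euc 3) 1)).toReal) * s ^ 2) =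
      (volume (ball (0 : Euc 3) 1))⁻¹ * ENNReal.ofReal (s ^ 2 / 64) := by
    rw [← ENNReal.ofReal_toReal vol_ball_ne_top, ← ENNReal.ofReal_inv_of_pos hV,
      ENNReal.toReal_ofReal hV.le, ← ENNReal.ofReal_mul (by positivity)]
    congr 1
    field_simp
  rw [h4]
  calc _ ≤ (volume (ball (0 : Euc 3) 1))⁻¹ * (volume (ball (0 : Euc 3) 1) * mu3 {R : G3 | ‖rot R e3 - e3‖ ≤ s}) := by
        gcongr
    _ = _ := by rw [← mul_assoc, ENNReal.inv_mul_cancel vol_ball_ne_zero vol_ball_ne_top, one_mul]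

/-- Lower bound on the measure of caps. -/
lemma cap_bound : ∃ c > (0 : ℝ), ∀ s : ℝ, 0 ≤ s → s ≤ 1 → ∀ p : Euc 3, ‖p‖ = 1 →
    c * s ^ 2 ≤ mu3.real {R | ‖rot R e3 - p‖ ≤ s} := by
  obtain ⟨c, hc, h⟩ := cap_e3
  refine ⟨c, hc, fun s hs hs1 p hp => ?_⟩
  obtain ⟨Q, hQ⟩ := exists_rot_eq (x := e3) (y := p) (by rw [norm_e3, hp])
  have h1 : mu3 {R | ‖rot R e3 - p‖ ≤ s} = mu3 {R | ‖rot R e3 - e3‖ ≤ s} := by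
    rw [← measure_preimage_mul mu3 Q {R | ‖rot R e3 - p‖ ≤ s}]
    congr 1
    ext R
    simp only [Set.mem_preimage, Set.mem_ofPred_eq, rot_mul, ← hQ, ← map_sub, rot_norm]
  unfold Measure.real
  rw [h1]
  rw [← ENNReal.ofReal_le_iff_le_toReal (measure_ne_top _ _)]
  exact h s hs hs1

/-! ### Moments -/

lemma left_inv (f : Euc 3 → ℝ) (Q : G3) : ∫ R, f (rot Q (rot R e3)) ∂mu3 = ∫ R, f (rot R e3) ∂mu3 := by
  simp_rw [← rot_mul]
  exact integral_mul_left_eq_self (fun R => f (rot R e3)) Q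

lemma moment_scale (k : ℕ) (a : Euc 3) :
    ∫ R, ⟪rot R e3, a⟫ ^ k ∂mu3 = ‖a‖ ^ k * ∫ R, ⟪rot R e3, e3⟫ ^ k ∂mu3 := by
  obtain ⟨Q, hQ⟩ := rot_smul_e3 a
  rw [← integral_const_mul]
  rw [← left_inv (fun x => ⟪x, a⟫ ^ k) Q]
  refine integral_congr_ae (Filter.Eventually.of_forall fun R => ?_)
  simp only
  nth_rewrite 1 [hQ]
  rw [real_inner_smul_right, rot_inner, mul_pow]

lemma sum_single_sq (x : Euc 3) : ∑ i : Fin 3, ⟪x, EuclideanSpace.single i (1 : ℝ)⟫ ^ 2 = ‖x‖ ^ 2 := by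
  rw [EuclideanSpace.norm_sq_eq]
  simp [EuclideanSpace.inner_single_right]

lemma cont_inner_e3 (a : Euc 3) : Continuous fun R : G3 => ⟪rot R e3, a⟫ := by
  have := continuous_rot_left e3
  fun_prop

lemma moment2 (a : Euc 3) : ∫ R, ⟪rot R e3, a⟫ ^ 2 ∂mu3 = ‖a‖ ^ 2 / 3 := by
  have h1 : ∫ R, (∑ i : Fin 3, ⟪rot R e3, EuclideanSpace.single i (1 : ℝ)⟫ ^ 2) ∂mu3 = 1 := by
    simp_rw [sum_single_sq, rot_norm, norm_e3]
    simp
  have hi : ∀ i : Fin 3, Integrable (fun R => ⟪rot R e3, EuclideanSpace.single i (1 : ℝ)⟫ ^ 2) mu3 :=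
    fun i => intG ((cont_inner_e3 _).pow 2)
  rw [integral_finsetSum _ fun i _ => hi i] at h1
  simp_rw [moment_scale 2 (EuclideanSpace.single _ (1 : ℝ))] at h1
  simp at h1
  rw [moment_scale]
  linear_combination (‖a‖ ^ 2 / 3) * h1

lemma moment22_aux (a b : Euc 3) : ∫ R, ⟪rot R e3, a⟫ ^ 2 * ⟪rot R e3, b⟫ ^ 2 ∂mu3 =
    (‖a‖ ^ 2 * ‖b‖ ^ 2 + 2 * ⟪a, b⟫ ^ 2) / 3 * ∫ R, ⟪rot R e3, e3⟫ ^ 4 ∂mu3 := by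
  have h1 : ∀ R : G3, ⟪rot R e3, a⟫ ^ 2 * ⟪rot R e3, b⟫ ^ 2 = (1 / 12) * (⟪rot R e3, a + b⟫ ^ 4 +
      ⟪rot R e3, a - b⟫ ^ 4 - 2 * ⟪rot R e3, a⟫ ^ 4 - 2 * ⟪rot R e3, b⟫ ^ 4) := by
    intro R
    rw [inner_add_right, inner_sub_right]
    ring
  simp_rw [h1]
  have hi : ∀ a, Integrable (fun R => ⟪rot R e3, a⟫ ^ 4) mu3 := fun a => intG ((cont_inner_e3 _).pow 4)
  have h12 : Integrable (fun R => ⟪rot R e3, a + b⟫ ^ 4 + ⟪rot R e3, a - b⟫ ^ 4) mu3 := (hi _).add (hi _)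
  have h13 : Integrable (fun R => ⟪rot R e3, a + b⟫ ^ 4 + ⟪rot R e3, a - b⟫ ^ 4 - 2 * ⟪rot R e3, a⟫ ^ 4) mu3 :=
    h12.sub ((hi _).const_mul _)
  rw [integral_const_mul, integral_sub h13 ((hi _).const_mul _),
    integral_sub h12 ((hi _).const_mul _), integral_add (hi _) (hi _),
    integral_const_mul, integral_const_mul, moment_scale 4 (a + b), moment_scale 4 (a - b), moment_scale 4 a,
    moment_scale 4 b]
  have h2 := @norm_add_sq_real _ _ _ a b
  have h3 := @norm_sub_sq_real _ _ _ a b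
  rw [show ‖a + b‖ ^ 4 = (‖a + b‖ ^ 2) ^ 2 by ring, show ‖a - b‖ ^ 4 = (‖a - b‖ ^ 2) ^ 2 by ring, h2, h3]
  ring

lemma moment22 (a b : Euc 3) : ∫ R, ⟪rot R e3, a⟫ ^ 2 * ⟪rot R e3, b⟫ ^ 2 ∂mu3 =
    (‖a‖ ^ 2 * ‖b‖ ^ 2 + 2 * ⟪a, b⟫ ^ 2) / 15 := by
  have h1 : ∫ R, (∑ i : Fin 3, ∑ j : Fin 3, ⟪rot R e3, EuclideanSpace.single i (1 : ℝ)⟫ ^ 2 *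
      ⟪rot R e3, EuclideanSpace.single j (1 : ℝ)⟫ ^ 2) ∂mu3 = 1 := by
    simp_rw [← Finset.mul_sum, ← Finset.sum_mul, sum_single_sq, rot_norm, norm_e3]
    simp
  have hi : ∀ i j : Fin 3, Integrable (fun R => ⟪rot R e3, EuclideanSpace.single i (1 : ℝ)⟫ ^ 2 *
      ⟪rot R e3, EuclideanSpace.single j (1 : ℝ)⟫ ^ 2) mu3 :=
    fun i j => intG (((cont_inner_e3 _).pow 2).mul ((cont_inner_e3 _).pow 2))
  rw [integral_finsetSum _ fun i _ => integrable_finsetSum _ fun j _ => hi i j] at h1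
  simp_rw [integral_finsetSum _ fun j _ => hi _ j, moment22_aux] at h1
  simp [Fin.sum_univ_three, EuclideanSpace.inner_single_right] at h1
  rw [moment22_aux]
  linear_combination (‖a‖ ^ 2 * ‖b‖ ^ 2 + 2 * ⟪a, b⟫ ^ 2) / 15 * h1



/-! ### Deformations of the fcc configuration -/

/-- Symmetric matrix with prescribed quadratic values on the fcc vectors. -/
def amat (η : Fin 6 → ℝ) : Matrix (Fin 3) (Fin 3) ℝ :=
  !![(η 0 + η 1 + η 2 + η 3 - η 4 - η 5) / 2, (η 0 - η 1) / 2, (η 2 - η 3) / 2;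
     (η 0 - η 1) / 2, (η 0 + η 1 - η 2 - η 3 + η 4 + η 5) / 2, (η 4 - η 5) / 2;
     (η 2 - η 3) / 2, (η 4 - η 5) / 2, (-η 0 - η 1 + η 2 + η 3 + η 4 + η 5) / 2]

def amap (η : Fin 6 → ℝ) : Euc 3 →ₗ[ℝ] Euc 3 := Matrix.toEuclideanLin (amat η)

lemma amap_apply (η : Fin 6 → ℝ) (x : Euc 3) (i : Fin 3) :
    amap η x i = amat η i 0 * x 0 + amat η i 1 * x 1 + amat η i 2 * x 2 := by
  simp [amap, Matrix.toLpLin_apply, Matrix.mulVec, dotProduct, Fin.sum_univ_three]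

lemma det_amap (η : Fin 6 → ℝ) : LinearMap.det (1 + amap η) = (1 + amat η).det := by
  have : (1 : Euc 3 →ₗ[ℝ] Euc 3) + amap η = Matrix.toEuclideanLin (1 + amat η) := by
    rw [map_add, amap]
    congr 1
    ext x i
    simp [Matrix.toLpLin_apply]
  rw [this, Matrix.toEuclideanLin_eq_toLin, LinearMap.det_toLin]

lemma amat_le (η : Fin 6 → ℝ) (i j : Fin 3) : |amat η i j| ≤ (∑ k, |η k|) / 2 := by
  have h := fun k => abs_le.mp (le_refl |η k|)
  have h0 := h 0
  have h1 := h 1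
  have h2 := h 2
  have h3 := h 3
  have h4 := h 4
  have h5 := h 5
  rw [abs_le]
  simp only [Fin.sum_univ_six]
  fin_cases i <;> fin_cases j <;> simp [amat] <;> constructor <;> linarith

lemma amap_norm {η : Fin 6 → ℝ} (hη : ∑ k, |η k| ≤ 1 / 20) (x : Euc 3) : ‖amap η x‖ ≤ ‖x‖ / 10 := by
  refine abs_le_of_sq_le_sq' ?_ (by positivity) |>.2
  rw [div_pow, EuclideanSpace.norm_sq_eq, EuclideanSpace.norm_sq_eq, Fin.sum_univ_three, Fin.sum_univ_three]
  simp only [Real.norm_eq_abs, sq_abs]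
  have key : ∀ i, (amap η x i) ^ 2 ≤ 3 * (1 / 40) ^ 2 * (x 0 ^ 2 + x 1 ^ 2 + x 2 ^ 2) := by
    intro i
    rw [amap_apply]
    have hb : ∀ j, (amat η i j) ^ 2 ≤ (1 / 40) ^ 2 := fun j => by
      rw [← sq_abs]
      have := amat_le η i j
      exact pow_le_pow_left₀ (abs_nonneg _) (by linarith) 2
    have h0 := mul_le_mul_of_nonneg_right (hb 0) (sq_nonneg (x 0))
    have h1 := mul_le_mul_of_nonneg_right (hb 1) (sq_nonneg (x 1))
    have h2 := mul_le_mul_of_nonneg_right (hb 2) (sq_nonneg (x 2))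
    nlinarith [sq_nonneg (amat η i 0 * x 0 - amat η i 1 * x 1), sq_nonneg (amat η i 0 * x 0 - amat η i 2 * x 2),
      sq_nonneg (amat η i 2 * x 2 - amat η i 1 * x 1)]
  have := key 0
  have := key 1
  have := key 2
  nlinarith [sq_nonneg (x 0), sq_nonneg (x 1), sq_nonneg (x 2)]

lemma det_poly {a b c d e f s : ℝ} (hs0 : 0 ≤ s) (hs : s ≤ 1 / 40) (ha : |a| ≤ s) (hb : |b| ≤ s) (hc : |c| ≤ s)
    (hd : |d| ≤ s) (he : |e| ≤ s) (hf : |f| ≤ s) :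
    |a * d + a * f + d * f - b ^ 2 - c ^ 2 - e ^ 2 + (a * d * f + 2 * b * c * e - a * e ^ 2 - d * c ^ 2 - f * b ^ 2)|
      ≤ 7 * s ^ 2 := by
  have m2 : ∀ {x y : ℝ}, |x| ≤ s → |y| ≤ s → |x * y| ≤ s ^ 2 := by
    intro x y hx hy
    rw [abs_mul, sq]; exact mul_le_mul hx hy (abs_nonneg _) hs0
  have m3 : ∀ {x y z : ℝ}, |x| ≤ s → |y| ≤ s → |z| ≤ s → |x * (y * z)| ≤ s ^ 2 * (1 / 40) := by
    intro x y z hx hy hz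
    rw [abs_mul]
    have := m2 hy hz
    calc |x| * |y * z| ≤ (1 / 40) * s ^ 2 := mul_le_mul (hx.trans hs) this (abs_nonneg _) (by norm_num)
      _ = _ := by ring
  have h1 := abs_le.mp (m2 ha hd)
  have h2 := abs_le.mp (m2 ha hf)
  have h3 := abs_le.mp (m2 hd hf)
  have h4 := abs_le.mp (m2 hb hb)
  have h5 := abs_le.mp (m2 hc hc)
  have h6 := abs_le.mp (m2 he he)
  have h7 := abs_le.mp (m3 ha hd hf)
  have h8 := abs_le.mp (m3 hb hc he)
  have h9 := abs_le.mp (m3 ha he he)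
  have h10 := abs_le.mp (m3 hd hc hc)
  have h11 := abs_le.mp (m3 hf hb hb)
  rw [abs_le]
  constructor <;> nlinarith [sq_nonneg s]

lemma det_amap_bound {η : Fin 6 → ℝ} (hη : ∑ k, |η k| ≤ 1 / 20) :
    LinearMap.det (1 + amap η) ≤ 1 + (∑ k, η k) / 2 + 2 * (∑ k, |η k|) ^ 2 ∧ 0 < LinearMap.det (1 + amap η) := by
  rw [det_amap]
  have hs0 : 0 ≤ (∑ k, |η k|) / 2 := by positivity
  have hp := det_poly hs0 (by linarith) (amat_le η 0 0) (amat_le η 0 1) (amat_le η 0 2) (amat_le η 1 1)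
    (amat_le η 1 2) (amat_le η 2 2)
  have hsum : |∑ k, η k| ≤ ∑ k, |η k| := Finset.abs_sum_le_sum_abs _ _
  have hd : (1 + amat η).det = 1 + (∑ k, η k) / 2 + (amat η 0 0 * amat η 1 1 + amat η 0 0 * amat η 2 2 +
     amat η 1 1 * amat η 2 2 - amat η 0 1 ^ 2 - amat η 0 2 ^ 2 - amat η 1 2 ^ 2 +
     (amat η 0 0 * amat η 1 1 * amat η 2 2 + 2 * amat η 0 1 * amat η 0 2 * amat η 1 2 - amat η 0 0 * amat η 1 2 ^ 2 -
      amat η 1 1 * amat η 0 2 ^ 2 - amat η 2 2 * amat η 0 1 ^ 2)) := by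
    rw [Matrix.det_fin_three]
    simp [amat, Fin.sum_univ_six]
    ring
  rw [hd]
  rw [abs_le] at hp hsum
  constructor
  · nlinarith [hp.2]
  · nlinarith [hp.1, hsum.1]

def fr1 (i : Fin 6) : Euc 3 := fcc (![1, 0, 3, 2, 5, 4] i)
def fr2 (i : Fin 6) : Euc 3 := EuclideanSpace.single (![2, 2, 1, 1, 0, 0] i) 1

lemma norm_fr1 (i : Fin 6) : ‖fr1 i‖ = 1 := norm_fcc _
lemma norm_fr2 (i : Fin 6) : ‖fr2 i‖ = 1 := by simp [fr2]
lemma inner_fr1 (i : Fin 6) : ⟪fcc i, fr1 i⟫ = 0 := by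
  rw [fr1, fcc_inner]
  fin_cases i <;> simp [fz, Fin.sum_univ_three]
lemma inner_fr2 (i : Fin 6) : ⟪fcc i, fr2 i⟫ = 0 := by
  rw [fr2, EuclideanSpace.inner_single_right]
  fin_cases i <;> simp [fcc_apply, fz]

lemma amap_fcc (η : Fin 6 → ℝ) (i : Fin 6) : ∃ a b : ℝ, |a| ≤ ∑ k, |η k| ∧ |b| ≤ ∑ k, |η k| ∧
    amap η (fcc i) = η i • fcc i + a • fr1 i + b • fr2 i := by
  have h := fun k => abs_le.mp (le_refl |η k|)
  have h0 := h 0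
  have h1 := h 1
  have h2 := h 2
  have h3 := h 3
  have h4 := h 4
  have h5 := h 5
  have hq : (1 : ℝ) ≤ √2 := by rw [Real.one_le_sqrt]; norm_num
  have hb : ∀ y : ℝ, |y| ≤ ∑ k, |η k| → |y / √2| ≤ ∑ k, |η k| := by
    intro y hy
    rw [abs_div, abs_of_pos (by positivity : (0 : ℝ) < √2)]
    exact (div_le_self (abs_nonneg _) hq).trans hy
  have fin : ∀ a b : ℝ, |a| ≤ ∑ k, |η k| → |b| ≤ ∑ k, |η k| →
    (∀ l : Fin 3, amap η (fcc i) l = η i * fcc i l + a * fr1 i l + b / √2 * fr2 i l) →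
    ∃ a b : ℝ, |a| ≤ ∑ k, |η k| ∧ |b| ≤ ∑ k, |η k| ∧
    amap η (fcc i) = η i • fcc i + a • fr1 i + b • fr2 i := by
    intro a b ha hb' hl
    refine ⟨a, b / √2, ha, hb b hb', ?_⟩
    ext l
    rw [hl]
    simp
  clear hb h
  simp only [Fin.sum_univ_six, abs_le] at fin ⊢
  fin_cases i
  · refine fin ((η 2 + η 3 - η 4 - η 5) / 2) ((η 2 - η 3 + η 4 - η 5) / 2) ⟨by linarith, by linarith⟩ ⟨by linarith, by linarith⟩ ?_
    intro l; rw [amap_apply]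
    fin_cases l <;> simp [amat, fcc_apply, fz, fr1, fr2] <;> ring
  · refine fin ((η 2 + η 3 - η 4 - η 5) / 2) ((η 2 - η 3 - η 4 + η 5) / 2) ⟨by linarith, by linarith⟩ ⟨by linarith, by linarith⟩ ?_
    intro l; rw [amap_apply]
    fin_cases l <;> simp [amat, fcc_apply, fz, fr1, fr2] <;> ring
  · refine fin ((η 0 + η 1 - η 4 - η 5) / 2) ((η 0 - η 1 + η 4 - η 5) / 2) ⟨by linarith, by linarith⟩ ⟨by linarith, by linarith⟩ ?_
    intro l; rw [amap_apply]
    fin_cases l <;> simp [amat, fcc_apply, fz, fr1, fr2] <;> ring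
  · refine fin ((η 0 + η 1 - η 4 - η 5) / 2) ((η 0 - η 1 - η 4 + η 5) / 2) ⟨by linarith, by linarith⟩ ⟨by linarith, by linarith⟩ ?_
    intro l; rw [amap_apply]
    fin_cases l <;> simp [amat, fcc_apply, fz, fr1, fr2] <;> ring
  · refine fin ((η 0 + η 1 - η 2 - η 3) / 2) ((η 0 - η 1 + η 2 - η 3) / 2) ⟨by linarith, by linarith⟩ ⟨by linarith, by linarith⟩ ?_
    intro l; rw [amap_apply]
    fin_cases l <;> simp [amat, fcc_apply, fz, fr1, fr2] <;> ring
  · refine fin ((η 0 + η 1 - η 2 - η 3) / 2) ((η 0 - η 1 - η 2 + η 3) / 2) ⟨by linarith, by linarith⟩ ⟨by linarith, by linarith⟩ ?_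
    intro l; rw [amap_apply]
    fin_cases l <;> simp [amat, fcc_apply, fz, fr1, fr2] <;> ring



/-! ### Norms close to the Euclidean one -/

/-- A norm whose square is close to the Euclidean one. -/
structure NL (f : Euc 3 → ℝ) (ε : ℝ) : Prop where
  sub : ∀ x y, f (x + y) ≤ f x + f y
  hom : ∀ (c : ℝ) x, f (c • x) = |c| * f x
  cont : Continuous f
  near : ∀ x, |f x ^ 2 - ‖x‖ ^ 2| ≤ ε * ‖x‖ ^ 2

namespace NL
variable {f : Euc 3 → ℝ} {ε : ℝ}

lemma nonneg (H : NL f ε) (x : Euc 3) : 0 ≤ f x := by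
  have h1 := H.sub x (-x)
  have h2 := H.hom 0 x
  have h3 := H.hom (-1) x
  simp at h1 h2 h3
  linarith

lemma rot (H : NL f ε) (R : G3) : NL (fun x => f (rot R x)) ε where
  sub x y := by rw [map_add]; exact H.sub _ _
  hom c x := by rw [map_smul]; exact H.hom _ _
  cont := H.cont.comp (_root_.rot R).continuous_of_finiteDimensional
  near x := by have := H.near (_root_.rot R x); rwa [rot_norm] at this

lemma neg (H : NL f ε) (x : Euc 3) : f (-x) = f x := by
  have := H.hom (-1) x
  simpa using this

lemma quot (H : NL f ε) {h t : ℝ} (h0 : 0 ≤ h) (ht : 0 < t) (hht : h ≤ t) (x u : Euc 3) :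
    f (x + h • u) - f x ≤ (h / t) * (f (x + t • u) - f x) := by
  have e : x + h • u = (1 - h / t) • x + (h / t) • (x + t • u) := by
    rw [smul_add, smul_smul, div_mul_cancel₀ _ ht.ne', sub_smul, one_smul]
    abel
  have h1 := H.sub ((1 - h / t) • x) ((h / t) • (x + t • u))
  rw [← e, H.hom, H.hom, abs_of_nonneg, abs_of_nonneg] at h1
  · linarith
  · positivity
  · rw [sub_nonneg]; exact (div_le_one ht).mpr hht

lemma lower (H : NL f ε) (hε1 : ε ≤ 1) {x : Euc 3} (hx : ‖x‖ = 1) : 1 - ε ≤ f x := by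
  have h := (abs_le.mp (H.near x)).1
  rw [hx] at h
  have h0 := H.nonneg x
  have hε : 0 ≤ ε := by
    have := (abs_nonneg _).trans (H.near x); rw [hx] at this; linarith
  by_contra hc
  push Not at hc
  nlinarith

lemma eps_nonneg (H : NL f ε) : 0 ≤ ε := by
  have := (abs_nonneg _).trans (H.near e3); rw [norm_e3] at this; linarith

lemma bump (H : NL f ε) (hε0 : 0 < ε) (hε1 : ε ≤ 1) {x u : Euc 3} (hx : ‖x‖ = 1) (hu : ‖u‖ = 1) (hi : ⟪x, u⟫ ≤ 0)
    {h : ℝ} (h0 : 0 ≤ h) (hh : h ≤ √ε) : f (x + h • u) - f x ≤ 4 * √ε * h := by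
  have ht : 0 < √ε := Real.sqrt_pos.mpr hε0
  have hsq : √ε ^ 2 = ε := Real.sq_sqrt hε0.le
  refine (H.quot h0 ht hh x u).trans ?_
  have hn : ‖x + √ε • u‖ ^ 2 ≤ 1 + ε := by
    rw [@norm_add_sq_real, hx, norm_smul, hu, real_inner_smul_right, Real.norm_of_nonneg ht.le]
    nlinarith
  have h1 := (abs_le.mp (H.near (x + √ε • u))).2
  have h2 : f (x + √ε • u) ≤ 1 + ε := by
    refine abs_le_of_sq_le_sq' ?_ (by linarith) |>.2
    nlinarith
  have h3 := H.lower hε1 hx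
  calc h / √ε * (f (x + √ε • u) - f x) ≤ h / √ε * (2 * √ε ^ 2) := by
        gcongr; rw [hsq]; linarith
    _ = 2 * √ε * h := by field_simp
    _ ≤ _ := by nlinarith [mul_nonneg ht.le h0]

lemma lip (H : NL f ε) (hε0 : 0 < ε) (hε1 : ε ≤ 1) {x y : Euc 3} (hx : ‖x‖ = 1) (hy : ‖y‖ = 1) (hxy : ‖y - x‖ ≤ √ε) :
    f y - f x ≤ 4 * √ε * ‖y - x‖ := by
  rcases eq_or_ne y x with rfl | hne
  · simp
  have hd : 0 < ‖y - x‖ := norm_pos_iff.mpr (sub_ne_zero.mpr hne)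
  have e : y = x + ‖y - x‖ • (‖y - x‖⁻¹ • (y - x)) := by
    rw [smul_smul, mul_inv_cancel₀ hd.ne', one_smul]; abel
  have hi : ⟪x, ‖y - x‖⁻¹ • (y - x)⟫ ≤ 0 := by
    rw [real_inner_smul_right, inner_sub_right, real_inner_self_eq_norm_sq, hx]
    have := real_inner_le_norm x y
    rw [hx, hy] at this
    have h2 : 0 ≤ ‖y - x‖⁻¹ := by positivity
    nlinarith
  have hb := H.bump hε0 hε1 hx (u := ‖y - x‖⁻¹ • (y - x)) (by rw [norm_smul, norm_inv, norm_norm, inv_mul_cancel₀ hd.ne']) hi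
    hd.le hxy
  rwa [← e] at hb

lemma vlip (H : NL f ε) (hε0 : 0 < ε) (hε1 : ε ≤ 1 / 4) {x y : Euc 3} (hx : ‖x‖ = 1) (hy : ‖y‖ = 1) (hxy : ‖y - x‖ ≤ √ε) :
    |(f y ^ 2 - ‖y‖ ^ 2) - (f x ^ 2 - ‖x‖ ^ 2)| ≤ 12 * √ε * ‖y - x‖ := by
  have h1 := H.lip hε0 (by linarith) hx hy hxy
  have h2 := H.lip hε0 (by linarith) hy hx (by rwa [norm_sub_rev])
  rw [norm_sub_rev x y] at h2
  have ub : ∀ z : Euc 3, ‖z‖ = 1 → f z ≤ 3 / 2 := fun z hz => by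
    have := (abs_le.mp (H.near z)).2
    rw [hz] at this
    refine abs_le_of_sq_le_sq' ?_ (by norm_num) |>.2
    nlinarith
  have e : (f y ^ 2 - ‖y‖ ^ 2) - (f x ^ 2 - ‖x‖ ^ 2) = (f y - f x) * (f y + f x) := by rw [hx, hy]; ring
  rw [e, abs_mul, abs_of_nonneg (add_nonneg (H.nonneg y) (H.nonneg x))]
  have h3 : |f y - f x| ≤ 4 * √ε * ‖y - x‖ := abs_le.mpr ⟨by linarith, h1⟩
  have h4 : 0 ≤ 4 * √ε * ‖y - x‖ := by positivity
  calc _ ≤ (4 * √ε * ‖y - x‖) * 3 := mul_le_mul h3 (by linarith [ub x hx, ub y hy])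
        (add_nonneg (H.nonneg y) (H.nonneg x)) h4
    _ = _ := by ring

lemma cone (H : NL f ε) {h : ℝ} (h0 : 0 < h) (x e1 e2 : Euc 3) (η a b B1 B2 : ℝ)
    (hB1 : f (x + h • e1) - f x ≤ B1) (hB1' : f (x - h • e1) - f x ≤ B1)
    (hB2 : f (x + h • e2) - f x ≤ B2) (hB2' : f (x - h • e2) - f x ≤ B2) :
    (1 + η) * f x - |a| / h * B1 - |b| / h * B2 ≤ f (x + (η • x + a • e1 + b • e2)) := by
  have key : ∀ (a B : ℝ) (e : Euc 3), f (x + h • e) - f x ≤ B → f (x - h • e) - f x ≤ B →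
      ∃ z, (|a| / h) • z = (|a| / h) • x - a • e ∧ f z - f x ≤ B := by
    intro a B e hp hm
    rcases le_total 0 a with ha | ha
    · refine ⟨x - h • e, ?_, hm⟩
      rw [abs_of_nonneg ha, smul_sub, smul_smul, div_mul_cancel₀ _ h0.ne']
    · refine ⟨x + h • e, ?_, hp⟩
      rw [abs_of_nonpos ha, smul_add, smul_smul, div_mul_cancel₀ _ h0.ne', neg_smul]
      abel
  obtain ⟨z1, hz1, hz1'⟩ := key a B1 e1 hB1 hB1'
  obtain ⟨z2, hz2, hz2'⟩ := key b B2 e2 hB2 hB2'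
  have e : (1 + η + |a| / h + |b| / h) • x = ((x + (η • x + a • e1 + b • e2)) + (|a| / h) • z1) + (|b| / h) • z2 := by
    rw [hz1, hz2]; module
  have h1 := H.sub ((x + (η • x + a • e1 + b • e2)) + (|a| / h) • z1) ((|b| / h) • z2)
  have h2 := H.sub (x + (η • x + a • e1 + b • e2)) ((|a| / h) • z1)
  rw [← e] at h1
  rw [H.hom, H.hom, abs_of_nonneg (by positivity : 0 ≤ |b| / h)] at h1
  rw [H.hom, abs_of_nonneg (by positivity : 0 ≤ |a| / h)] at h2
  have h3 := mul_le_mul_of_nonneg_right (le_abs_self (1 + η + |a| / h + |b| / h)) (H.nonneg x)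
  have h4 := mul_le_mul_of_nonneg_left hz1' (by positivity : 0 ≤ |a| / h)
  have h5 := mul_le_mul_of_nonneg_left hz2' (by positivity : 0 ≤ |b| / h)
  nlinarith

end NL

/-- Second difference error term. -/
def bb (v : Euc 3 → ℝ) (h : ℝ) : ℝ := (1 / h) * ∑ i, ((|v (fcc i + h • fr1 i)| + |v (fcc i - h • fr1 i)| +
  2 * |v (fcc i)| + 2 * h ^ 2) + (|v (fcc i + h • fr2 i)| + |v (fcc i - h • fr2 i)| + 2 * |v (fcc i)| + 2 * h ^ 2))

lemma second_diff {f : Euc 3 → ℝ} {ε : ℝ} (H : NL f ε) (hε0 : 0 < ε) (hε1 : ε ≤ 1 / 4) {x u : Euc 3} (hx : ‖x‖ = 1)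
    (hu : ‖u‖ = 1) (hi : ⟪x, u⟫ = 0) {h : ℝ} (h0 : 0 ≤ h) (hh : h ≤ √ε) : ∃ B, 0 ≤ B ∧ f (x + h • u) - f x ≤ B ∧
    f (x - h • u) - f x ≤ B ∧ B ≤ 4 * √ε * h ∧
    B ≤ |f (x + h • u) ^ 2 - ‖x + h • u‖ ^ 2| + |f (x - h • u) ^ 2 - ‖x - h • u‖ ^ 2| +
      2 * |f x ^ 2 - ‖x‖ ^ 2| + 2 * h ^ 2 := by
  have hnu : x - h • u = x + h • (-u) := by rw [smul_neg, sub_eq_add_neg]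
  have one : ∀ u : Euc 3, ‖u‖ = 1 → ⟪x, u⟫ = 0 → f (x + h • u) - f x ≤ |f (x + h • u) ^ 2 - ‖x + h • u‖ ^ 2| +
      |f x ^ 2 - ‖x‖ ^ 2| + h ^ 2 := by
    intro u hu hi
    have hn : ‖x + h • u‖ ^ 2 = 1 + h ^ 2 := by
      rw [@norm_add_sq_real, hx, norm_smul, hu, real_inner_smul_right, Real.norm_of_nonneg h0, hi]; ring
    have hl := H.lower (by linarith) hx
    have hnn := H.nonneg (x + h • u)
    have h1 := le_abs_self (f (x + h • u) ^ 2 - ‖x + h • u‖ ^ 2)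
    have h2 := neg_abs_le (f x ^ 2 - ‖x‖ ^ 2)
    rw [hn, hx] at *
    by_contra hc
    push Not at hc
    have p1 := abs_nonneg (f (x + h • u) ^ 2 - (1 + h ^ 2))
    have p2 := abs_nonneg (f x ^ 2 - 1 ^ 2)
    nlinarith
  have a1 := one u hu hi
  have a2 := one (-u) (by rwa [norm_neg]) (by rw [inner_neg_right, hi, neg_zero])
  have b1 := H.bump hε0 (by linarith) hx hu hi.le h0 hh
  have b2 := H.bump hε0 (by linarith) hx (u := -u) (by rwa [norm_neg]) (by rw [inner_neg_right, hi, neg_zero]) h0 hh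
  rw [← hnu] at a2 b2
  have p1 := abs_nonneg (f (x + h • u) ^ 2 - ‖x + h • u‖ ^ 2)
  have p2 := abs_nonneg (f (x - h • u) ^ 2 - ‖x - h • u‖ ^ 2)
  have p3 := abs_nonneg (f x ^ 2 - ‖x‖ ^ 2)
  refine ⟨max 0 (max (f (x + h • u) - f x) (f (x - h • u) - f x)), le_max_left _ _,
    (le_max_left _ _).trans (le_max_right _ _), (le_max_right _ _).trans (le_max_right _ _), ?_, ?_⟩
  · exact max_le (by positivity) (max_le b1 b2)
  · exact max_le (by positivity) (max_le (by nlinarith) (by nlinarith))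

lemma inv_bound {y v : ℝ} (hy : 0 < y) (hv : y ^ 2 = 1 + v) (hv1 : |v| ≤ 1 / 100) :
    1 / y - 1 ≤ -v / 2 + v ^ 2 ∧ |1 / y - 1| ≤ |v| := by
  obtain ⟨h1, h2⟩ := abs_le.mp hv1
  have hve : v = y ^ 2 - 1 := by linarith
  subst hve
  have hy1 : y ≤ 101 / 100 := by nlinarith
  have hy2 : 99 / 100 ≤ y := by nlinarith
  constructor
  · rw [div_sub_one hy.ne', div_le_iff₀ hy]
    have e : (-(y ^ 2 - 1) / 2 + (y ^ 2 - 1) ^ 2) * y - (1 - y) = (y - 1) ^ 2 * (y * (y + 1) ^ 2 - (y + 2) / 2) := by ring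
    have : 0 ≤ y * (y + 1) ^ 2 - (y + 2) / 2 := by nlinarith
    nlinarith [mul_nonneg (sq_nonneg (y - 1)) this]
  · rw [div_sub_one hy.ne', abs_div, abs_of_pos hy, div_le_iff₀ hy, show y ^ 2 - 1 = (y - 1) * (y + 1) by ring,
      abs_mul, abs_sub_comm, abs_of_pos (by linarith : 0 < y + 1), mul_assoc]
    refine le_mul_of_one_le_right (abs_nonneg _) (by nlinarith)

lemma pointwise {f : Euc 3 → ℝ} {ε : ℝ} (H : NL f ε) (hε0 : 0 < ε) (hε1 : √ε ≤ 1 / 1152) {h : ℝ} (h0 : 0 < h)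
    (hh : h ≤ √ε) : ∃ η : Fin 6 → ℝ, (∀ i, 1 ≤ f (fcc i + amap η (fcc i))) ∧ ∑ k, |η k| ≤ 1 / 20 ∧
    LinearMap.det (1 + amap η) ≤ 1 - (∑ i, (f (fcc i) ^ 2 - ‖fcc i‖ ^ 2)) / 4 +
      49 * ∑ i, (f (fcc i) ^ 2 - ‖fcc i‖ ^ 2) ^ 2 + 12 * (bb (fun x => f x ^ 2 - ‖x‖ ^ 2) h *
        ∑ i, |f (fcc i) ^ 2 - ‖fcc i‖ ^ 2|) := by
  have hεs : ε = √ε ^ 2 := (Real.sq_sqrt hε0.le).symm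
  have hs0 : 0 ≤ √ε := Real.sqrt_nonneg _
  have hε2 : ε ≤ 1 / 1000000 := by nlinarith
  set v : Fin 6 → ℝ := fun i => f (fcc i) ^ 2 - ‖fcc i‖ ^ 2 with hv
  have hvle : ∀ i, |v i| ≤ ε := fun i => by have := H.near (fcc i); rwa [norm_fcc, one_pow, mul_one, ← one_pow 2, ← norm_fcc i] at this
  have hfp : ∀ i, 0 < f (fcc i) := fun i => by have := H.lower (by linarith) (norm_fcc i); linarith
  have hfv : ∀ i, f (fcc i) ^ 2 = 1 + v i := fun i => by simp only [hv]; rw [norm_fcc]; ring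
  have hinv := fun i => inv_bound (hfp i) (hfv i) ((hvle i).trans (by linarith))
  choose B hB0 hB1 hB2 hB3 hB4 using fun i => second_diff H hε0 (by linarith) (norm_fcc i) (norm_fr1 i) (inner_fr1 i) h0.le hh
  choose C hC0 hC1 hC2 hC3 hC4 using fun i => second_diff H hε0 (by linarith) (norm_fcc i) (norm_fr2 i) (inner_fr2 i) h0.le hh
  set β : ℝ := (1 / h) * ∑ i, (B i + C i) with hβ
  have hβ0 : 0 ≤ β := mul_nonneg (by positivity) (Finset.sum_nonneg fun i _ => add_nonneg (hB0 i) (hC0 i))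
  have hβ1 : β ≤ 1 / 24 := by
    have : ∑ i, (B i + C i) ≤ ∑ _i : Fin 6, (4 * √ε * h + 4 * √ε * h) :=
      Finset.sum_le_sum fun i _ => add_le_add (hB3 i) (hC3 i)
    rw [hβ, one_div_mul_eq_div, div_le_iff₀ h0]
    simp at this
    nlinarith
  have hβ2 : β ≤ bb (fun x => f x ^ 2 - ‖x‖ ^ 2) h := by
    rw [hβ, bb]
    refine mul_le_mul_of_nonneg_left (Finset.sum_le_sum fun i _ => ?_) (by positivity)
    exact add_le_add (hB4 i) (hC4 i)
  have hBi : ∀ i, B i + C i ≤ h * β := fun i => by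
    rw [hβ, ← mul_assoc, mul_one_div_cancel h0.ne', one_mul]
    exact Finset.single_le_sum (f := fun i => B i + C i) (fun i _ => add_nonneg (hB0 i) (hC0 i)) (Finset.mem_univ i)
  set t : Fin 6 → ℝ := fun i => 1 / f (fcc i) - 1 with ht
  set s : ℝ := ∑ i, |t i| with hs
  have hs1 : s ≤ ∑ i, |v i| := Finset.sum_le_sum fun i _ => (hinv i).2
  have hs00 : 0 ≤ s := Finset.sum_nonneg fun i _ => abs_nonneg _
  have hs2 : s ≤ 6 * ε := hs1.trans ((Finset.sum_le_sum fun i _ => hvle i).trans (by simp))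
  set e : ℝ := 4 * s * β with he
  have he0 : 0 ≤ e := by positivity
  have hη : ∑ k, |t k + e| ≤ 2 * s := by
    have : ∑ k, |t k + e| ≤ ∑ k, (|t k| + e) := Finset.sum_le_sum fun i _ => (abs_add_le _ _).trans (by rw [abs_of_nonneg he0])
    rw [Finset.sum_add_distrib] at this
    simp at this
    nlinarith [mul_le_mul_of_nonneg_left hβ1 hs00]
  refine ⟨fun i => t i + e, fun i => ?_, by linarith, ?_⟩
  · obtain ⟨a, b, ha, hb, hab⟩ := amap_fcc (fun i => t i + e) i
    rw [hab]
    refine le_trans ?_ (H.cone h0 (fcc i) (fr1 i) (fr2 i) _ a b (B i) (C i) (hB1 i) (hB2 i) (hC1 i) (hC2 i))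
    have h1 : |a| / h * B i + |b| / h * C i ≤ 2 * s * β := by
      have h2 : |a| / h * B i ≤ (2 * s) / h * B i := by
        have := hB0 i
        gcongr; linarith
      have h3 : |b| / h * C i ≤ (2 * s) / h * C i := by
        have := hC0 i
        gcongr; linarith
      have h4 : (2 * s) / h * (B i + C i) ≤ (2 * s) / h * (h * β) := by
        have := hBi i
        gcongr
      have h5 : (2 * s) / h * (h * β) = 2 * s * β := by field_simp
      nlinarith
    have h6 : (1 + (t i + e)) * f (fcc i) = 1 + e * f (fcc i) := by
      have := (hfp i).ne'
      simp only [ht]; field_simp; ring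
    have hl := H.lower (by linarith) (norm_fcc i)
    have h7 : e * (1 / 2) ≤ e * f (fcc i) := mul_le_mul_of_nonneg_left (by linarith) he0
    rw [h6]
    nlinarith
  · have hdet := (det_amap_bound (η := fun i => t i + e) (by linarith)).1
    refine hdet.trans ?_
    have h1 : ∑ k, (t k + e) = ∑ k, t k + 6 * e := by rw [Finset.sum_add_distrib]; simp
    have h2 : ∑ k, t k ≤ -(∑ k, v k) / 2 + ∑ k, v k ^ 2 := by
      calc ∑ k, t k ≤ ∑ k, (-v k / 2 + v k ^ 2) := Finset.sum_le_sum fun i _ => (hinv i).1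
        _ = _ := by rw [Finset.sum_add_distrib, ← Finset.sum_div, Finset.sum_neg_distrib]
    have h3 : (∑ k, |t k + e|) ^ 2 ≤ 24 * ∑ k, v k ^ 2 := by
      have h4 : (∑ k, |v k|) ^ 2 ≤ 6 * ∑ k, v k ^ 2 := by
        have := sq_sum_le_card_mul_sum_sq (s := (Finset.univ : Finset (Fin 6))) (f := fun k => |v k|)
        simpa using this
      have h5 : 0 ≤ ∑ k, |t k + e| := Finset.sum_nonneg fun i _ => abs_nonneg _
      nlinarith [Finset.sum_nonneg fun i (_ : i ∈ Finset.univ) => abs_nonneg (v i)]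
    have h6 : 12 * s * β ≤ 12 * (bb (fun x => f x ^ 2 - ‖x‖ ^ 2) h * ∑ i, |v i|) := by
      have := mul_le_mul hβ2 hs1 hs00 (hβ0.trans hβ2)
      nlinarith
    have h7 : 0 ≤ ∑ k, v k ^ 2 := Finset.sum_nonneg fun i _ => sq_nonneg _
    simp only at *
    rw [h1]
    nlinarith



/-! ### The quadratic part of a function -/

/-- Quadratic form with the same second moments. -/
def qp (v : Euc 3 → ℝ) (x : Euc 3) : ℝ :=
  (15 * ∫ R, v (rot R e3) * ⟪rot R e3, x⟫ ^ 2 ∂mu3 - 3 * ‖x‖ ^ 2 * ∫ R, v (rot R e3) ∂mu3) / 2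

lemma qp_neg (v : Euc 3 → ℝ) (x : Euc 3) : qp v (-x) = qp v x := by
  simp [qp, inner_neg_right]

lemma cont_joint {v : Euc 3 → ℝ} (hv : Continuous v) :
    Continuous fun p : Euc 3 × G3 => v (rot p.2 e3) * ⟪rot p.2 e3, p.1⟫ ^ 2 := by
  have h := (continuous_rot_left e3).comp (continuous_snd (X := Euc 3) (Y := G3))
  have h1 : Continuous fun p : Euc 3 × G3 => rot p.2 e3 := h
  exact (hv.comp h1).mul ((h1.inner continuous_fst).pow 2)

lemma qp_cont {v : Euc 3 → ℝ} (hv : Continuous v) : Continuous (qp v) := by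
  have h1 : Continuous fun x : Euc 3 => ∫ R, v (rot R e3) * ⟪rot R e3, x⟫ ^ 2 ∂mu3 := by
    have := continuous_parametric_integral_of_continuous (μ := mu3)
      (f := fun (x : Euc 3) (R : G3) => v (rot R e3) * ⟪rot R e3, x⟫ ^ 2) (cont_joint hv) (s := Set.univ) isCompact_univ
    simpa using this
  unfold qp
  fun_prop

lemma qp_moment {v : Euc 3 → ℝ} (hv : Continuous v) (a : Euc 3) :
    ∫ R, qp v (rot R e3) * ⟪rot R e3, a⟫ ^ 2 ∂mu3 = ∫ R, v (rot R e3) * ⟪rot R e3, a⟫ ^ 2 ∂mu3 := by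
  have hve := continuous_comp_e3 hv
  have hA : Continuous fun R : G3 => v (rot R e3) * ⟪rot R e3, a⟫ ^ 2 := hve.mul ((cont_inner_e3 a).pow 2)
  have hsw : ∫ R, (∫ S, v (rot S e3) * ⟪rot S e3, rot R e3⟫ ^ 2 * ⟪rot R e3, a⟫ ^ 2 ∂mu3) ∂mu3 =
      ∫ S, (∫ R, v (rot S e3) * ⟪rot S e3, rot R e3⟫ ^ 2 * ⟪rot R e3, a⟫ ^ 2 ∂mu3) ∂mu3 := by
    refine integral_integral_swap (f := fun R S => v (rot S e3) * ⟪rot S e3, rot R e3⟫ ^ 2 * ⟪rot R e3, a⟫ ^ 2) ?_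
    have h1 : Continuous fun p : G3 × G3 => rot p.1 e3 := (continuous_rot_left e3).comp continuous_fst
    have h2 : Continuous fun p : G3 × G3 => rot p.2 e3 := (continuous_rot_left e3).comp continuous_snd
    have h3 : Continuous fun p : G3 × G3 => v (rot p.2 e3) * ⟪rot p.2 e3, rot p.1 e3⟫ ^ 2 * ⟪rot p.1 e3, a⟫ ^ 2 :=
      ((hv.comp h2).mul ((h2.inner h1).pow 2)).mul ((h1.inner continuous_const).pow 2)
    exact (h3.integrable_of_hasCompactSupport (HasCompactSupport.of_compactSpace _))
  have hin : ∀ S : G3, ∫ R, v (rot S e3) * ⟪rot S e3, rot R e3⟫ ^ 2 * ⟪rot R e3, a⟫ ^ 2 ∂mu3 =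
      (‖a‖ ^ 2 / 15) * v (rot S e3) + (2 / 15) * (v (rot S e3) * ⟪rot S e3, a⟫ ^ 2) := by
    intro S
    have := moment22 (rot S e3) a
    simp_rw [real_inner_comm (rot _ e3) (rot S e3), mul_assoc]
    rw [integral_const_mul, this, rot_norm, norm_e3]
    ring
  simp_rw [hin] at hsw
  have i1 : Integrable (fun R => (‖a‖ ^ 2 / 15) * v (rot R e3)) mu3 := intG (continuous_const.mul hve)
  have i2 : Integrable (fun R => (2 / 15) * (v (rot R e3) * ⟪rot R e3, a⟫ ^ 2)) mu3 := intG (continuous_const.mul hA)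
  rw [integral_add i1 i2, integral_const_mul, integral_const_mul] at hsw
  simp_rw [integral_mul_const] at hsw
  have e : ∀ R : G3, qp v (rot R e3) * ⟪rot R e3, a⟫ ^ 2 =
      (15 / 2) * ((∫ S, v (rot S e3) * ⟪rot S e3, rot R e3⟫ ^ 2 ∂mu3) * ⟪rot R e3, a⟫ ^ 2) -
      (3 / 2 * ∫ R, v (rot R e3) ∂mu3) * ⟪rot R e3, a⟫ ^ 2 := by
    intro R
    unfold qp
    rw [rot_norm, norm_e3]
    ring
  simp_rw [e]
  have c1 : Continuous fun R : G3 => ∫ S, v (rot S e3) * ⟪rot S e3, rot R e3⟫ ^ 2 ∂mu3 := by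
    have h1 : Continuous fun x : Euc 3 => ∫ R, v (rot R e3) * ⟪rot R e3, x⟫ ^ 2 ∂mu3 := by
      have := continuous_parametric_integral_of_continuous (μ := mu3)
        (f := fun (x : Euc 3) (R : G3) => v (rot R e3) * ⟪rot R e3, x⟫ ^ 2) (cont_joint hv) (s := Set.univ) isCompact_univ
      simpa using this
    exact h1.comp (continuous_rot_left e3)
  have i3 : Integrable (fun R => (15 / 2) * ((∫ S, v (rot S e3) * ⟪rot S e3, rot R e3⟫ ^ 2 ∂mu3) * ⟪rot R e3, a⟫ ^ 2)) mu3 :=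
    intG (continuous_const.mul (c1.mul ((cont_inner_e3 a).pow 2)))
  have i4 : Integrable (fun R => (3 / 2 * ∫ R, v (rot R e3) ∂mu3) * ⟪rot R e3, a⟫ ^ 2) mu3 :=
    intG (continuous_const.mul ((cont_inner_e3 a).pow 2))
  rw [integral_sub i3 i4, integral_const_mul, integral_const_mul, moment2, hsw]
  ring

lemma sum_inner_fcc (x : Euc 3) : ∑ j, ⟪x, fcc j⟫ ^ 2 = 2 * ‖x‖ ^ 2 := by
  have h2 : (√2 : ℝ) ^ 2 = 2 := Real.sq_sqrt (by norm_num)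
  have hx : ‖x‖ ^ 2 = x 0 ^ 2 + x 1 ^ 2 + x 2 ^ 2 := by
    rw [EuclideanSpace.norm_sq_eq, Fin.sum_univ_three]; simp
  have hi : ∀ j, ⟪x, fcc j⟫ = (x 0 * fz j 0 + x 1 * fz j 1 + x 2 * fz j 2) / √2 := by
    intro j
    rw [PiLp.inner_apply, Fin.sum_univ_three]
    simp [fcc_apply]
    ring
  simp_rw [hi, div_pow, h2]
  rw [hx]
  simp [Fin.sum_univ_six, fz]
  ring

lemma sum_qp_fcc {v : Euc 3 → ℝ} (hv : Continuous v) (R : G3) :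
    ∑ j, qp v (rot R (fcc j)) = 6 * ∫ R, v (rot R e3) ∂mu3 := by
  have hve := continuous_comp_e3 hv
  have h1 : ∑ j, ∫ S, v (rot S e3) * ⟪rot S e3, rot R (fcc j)⟫ ^ 2 ∂mu3 = 2 * ∫ S, v (rot S e3) ∂mu3 := by
    rw [← integral_finsetSum, ← integral_const_mul]
    · refine integral_congr_ae (Filter.Eventually.of_forall fun S => ?_)
      simp only
      rw [← Finset.mul_sum]
      have : ∀ j, ⟪rot S e3, rot R (fcc j)⟫ = ⟪rot R⁻¹ (rot S e3), fcc j⟫ := fun j => by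
        rw [← rot_inner R (rot R⁻¹ (rot S e3)), rot_rot_inv]
      simp_rw [this, sum_inner_fcc, rot_norm, norm_e3]
      ring
    · intro j _
      exact intG (hve.mul ((cont_inner_e3 _).pow 2))
  unfold qp
  rw [← Finset.sum_div, Finset.sum_sub_distrib, ← Finset.mul_sum, h1]
  simp [rot_norm, norm_fcc]
  ring



/-! ### Averaging over rotations -/

lemma tilt {g e : G3 → ℝ} (hg : Continuous g) (he : Continuous e) (he0 : ∀ R, 0 ≤ e R) {M : ℝ}
    (h0 : ∫ R, g R ∂mu3 = 0) (hM : ∀ R, |g R| ≤ 12 * M) (hge : ∀ R, g R ≤ 4 * e R) :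
    ∫ R, g R ^ 2 ∂mu3 ≤ 96 * M * ∫ R, e R ∂mu3 := by
  have h1 : ∫ R, (12 * M * g R + g R ^ 2) ∂mu3 ≤ ∫ R, 96 * M * e R ∂mu3 := by
    refine integral_mono (intG (by fun_prop)) (intG (by fun_prop)) fun R => ?_
    have := abs_le.mp (hM R)
    have a := mul_le_mul_of_nonneg_right (hge R) (by linarith : 0 ≤ 12 * M + g R)
    have b := mul_le_mul_of_nonneg_left (by linarith : 12 * M + g R ≤ 24 * M) (he0 R)
    simp only
    nlinarith
  have i1 : Integrable (fun R => 12 * M * g R) mu3 := intG (by fun_prop)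
  have i2 : Integrable (fun R => g R ^ 2) mu3 := intG (by fun_prop)
  rw [integral_add i1 i2, integral_const_mul, integral_const_mul, h0] at h1
  linarith

lemma bb_nonneg (v : Euc 3 → ℝ) {h : ℝ} (h0 : 0 ≤ h) : 0 ≤ bb v h := by
  unfold bb
  positivity

lemma int_add {F G : G3 → ℝ} (hF : Continuous F) (hG : Continuous G) :
    ∫ R, (F R + G R) ∂mu3 = ∫ R, F R ∂mu3 + ∫ R, G R ∂mu3 := integral_add (intG hF) (intG hG)

lemma int_sum {ι : Type*} (s : Finset ι) {F : ι → G3 → ℝ} (hF : ∀ i, Continuous (F i)) :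
    ∫ R, (∑ i ∈ s, F i R) ∂mu3 = ∑ i ∈ s, ∫ R, F i R ∂mu3 := integral_finsetSum s fun i _ => intG (hF i)

lemma err_int {v : Euc 3 → ℝ} (hv : Continuous v) (hom : ∀ (c : ℝ) x, v (c • x) = c ^ 2 * v x) {N : ℝ} (hN : 0 < N)
    (hN1 : N ≤ 1) (hNv : ∫ R, v (rot R e3) ^ 2 ∂mu3 = N ^ 2) :
    ∫ R, (bb (fun x => v (rot R x)) (√N) * ∑ i, |v (rot R (fcc i))|) ∂mu3 ≤ 648 * N ^ 2 / √N := by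
  set h := √N with hh
  have h0 : 0 < h := Real.sqrt_pos.mpr hN
  have hsq : h ^ 2 = N := Real.sq_sqrt hN.le
  have hvc : ∀ x, Continuous fun R : G3 => v (rot R x) := fun x => hv.comp (continuous_rot_left x)
  have J : ∀ y : Euc 3, ∫ R, v (rot R y) ^ 2 ∂mu3 = ‖y‖ ^ 4 * N ^ 2 := by
    intro y
    rw [mean_base (fun x => v x ^ 2) (x := y) (y := ‖y‖ • e3) (by rw [norm_smul, norm_e3, norm_norm, mul_one]), ← hNv,
      ← integral_const_mul]
    simp_rw [map_smul, hom]
    refine integral_congr_ae (Filter.Eventually.of_forall fun R => ?_)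
    simp only; ring
  have Jf : ∀ i, ∫ R, v (rot R (fcc i)) ^ 2 ∂mu3 = N ^ 2 := fun i => by rw [J, norm_fcc]; ring
  have Jp : ∀ x u : Euc 3, ‖x‖ = 1 → ‖u‖ = 1 → ⟪x, u⟫ = 0 → ∫ R, v (rot R (x + h • u)) ^ 2 ∂mu3 ≤ 4 * N ^ 2 ∧
      ∫ R, v (rot R (x - h • u)) ^ 2 ∂mu3 ≤ 4 * N ^ 2 := by
    intro x u hx hu hi
    have e1 : ‖x + h • u‖ ^ 2 = 1 + N := by
      rw [@norm_add_sq_real, hx, norm_smul, hu, real_inner_smul_right, Real.norm_of_nonneg h0.le, hi, ← hsq]; ring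
    have e2 : ‖x - h • u‖ ^ 2 = 1 + N := by
      rw [@norm_sub_sq_real, hx, norm_smul, hu, real_inner_smul_right, Real.norm_of_nonneg h0.le, hi, ← hsq]; ring
    rw [J, J, show ‖x + h • u‖ ^ 4 = (‖x + h • u‖ ^ 2) ^ 2 by ring, show ‖x - h • u‖ ^ 4 = (‖x - h • u‖ ^ 2) ^ 2 by ring,
      e1, e2]
    have : (1 + N) ^ 2 ≤ 4 := by nlinarith
    constructor <;> nlinarith [sq_nonneg N]
  -- the pointwise bound
  let Q : Fin 6 → G3 → ℝ := fun i R => v (rot R (fcc i + h • fr1 i)) ^ 2 + v (rot R (fcc i - h • fr1 i)) ^ 2 +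
      (v (rot R (fcc i + h • fr2 i)) ^ 2 + v (rot R (fcc i - h • fr2 i)) ^ 2)
  let W : G3 → ℝ := fun R => ∑ i, v (rot R (fcc i)) ^ 2
  have hQc : ∀ i, Continuous (Q i) := fun i => (((hvc _).pow 2).add ((hvc _).pow 2)).add (((hvc _).pow 2).add ((hvc _).pow 2))
  have hWc : Continuous W := continuous_finsetSum _ fun i _ => (hvc _).pow 2
  have hbound : ∀ R, bb (fun x => v (rot R x)) h * ∑ i, |v (rot R (fcc i))| ≤
      (1 / h) * (3 * ∑ i, Q i R + (48 * W R + 72 * N ^ 2)) := by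
    intro R
    unfold bb
    rw [mul_assoc]
    refine mul_le_mul_of_nonneg_left ?_ (by positivity)
    rw [Finset.sum_mul_sum]
    have am : ∀ x y : ℝ, |x| * |y| ≤ (x ^ 2 + y ^ 2) / 2 := fun x y => by
      nlinarith [sq_nonneg (|x| - |y|), sq_abs x, sq_abs y]
    have hc : ∀ y : ℝ, 2 * h ^ 2 * |y| ≤ N ^ 2 + y ^ 2 := fun y => by
      rw [hsq]; nlinarith [sq_nonneg (N - |y|), sq_abs y]
    calc _ ≤ ∑ i : Fin 6, ∑ j : Fin 6, (Q i R / 2 + (2 * v (rot R (fcc i)) ^ 2 + (6 * v (rot R (fcc j)) ^ 2 + 2 * N ^ 2))) := by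
          refine Finset.sum_le_sum fun i _ => Finset.sum_le_sum fun j _ => ?_
          have a1 := am (v (rot R (fcc i + h • fr1 i))) (v (rot R (fcc j)))
          have a2 := am (v (rot R (fcc i - h • fr1 i))) (v (rot R (fcc j)))
          have a3 := am (v (rot R (fcc i + h • fr2 i))) (v (rot R (fcc j)))
          have a4 := am (v (rot R (fcc i - h • fr2 i))) (v (rot R (fcc j)))
          have a5 := am (v (rot R (fcc i))) (v (rot R (fcc j)))
          have a6 := hc (v (rot R (fcc j)))
          simp only [Q]
          linarith
      _ = _ := by
          simp only [Finset.sum_add_distrib, Finset.sum_const, Finset.card_univ, Fintype.card_fin, nsmul_eq_mul,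
            ← Finset.mul_sum, ← Finset.sum_div, W]
          push_cast
          ring
  have hbc : Continuous fun R : G3 => bb (fun x => v (rot R x)) h * ∑ i, |v (rot R (fcc i))| := by
    unfold bb
    refine (continuous_const.mul (continuous_finsetSum _ fun i _ => ?_)).mul (continuous_finsetSum _ fun i _ => (hvc _).abs)
    have a1 := (hvc (fcc i + h • fr1 i)).abs
    have a2 := (hvc (fcc i - h • fr1 i)).abs
    have a3 := (hvc (fcc i + h • fr2 i)).abs
    have a4 := (hvc (fcc i - h • fr2 i)).abs
    have a5 := (hvc (fcc i)).abs
    exact (((a1.add a2).add (continuous_const.mul a5)).add continuous_const).add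
      (((a3.add a4).add (continuous_const.mul a5)).add continuous_const)
  have hQs : Continuous fun R => ∑ i, Q i R := continuous_finsetSum _ fun i _ => hQc i
  have hm := integral_mono (intG hbc) (intG (F := fun R => (1 / h) * (3 * ∑ i, Q i R + (48 * W R + 72 * N ^ 2)))
    (continuous_const.mul ((continuous_const.mul hQs).add ((continuous_const.mul hWc).add continuous_const)))) hbound
  refine hm.trans ?_
  have q1 : Continuous fun R => 3 * ∑ i, Q i R := continuous_const.mul hQs
  have q2 : Continuous fun R => 48 * W R := continuous_const.mul hWc
  have q3 : Continuous fun R => 48 * W R + 72 * N ^ 2 := q2.add continuous_const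
  rw [integral_const_mul, int_add q1 q3, int_add q2 continuous_const, integral_const_mul, integral_const_mul, int_sum _ hQc]
  have hW : ∫ R, W R ∂mu3 = 6 * N ^ 2 := by
    simp only [W]
    have sq : ∀ i, Continuous fun R : G3 => v (rot R (fcc i)) ^ 2 := fun x => (hvc _).pow 2
    rw [int_sum _ sq]
    simp [Jf]
  have hQ : ∀ i, ∫ R, Q i R ∂mu3 ≤ 16 * N ^ 2 := by
    intro i
    simp only [Q]
    have sq : ∀ x, Continuous fun R : G3 => v (rot R x) ^ 2 := fun x => (hvc x).pow 2
    have sq2 : ∀ x y, Continuous fun R : G3 => v (rot R x) ^ 2 + v (rot R y) ^ 2 := fun x y => (sq x).add (sq y)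
    rw [int_add (sq2 _ _) (sq2 _ _), int_add (sq _) (sq _), int_add (sq _) (sq _)]
    have a := Jp _ _ (norm_fcc i) (norm_fr1 i) (inner_fr1 i)
    have b := Jp _ _ (norm_fcc i) (norm_fr2 i) (inner_fr2 i)
    linarith [a.1, a.2, b.1, b.2]
  have hQ6 : ∑ i, ∫ R, Q i R ∂mu3 ≤ 96 * N ^ 2 := by
    refine (Finset.sum_le_sum fun i _ => hQ i).trans ?_
    simp; linarith
  rw [hW]
  simp only [integral_const, probReal_univ, smul_eq_mul, one_mul]
  rw [one_div_mul_eq_div]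
  refine div_le_div_of_nonneg_right ?_ h0.le
  nlinarith

lemma inv_cube {y : ℝ} (hy : 0 < y) : 1 - 3 / 2 * (y ^ 2 - 1) ≤ 1 / y ^ 3 := by
  rw [le_div_iff₀ (by positivity)]
  have e : 1 - (1 - 3 / 2 * (y ^ 2 - 1)) * y ^ 3 = (y - 1) ^ 2 * (3 / 2 * y ^ 3 + 3 * y ^ 2 + 2 * y + 1) := by ring
  nlinarith [mul_nonneg (sq_nonneg (y - 1)) (by positivity : 0 ≤ 3 / 2 * y ^ 3 + 3 * y ^ 2 + 2 * y + 1)]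

lemma v_second {v : Euc 3 → ℝ} (hv : Continuous v) {κN : ℝ}
    (hκ : ∀ a : Euc 3, ‖a‖ = 1 → |∫ R, v (rot R e3) * ⟪rot R e3, a⟫ ^ 2 ∂mu3| ≤ κN) (x : Euc 3) (hx : ‖x‖ = 1) :
    |qp v x| ≤ 12 * κN := by
  have hve := continuous_comp_e3 hv
  have hm : ∫ R, v (rot R e3) ∂mu3 = ∑ i : Fin 3, ∫ R, v (rot R e3) * ⟪rot R e3, EuclideanSpace.single i (1 : ℝ)⟫ ^ 2 ∂mu3 := by
    have sq : ∀ i : Fin 3, Continuous fun R : G3 => v (rot R e3) * ⟪rot R e3, EuclideanSpace.single i (1 : ℝ)⟫ ^ 2 :=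
      fun i => hve.mul ((cont_inner_e3 _).pow 2)
    rw [← int_sum _ sq]
    refine integral_congr_ae (Filter.Eventually.of_forall fun R => ?_)
    simp only
    rw [← Finset.mul_sum, sum_single_sq, rot_norm, norm_e3]
    ring
  have h0 := abs_le.mp (hκ (EuclideanSpace.single 0 1) (by simp))
  have h1 := abs_le.mp (hκ (EuclideanSpace.single 1 1) (by simp))
  have h2 := abs_le.mp (hκ (EuclideanSpace.single 2 1) (by simp))
  have h3 := abs_le.mp (hκ x hx)
  unfold qp
  rw [hm, hx, Fin.sum_univ_three, abs_le]
  constructor <;> linarith [h0.1, h0.2, h1.1, h1.2, h2.1, h2.2, h3.1, h3.2]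



/-! ### The analytic core -/

lemma final_num {c1 c2 N M ε K h : ℝ} (hc1 : 0 < c1) (hc2 : 0 < c2) (hN : 0 < N) (hK : 0 < K)
    (hh : 0 < h) (hhN : h ^ 2 = N)
    (e1 : c1 * h ≤ K * M) (e2 : c2 * M ^ 4 ≤ 2304 * ε * N ^ 2) (hε : ε * (2304 * K ^ 4) < c2 * c1 ^ 4) : False := by
  have h1 : (c1 * h) ^ 4 ≤ (K * M) ^ 4 := pow_le_pow_left₀ (by positivity) e1 4
  have h2 : c1 ^ 4 * N ^ 2 ≤ K ^ 4 * M ^ 4 := by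
    rw [← hhN]; nlinarith
  have h3 : c2 * (c1 ^ 4 * N ^ 2) ≤ c2 * (K ^ 4 * M ^ 4) := by gcongr
  have h4 : K ^ 4 * (c2 * M ^ 4) ≤ K ^ 4 * (2304 * ε * N ^ 2) := by gcongr
  have h5 : (ε * (2304 * K ^ 4)) * N ^ 2 < (c2 * c1 ^ 4) * N ^ 2 := by gcongr
  nlinarith

lemma cap_use {c2 : ℝ} (hc : ∀ s : ℝ, 0 ≤ s → s ≤ 1 → ∀ p : Euc 3, ‖p‖ = 1 →
    c2 * s ^ 2 ≤ mu3.real {R | ‖rot R e3 - p‖ ≤ s}) {f : Euc 3 → ℝ} {ε : ℝ} (H : NL f ε) (hε0 : 0 < ε) (hε1 : ε ≤ 1 / 4)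
    {p : Euc 3} (hp : ‖p‖ = 1) :
    c2 * |f p ^ 2 - ‖p‖ ^ 2| ^ 4 ≤ 2304 * ε * ∫ R, (f (rot R e3) ^ 2 - ‖rot R e3‖ ^ 2) ^ 2 ∂mu3 := by
  set v : Euc 3 → ℝ := fun x => f x ^ 2 - ‖x‖ ^ 2 with hv
  have hvc : Continuous v := by have := H.cont; fun_prop
  set M := |v p| with hM
  have hM0 : 0 ≤ M := abs_nonneg _
  have hMε : M ≤ ε := by have := H.near p; rw [hp, one_pow, mul_one, ← one_pow 2, ← hp] at this; exact this
  have ht : 0 < √ε := Real.sqrt_pos.mpr hε0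
  have hsq : √ε ^ 2 = ε := Real.sq_sqrt hε0.le
  set s := M / (24 * √ε) with hs
  have hs0 : 0 ≤ s := by positivity
  have hs1 : s ≤ √ε := by
    rw [hs, div_le_iff₀ (by positivity)]; nlinarith
  have hst : √ε ≤ 1 := Real.sqrt_le_iff.mpr ⟨by norm_num, by linarith⟩
  have h1 := hc s hs0 (hs1.trans hst) p hp
  have hsub : {R : G3 | ‖rot R e3 - p‖ ≤ s} ⊆ {R | M ^ 2 / 4 ≤ v (rot R e3) ^ 2} := by
    intro R hR
    have hR' : ‖rot R e3 - p‖ ≤ s := hR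
    have h2 := H.vlip hε0 hε1 hp (y := rot R e3) (by rw [rot_norm, norm_e3]) (hR'.trans hs1)
    have h3 : 12 * √ε * ‖rot R e3 - p‖ ≤ M / 2 := by
      calc _ ≤ 12 * √ε * s := by gcongr
        _ = M / 2 := by rw [hs]; field_simp; ring
    have h4 : |v (rot R e3) - v p| ≤ M / 2 := h2.trans h3
    have h5 : M / 2 ≤ |v (rot R e3)| := by
      have := abs_sub_abs_le_abs_sub (v p) (v (rot R e3))
      rw [abs_sub_comm (v p) (v (rot R e3))] at this
      linarith
    show M ^ 2 / 4 ≤ v (rot R e3) ^ 2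
    rw [← sq_abs (v (rot R e3))]
    nlinarith
  have h2 := mul_meas_ge_le_integral_of_nonneg (μ := mu3) (f := fun R => v (rot R e3) ^ 2)
    (Filter.Eventually.of_forall fun R => sq_nonneg _) (intG ((continuous_comp_e3 hvc).pow 2)) (M ^ 2 / 4)
  have h3 : mu3.real {R : G3 | ‖rot R e3 - p‖ ≤ s} ≤ mu3.real {R | M ^ 2 / 4 ≤ v (rot R e3) ^ 2} :=
    measureReal_mono hsub
  have h4 : M ^ 2 / 4 * (c2 * s ^ 2) ≤ ∫ R, v (rot R e3) ^ 2 ∂mu3 :=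
    (mul_le_mul_of_nonneg_left (h1.trans h3) (by positivity)).trans h2
  have h5 : M ^ 2 / 4 * (c2 * s ^ 2) = c2 * M ^ 4 / (2304 * ε) := by
    rw [hs, div_pow, mul_pow, hsq]; field_simp; ring
  rw [h5, div_le_iff₀ (by positivity)] at h4
  linarith

set_option maxHeartbeats 1000000 in
theorem core : ∃ ε > (0 : ℝ), ε ≤ 1 / 1000 ∧ ∀ f : Euc 3 → ℝ, NL f ε →
    0 < ∫ R, (f (rot R e3) ^ 2 - ‖rot R e3‖ ^ 2) ^ 2 ∂mu3 →
    (∀ a : Euc 3, ‖a‖ = 1 → |∫ R, (f (rot R e3) ^ 2 - ‖rot R e3‖ ^ 2) * ⟪rot R e3, a⟫ ^ 2 ∂mu3| ≤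
      (1 / 40) * √(∫ R, (f (rot R e3) ^ 2 - ‖rot R e3‖ ^ 2) ^ 2 ∂mu3)) →
    ∃ R : G3, ∃ A : Euc 3 →ₗ[ℝ] Euc 3, (∀ i, 1 ≤ f (rot R (fcc i + A (fcc i)))) ∧ (∀ x, ‖A x‖ ≤ ‖x‖ / 10) ∧
      0 < LinearMap.det (1 + A) ∧ LinearMap.det (1 + A) < ∫ R, 1 / f (rot R e3) ^ 3 ∂mu3 := by
  obtain ⟨c1, hc1, hS⟩ := lemmaS
  obtain ⟨c2, hc2, hcap⟩ := cap_bound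
  set ε : ℝ := min (1 / 1152 ^ 2) (c2 * c1 ^ 4 / (2 * (2304 * 3098880 ^ 4))) with hεd
  have hε0 : 0 < ε := by positivity
  have hε1 : ε ≤ 1 / 1152 ^ 2 := min_le_left _ _
  have hε2 : ε * (2304 * 3098880 ^ 4) < c2 * c1 ^ 4 := by
    have h1 : ε ≤ c2 * c1 ^ 4 / (2 * (2304 * 3098880 ^ 4)) := min_le_right _ _
    rw [le_div_iff₀ (by positivity)] at h1
    have : 0 < c2 * c1 ^ 4 := by positivity
    linarith
  have hεs : √ε ≤ 1 / 1152 := by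
    refine Real.sqrt_le_iff.mpr ⟨by norm_num, ?_⟩
    norm_num at hε1 ⊢
    linarith
  have hε4 : ε ≤ 1 / 4 := hε1.trans (by norm_num)
  refine ⟨ε, hε0, hε1.trans (by norm_num), fun f H hNpos hκ => ?_⟩
  set v : Euc 3 → ℝ := fun x => f x ^ 2 - ‖x‖ ^ 2 with hv
  have hvc : Continuous v := by have := H.cont; fun_prop
  have hvR : ∀ x, Continuous fun R : G3 => v (rot R x) := fun x => hvc.comp (continuous_rot_left x)
  have hveven : ∀ x, v (-x) = v x := fun x => by simp only [hv, H.neg, norm_neg]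
  have hvhom : ∀ (c : ℝ) x, v (c • x) = c ^ 2 * v x := fun c x => by
    simp only [hv, H.hom, norm_smul, Real.norm_eq_abs, mul_pow, sq_abs]; ring
  have hvε : ∀ x, ‖x‖ = 1 → |v x| ≤ ε := fun x hx => by
    have := H.near x; rw [hx, one_pow, mul_one, ← one_pow 2, ← hx] at this; exact this
  change 0 < ∫ R, v (rot R e3) ^ 2 ∂mu3 at hNpos
  change ∀ a : Euc 3, ‖a‖ = 1 → |∫ R, v (rot R e3) * ⟪rot R e3, a⟫ ^ 2 ∂mu3| ≤
      (1 / 40) * √(∫ R, v (rot R e3) ^ 2 ∂mu3) at hκ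
  set N : ℝ := √(∫ R, v (rot R e3) ^ 2 ∂mu3) with hN
  have hN0 : 0 < N := Real.sqrt_pos.mpr hNpos
  have hN2 : ∫ R, v (rot R e3) ^ 2 ∂mu3 = N ^ 2 := (Real.sq_sqrt hNpos.le).symm
  have hNε : N ≤ ε := by
    refine abs_le_of_sq_le_sq' ?_ hε0.le |>.2
    rw [← hN2]
    have := integral_mono (μ := mu3) (intG ((hvR e3).pow 2)) (intG (F := fun _ => ε ^ 2) continuous_const) (fun R => by
      have := hvε (rot R e3) (by rw [rot_norm, norm_e3])
      show v (rot R e3) ^ 2 ≤ ε ^ 2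
      rw [← sq_abs]
      gcongr)
    simpa using this
  set m : ℝ := ∫ R, v (rot R e3) ∂mu3 with hm
  -- the maximum
  obtain ⟨p, hp, hpmax⟩ := (isCompact_sphere (0 : Euc 3) 1).exists_isMaxOn ⟨e3, by simp [norm_e3]⟩ hvc.abs.continuousOn
  have hp1 : ‖p‖ = 1 := by simpa using hp
  set M := |v p| with hM
  have hMx : ∀ x, ‖x‖ = 1 → |v x| ≤ M := fun x hx => hpmax (by simpa using hx)
  have hM0 : 0 < M := by
    rcases (abs_nonneg (v p)).lt_or_eq with h | h
    · exact h
    · exfalso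
      have : ∀ R : G3, v (rot R e3) = 0 := fun R => by
        have := hMx (rot R e3) (by rw [rot_norm, norm_e3])
        rw [hM, ← h] at this
        exact abs_nonpos_iff.mp this
      simp [this] at hNpos
  have hmM : |m| ≤ M := by
    have := norm_integral_le_of_norm_le_const (μ := mu3) (f := fun R => v (rot R e3)) (C := M)
      (Filter.Eventually.of_forall fun R => hMx _ (by rw [rot_norm, norm_e3]))
    simpa using this
  by_contra hcon
  push Not at hcon
  set h : ℝ := √N with hh
  have hh0 : 0 < h := Real.sqrt_pos.mpr hN0
  have hhN : h ^ 2 = N := Real.sq_sqrt hN0.le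
  have hhε : h ≤ √ε := Real.sqrt_le_sqrt hNε
  -- volume bound
  have hvol : 1 - 3 / 2 * m ≤ ∫ R, 1 / f (rot R e3) ^ 3 ∂mu3 := by
    have hfp : ∀ R : G3, 0 < f (rot R e3) := fun R => by
      have := H.lower (by linarith) (x := rot R e3) (by rw [rot_norm, norm_e3]); linarith
    have hfc : Continuous fun R : G3 => f (rot R e3) := continuous_comp_e3 H.cont
    have h1 := integral_mono (μ := mu3) (f := fun R => 1 - 3 / 2 * v (rot R e3)) (g := fun R => 1 / f (rot R e3) ^ 3)
      (intG (continuous_const.sub (continuous_const.mul (hvR e3))))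
      (intG (continuous_const.div (hfc.pow 3) fun R => (pow_pos (hfp R) 3).ne')) (fun R => by
        have := inv_cube (hfp R)
        simp only [hv, rot_norm, norm_e3, one_pow]
        exact this)
    have i1 : Integrable (fun R => 3 / 2 * v (rot R e3)) mu3 := intG (continuous_const.mul (hvR e3))
    rw [integral_sub (integrable_const _) i1, integral_const_mul] at h1
    simpa using h1
  let e : G3 → ℝ := fun R => 49 * ∑ i, v (rot R (fcc i)) ^ 2 + 12 * (bb (fun x => v (rot R x)) h * ∑ i, |v (rot R (fcc i))|)
  let g : G3 → ℝ := fun R => ∑ i, v (rot R (fcc i)) - 6 * m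
  have hge : ∀ R, g R ≤ 4 * e R := by
    intro R
    obtain ⟨η, h1, h2, h3⟩ := pointwise (H.rot R) hε0 hεs hh0 hhε
    have h4 := hcon R (amap η) h1 (amap_norm h2) (det_amap_bound h2).2
    have h5 : bb (fun x => f (rot R x) ^ 2 - ‖x‖ ^ 2) h = bb (fun x => v (rot R x)) h := by
      simp only [hv, rot_norm]
    rw [h5] at h3
    have h6 := hvol.trans (h4.trans h3)
    simp only [g, e, hv, rot_norm] at h6 ⊢
    linarith
  have hbc : Continuous fun R : G3 => bb (fun x => v (rot R x)) h * ∑ i, |v (rot R (fcc i))| := by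
    unfold bb
    refine (continuous_const.mul (continuous_finsetSum _ fun i _ => ?_)).mul (continuous_finsetSum _ fun i _ => (hvR _).abs)
    have a1 := (hvR (fcc i + h • fr1 i)).abs
    have a2 := (hvR (fcc i - h • fr1 i)).abs
    have a3 := (hvR (fcc i + h • fr2 i)).abs
    have a4 := (hvR (fcc i - h • fr2 i)).abs
    have a5 := (hvR (fcc i)).abs
    exact (((a1.add a2).add (continuous_const.mul a5)).add continuous_const).add
      (((a3.add a4).add (continuous_const.mul a5)).add continuous_const)
  have hsc : ∀ i, Continuous fun R : G3 => v (rot R (fcc i)) ^ 2 := fun i => (hvR _).pow 2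
  have hWc : Continuous fun R : G3 => 49 * ∑ i, v (rot R (fcc i)) ^ 2 :=
    continuous_const.mul (continuous_finsetSum _ fun i _ => hsc i)
  have hec : Continuous e := hWc.add (continuous_const.mul hbc)
  have hgc : Continuous g := (continuous_finsetSum _ fun i _ => hvR _).sub continuous_const
  have he0 : ∀ R, 0 ≤ e R := fun R => by
    have := bb_nonneg (fun x => v (rot R x)) hh0.le
    simp only [e]
    positivity
  have hg0 : ∫ R, g R ∂mu3 = 0 := by
    have i1 : Integrable (fun R => ∑ i, v (rot R (fcc i))) mu3 := intG (continuous_finsetSum _ fun i _ => hvR _)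
    simp only [g]
    rw [integral_sub i1 (integrable_const _), int_sum _ fun i => hvR (fcc i)]
    have : ∀ i, ∫ R, v (rot R (fcc i)) ∂mu3 = m := fun i => mean_base v (by rw [norm_fcc, norm_e3])
    simp [this]
  have hgM : ∀ R, |g R| ≤ 12 * M := fun R => by
    have h1 : |∑ i, v (rot R (fcc i))| ≤ 6 * M := by
      refine (Finset.abs_sum_le_sum_abs _ _).trans ?_
      refine (Finset.sum_le_sum fun i _ => hMx _ (by rw [rot_norm, norm_fcc])).trans ?_
      simp
    have h2 := abs_le.mp h1
    have h3 := abs_le.mp hmM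
    simp only [g]
    rw [abs_le]
    constructor <;> linarith [h2.1, h2.2, h3.1, h3.2]
  have ht := tilt hgc hec he0 hg0 hgM hge
  -- the error integral
  have heint : ∫ R, e R ∂mu3 ≤ 8070 * N ^ 2 / h := by
    have h1 := err_int hvc hvhom hN0 (by linarith) hN2
    simp only [e]
    have q2 : Continuous fun R : G3 => 12 * (bb (fun x => v (rot R x)) h * ∑ i, |v (rot R (fcc i))|) :=
      continuous_const.mul hbc
    rw [int_add hWc q2, integral_const_mul, integral_const_mul, int_sum _ hsc]
    have h2 : ∀ i, ∫ R, v (rot R (fcc i)) ^ 2 ∂mu3 = N ^ 2 := fun i => by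
      rw [← hN2]; exact mean_base (fun x => v x ^ 2) (by rw [norm_fcc, norm_e3])
    have h3 : N ^ 2 ≤ N ^ 2 / h := by
      rw [le_div_iff₀ hh0]
      have : h ≤ 1 := by linarith
      nlinarith [sq_nonneg N]
    have h4 : 648 * N ^ 2 / h = 648 * (N ^ 2 / h) := by ring
    have h5 : 8070 * N ^ 2 / h = 8070 * (N ^ 2 / h) := by ring
    simp only [h2]
    rw [h4] at h1
    rw [h5]
    simp
    linarith
  -- the lower bound
  have hlow : c1 * (N ^ 2 / 4) ≤ ∫ R, g R ^ 2 ∂mu3 := by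
    have hqc := qp_cont hvc
    have hwc : Continuous fun x => v x - qp v x := hvc.sub hqc
    have hwe := continuous_comp_e3 hwc
    have h1 := hS (fun x => v x - qp v x) hwc (fun x => by rw [hveven, qp_neg]) (fun a => by
      have i1 : Integrable (fun R => v (rot R e3) * ⟪rot R e3, a⟫ ^ 2) mu3 := intG ((hvR e3).mul ((cont_inner_e3 a).pow 2))
      have i2 : Integrable (fun R => qp v (rot R e3) * ⟪rot R e3, a⟫ ^ 2) mu3 :=
        intG ((continuous_comp_e3 hqc).mul ((cont_inner_e3 a).pow 2))
      simp_rw [sub_mul]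
      rw [integral_sub i1 i2, qp_moment hvc, sub_self])
    have h2 : ∀ R, ∑ j, (v (rot R (fcc j)) - qp v (rot R (fcc j))) = g R := fun R => by
      rw [Finset.sum_sub_distrib, sum_qp_fcc hvc]
    simp only [h2] at h1
    refine le_trans (mul_le_mul_of_nonneg_left ?_ hc1.le) h1
    have h3 : ∫ R, v (rot R e3) ^ 2 ∂mu3 ≤ ∫ R, (2 * (v (rot R e3) - qp v (rot R e3)) ^ 2 + 18 / 100 * N ^ 2) ∂mu3 := by
      refine integral_mono (intG ((hvR e3).pow 2)) (intG ((continuous_const.mul (hwe.pow 2)).add continuous_const)) fun R => ?_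
      have h4 := v_second hvc hκ (rot R e3) (by rw [rot_norm, norm_e3])
      have h5 : qp v (rot R e3) ^ 2 ≤ (12 * (1 / 40 * N)) ^ 2 := by
        rw [← sq_abs]; gcongr
      simp only
      nlinarith [sq_nonneg (v (rot R e3) - 2 * qp v (rot R e3))]
    have q3 : Continuous fun R : G3 => 2 * (v (rot R e3) - qp v (rot R e3)) ^ 2 := continuous_const.mul (hwe.pow 2)
    have q4 : Continuous fun _ : G3 => 18 / 100 * N ^ 2 := continuous_const
    rw [int_add q3 q4,
      integral_const_mul, hN2] at h3
    simp at h3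
    nlinarith [sq_nonneg N]
  have hfin : c1 * h ≤ 3098880 * M := by
    have h1 : c1 * (N ^ 2 / 4) ≤ 96 * M * (8070 * N ^ 2 / h) :=
      hlow.trans (ht.trans (mul_le_mul_of_nonneg_left heint (by positivity)))
    have h2 : 96 * M * (8070 * N ^ 2 / h) = (774720 * M * N ^ 2) / h := by ring
    rw [h2, le_div_iff₀ hh0] at h1
    have h3 : 0 < N ^ 2 := by positivity
    by_contra hc
    push Not at hc
    have h4 := mul_lt_mul_of_pos_right hc h3
    linarith
  have hcapN := cap_use hcap H hε0 hε4 hp1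
  refine final_num hc1 hc2 hN0 (by norm_num) hh0 hhN hfin ?_ hε2
  rw [← hN2]
  exact hcapN



/-! ### Gauss's bound -/

lemma quad_end {α β γ x l u B : ℝ} (hα : 0 ≤ α) (hl : l ≤ x) (hu : x ≤ u)
    (h1 : α * l ^ 2 + β * l + γ ≤ B) (h2 : α * u ^ 2 + β * u + γ ≤ B) : α * x ^ 2 + β * x + γ ≤ B := by
  rcases eq_or_lt_of_le (hl.trans hu) with h | h
  · have : x = l := le_antisymm (h ▸ hu) hl
    rw [this]; exact h1
  · have e : (u - l) * (α * x ^ 2 + β * x + γ) = (u - x) * (α * l ^ 2 + β * l + γ) + (x - l) * (α * u ^ 2 + β * u + γ)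
        - α * ((u - x) * (x - l) * (u - l)) := by ring
    have h3 : (u - x) * (α * l ^ 2 + β * l + γ) ≤ (u - x) * B := mul_le_mul_of_nonneg_left h1 (by linarith)
    have h4 : (x - l) * (α * u ^ 2 + β * u + γ) ≤ (x - l) * B := mul_le_mul_of_nonneg_left h2 (by linarith)
    have h5 : 0 ≤ α * ((u - x) * (x - l) * (u - l)) :=
      mul_nonneg hα (mul_nonneg (mul_nonneg (by linarith) (by linarith)) (by linarith))
    have h6 : (u - l) * (α * x ^ 2 + β * x + γ) ≤ (u - l) * B := by linarith
    exact le_of_mul_le_mul_left h6 (by linarith)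

lemma red_pos {a b c F G H : ℝ} (ha : 0 < a) (hab : a ≤ b) (hbc : b ≤ c) (hF : 0 ≤ F) (hG : 0 ≤ G) (hH : 0 ≤ H)
    (hF2 : F ≤ b / 2) (hG2 : G ≤ a / 2) (hH2 : H ≤ a / 2) :
    a * F ^ 2 + b * G ^ 2 + c * H ^ 2 - 2 * F * G * H ≤ a * b * c / 2 := by
  have hb : 0 < b := by linarith
  have hc : 0 < c := by linarith
  have q1 : 0 ≤ a * b * (c - b) := mul_nonneg (by positivity) (by linarith)
  have q2 : 0 ≤ a * c * (b - a) := mul_nonneg (by positivity) (by linarith)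
  have q3 : 0 ≤ a * b * (c - a) := mul_nonneg (by positivity) (by linarith)
  have q4 : 0 < a * b * c := by positivity
  have q5 : 0 < a * b * b := by positivity
  have q6 : 0 < a * a * b := by positivity
  have q7 : 0 < a * a * c := by positivity
  have k1 : ∀ F G : ℝ, (F = 0 ∨ F = b / 2) → (G = 0 ∨ G = a / 2) →
      a * F ^ 2 + b * G ^ 2 + c * H ^ 2 - 2 * F * G * H ≤ a * b * c / 2 := by
    intro F G hF hG
    have := quad_end (α := c) (β := - 2 * F * G) (γ := a * F ^ 2 + b * G ^ 2) (B := a * b * c / 2) hc.le hH hH2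
      (by rcases hF with rfl | rfl <;> rcases hG with rfl | rfl <;> linarith)
      (by rcases hF with rfl | rfl <;> rcases hG with rfl | rfl <;> linarith)
    linarith
  have k2 : ∀ F : ℝ, (F = 0 ∨ F = b / 2) →
      a * F ^ 2 + b * G ^ 2 + c * H ^ 2 - 2 * F * G * H ≤ a * b * c / 2 := by
    intro F hF
    have := quad_end (α := b) (β := - 2 * F * H) (γ := a * F ^ 2 + c * H ^ 2) (B := a * b * c / 2) hb.le hG hG2
      (by have := k1 F 0 hF (Or.inl rfl); linarith) (by have := k1 F (a / 2) hF (Or.inr rfl); linarith)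
    linarith
  have := quad_end (α := a) (β := - 2 * G * H) (γ := b * G ^ 2 + c * H ^ 2) (B := a * b * c / 2) ha.le hF hF2
      (by have := k2 0 (Or.inl rfl); linarith) (by have := k2 (b / 2) (Or.inr rfl); linarith)
  linarith

lemma red_neg {a b c F G H : ℝ} (ha : 0 < a) (hab : a ≤ b) (hbc : b ≤ c) (hF : 0 ≤ F) (hG : 0 ≤ G) (hH : 0 ≤ H)
    (hF2 : F ≤ b / 2) (hG2 : G ≤ a / 2) (hH2 : H ≤ a / 2) (hS : F + G + H ≤ (a + b) / 2) :
    a * F ^ 2 + b * G ^ 2 + c * H ^ 2 + 2 * F * G * H ≤ a * b * c / 2 := by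
  have hb : 0 < b := by linarith
  have hc : 0 < c := by linarith
  have q1 : 0 ≤ a * b * (c - b) := mul_nonneg (by positivity) (by linarith)
  have q2 : 0 ≤ a * c * (b - a) := mul_nonneg (by positivity) (by linarith)
  have q3 : 0 ≤ a * b * (c - a) := mul_nonneg (by positivity) (by linarith)
  have q4 : 0 < a * b * c := by positivity
  have q5 : 0 < a * b * b := by positivity
  have q6 : 0 < a * a * b := by positivity
  have q7 : 0 < a * a * c := by positivity
  -- edge `F = b/2`, `G = a/2 - H`
  have e1 : a * (b / 2) ^ 2 + b * (a / 2 - H) ^ 2 + c * H ^ 2 + 2 * (b / 2) * (a / 2 - H) * H ≤ a * b * c / 2 := by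
    have := quad_end (α := c) (β := - b * a / 2) (γ := a * b ^ 2 / 4 + b * a ^ 2 / 4) (B := a * b * c / 2) hc.le hH hH2
      (by linarith) (by linarith)
    linarith
  rcases le_total (G + H) (a / 2) with h | h
  · have m1 : a * F ^ 2 + b * G ^ 2 + c * H ^ 2 + 2 * F * G * H ≤
        a * (b / 2) ^ 2 + b * (a / 2 - H) ^ 2 + c * H ^ 2 + 2 * (b / 2) * (a / 2 - H) * H := by
      have : G ≤ a / 2 - H := by linarith
      gcongr
    exact m1.trans e1
  · have e2 : a * (b / 2 - H) ^ 2 + b * (a / 2) ^ 2 + c * H ^ 2 + 2 * (b / 2 - H) * (a / 2) * H ≤ a * b * c / 2 := by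
      have := quad_end (α := c) (β := - a * b / 2) (γ := a * b ^ 2 / 4 + b * a ^ 2 / 4) (B := a * b * c / 2) hc.le hH hH2
        (by linarith) (by linarith)
      linarith
    have e3 : a * ((a + b) / 2 - G - H) ^ 2 + b * G ^ 2 + c * H ^ 2 + 2 * ((a + b) / 2 - G - H) * G * H ≤ a * b * c / 2 := by
      have := quad_end (x := G) (α := a + b - 2 * H) (β := 2 * H * ((a + b) / 2 - H) - 2 * a * ((a + b) / 2 - H))
        (γ := a * ((a + b) / 2 - H) ^ 2 + c * H ^ 2) (B := a * b * c / 2) (l := a / 2 - H) (u := a / 2)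
        (by linarith) (by linarith) hG2
        (by linarith) (by linarith)
      linarith
    refine le_trans ?_ e3
    have : F ≤ (a + b) / 2 - G - H := by linarith
    gcongr

lemma red_sorted {a b c f g h : ℝ} (ha : 0 < a) (hab : a ≤ b) (hbc : b ≤ c)
    (f1 : |2 * f| ≤ b) (g1 : |2 * g| ≤ a) (h1 : |2 * h| ≤ a)
    (s1 : 0 ≤ a + b + 2 * (f + g + h)) (s2 : 0 ≤ a + b + 2 * (f - g - h))
    (s3 : 0 ≤ a + b + 2 * (-f + g - h)) (s4 : 0 ≤ a + b + 2 * (-f - g + h)) :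
    a * b * c / 2 ≤ a * b * c + 2 * f * g * h - a * f ^ 2 - b * g ^ 2 - c * h ^ 2 := by
  have f2 := abs_le.mp f1
  have g2 := abs_le.mp g1
  have h2 := abs_le.mp h1
  obtain ⟨f3, f4⟩ := f2
  obtain ⟨g3, g4⟩ := g2
  obtain ⟨h3, h4⟩ := h2
  rcases le_total 0 f with hf | hf <;> rcases le_total 0 g with hg | hg <;> rcases le_total 0 h with hh | hh
  · have := red_pos (F := f) (G := g) (H := h) ha hab hbc (by linarith) (by linarith) (by linarith) (by linarith) (by linarith) (by linarith)
    linarith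
  · have := red_neg (F := f) (G := g) (H := -h) ha hab hbc (by linarith) (by linarith) (by linarith) (by linarith) (by linarith) (by linarith) (by linarith)
    linarith
  · have := red_neg (F := f) (G := -g) (H := h) ha hab hbc (by linarith) (by linarith) (by linarith) (by linarith) (by linarith) (by linarith) (by linarith)
    linarith
  · have := red_pos (F := f) (G := -g) (H := -h) ha hab hbc (by linarith) (by linarith) (by linarith) (by linarith) (by linarith) (by linarith)
    linarith
  · have := red_neg (F := -f) (G := g) (H := h) ha hab hbc (by linarith) (by linarith) (by linarith) (by linarith) (by linarith) (by linarith) (by linarith)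
    linarith
  · have := red_pos (F := -f) (G := g) (H := -h) ha hab hbc (by linarith) (by linarith) (by linarith) (by linarith) (by linarith) (by linarith)
    linarith
  · have := red_pos (F := -f) (G := -g) (H := h) ha hab hbc (by linarith) (by linarith) (by linarith) (by linarith) (by linarith) (by linarith)
    linarith
  · have := red_neg (F := -f) (G := -g) (H := -h) ha hab hbc (by linarith) (by linarith) (by linarith) (by linarith) (by linarith) (by linarith) (by linarith)
    linarith

lemma red_all {a b c f g h : ℝ} (ha : 0 < a) (hb : 0 < b) (hc : 0 < c)
    (A : ∀ s t : ℤ, 0 ≤ s ^ 2 * b + t ^ 2 * c + 2 * s * t * f + 2 * s * h + 2 * t * g)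
    (B : ∀ s t : ℤ, 0 ≤ s ^ 2 * a + t ^ 2 * c + 2 * s * t * g + 2 * s * h + 2 * t * f)
    (C : ∀ s t : ℤ, 0 ≤ s ^ 2 * a + t ^ 2 * b + 2 * s * t * h + 2 * s * g + 2 * t * f) :
    a * b * c / 2 ≤ a * b * c + 2 * f * g * h - a * f ^ 2 - b * g ^ 2 - c * h ^ 2 := by
  have A1 := A 1 0
  have A2 := A (-1) 0
  have A3 := A 0 1
  have A4 := A 0 (-1)
  have A5 := A 1 1
  have A6 := A 1 (-1)
  have A7 := A (-1) 1
  have A8 := A (-1) (-1)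
  have B1 := B 1 0
  have B2 := B (-1) 0
  have B3 := B 0 1
  have B4 := B 0 (-1)
  have B5 := B 1 1
  have B6 := B 1 (-1)
  have B7 := B (-1) 1
  have B8 := B (-1) (-1)
  have C1 := C 1 0
  have C2 := C (-1) 0
  have C3 := C 0 1
  have C4 := C 0 (-1)
  have C5 := C 1 1
  have C6 := C 1 (-1)
  have C7 := C (-1) 1
  have C8 := C (-1) (-1)
  clear A B C
  push_cast at *
  rcases le_total a b with h1 | h1 <;> rcases le_total b c with h2 | h2 <;> rcases le_total a c with h3 | h3
  · have := red_sorted (a := a) (b := b) (c := c) (f := f) (g := g) (h := h) ha h1 h2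
      (abs_le.mpr ⟨by linarith, by linarith⟩) (abs_le.mpr ⟨by linarith, by linarith⟩) (abs_le.mpr ⟨by linarith, by linarith⟩)
      (by linarith) (by linarith) (by linarith) (by linarith)
    linarith
  · have := red_sorted (a := a) (b := b) (c := c) (f := f) (g := g) (h := h) ha h1 h2
      (abs_le.mpr ⟨by linarith, by linarith⟩) (abs_le.mpr ⟨by linarith, by linarith⟩) (abs_le.mpr ⟨by linarith, by linarith⟩)
      (by linarith) (by linarith) (by linarith) (by linarith)
    linarith
  · have := red_sorted (a := a) (b := c) (c := b) (f := f) (g := h) (h := g) ha h3 h2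
      (abs_le.mpr ⟨by linarith, by linarith⟩) (abs_le.mpr ⟨by linarith, by linarith⟩) (abs_le.mpr ⟨by linarith, by linarith⟩)
      (by linarith) (by linarith) (by linarith) (by linarith)
    linarith
  · have := red_sorted (a := c) (b := a) (c := b) (f := h) (g := f) (h := g) hc h3 h1
      (abs_le.mpr ⟨by linarith, by linarith⟩) (abs_le.mpr ⟨by linarith, by linarith⟩) (abs_le.mpr ⟨by linarith, by linarith⟩)
      (by linarith) (by linarith) (by linarith) (by linarith)
    linarith
  · have := red_sorted (a := b) (b := a) (c := c) (f := g) (g := f) (h := h) hb h1 h3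
      (abs_le.mpr ⟨by linarith, by linarith⟩) (abs_le.mpr ⟨by linarith, by linarith⟩) (abs_le.mpr ⟨by linarith, by linarith⟩)
      (by linarith) (by linarith) (by linarith) (by linarith)
    linarith
  · have := red_sorted (a := b) (b := c) (c := a) (f := g) (g := h) (h := f) hb h2 h3
      (abs_le.mpr ⟨by linarith, by linarith⟩) (abs_le.mpr ⟨by linarith, by linarith⟩) (abs_le.mpr ⟨by linarith, by linarith⟩)
      (by linarith) (by linarith) (by linarith) (by linarith)
    linarith
  · have := red_sorted (a := c) (b := b) (c := a) (f := h) (g := g) (h := f) hc h2 h1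
      (abs_le.mpr ⟨by linarith, by linarith⟩) (abs_le.mpr ⟨by linarith, by linarith⟩) (abs_le.mpr ⟨by linarith, by linarith⟩)
      (by linarith) (by linarith) (by linarith) (by linarith)
    linarith
  · have := red_sorted (a := c) (b := b) (c := a) (f := h) (g := g) (h := f) hc h2 h1
      (abs_le.mpr ⟨by linarith, by linarith⟩) (abs_le.mpr ⟨by linarith, by linarith⟩) (abs_le.mpr ⟨by linarith, by linarith⟩)
      (by linarith) (by linarith) (by linarith) (by linarith)
    linarith



abbrev M3 := Matrix (Fin 3) (Fin 3) ℝ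

def mcost (X : M3) : ℝ := ∑ i, ∑ j, X i j ^ 2

lemma mcost_entry (X : M3) (i j : Fin 3) : |X i j| ≤ √(mcost X) := by
  rw [← Real.sqrt_sq_eq_abs]
  apply Real.sqrt_le_sqrt
  unfold mcost
  exact (Finset.single_le_sum (f := fun j => X i j ^ 2) (fun _ _ => sq_nonneg _) (Finset.mem_univ j)).trans
    (Finset.single_le_sum (f := fun i => ∑ j, X i j ^ 2) (fun _ _ => Finset.sum_nonneg fun _ _ => sq_nonneg _) (Finset.mem_univ i))

def castM (B : Matrix (Fin 3) (Fin 3) ℤ) : M3 := B.map (Int.castRingHom ℝ)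

lemma castM_mul (B C : Matrix (Fin 3) (Fin 3) ℤ) : castM (B * C) = castM B * castM C := by
  unfold castM; rw [Matrix.map_mul]

lemma castM_det (B : Matrix (Fin 3) (Fin 3) ℤ) : (castM B).det = (B.det : ℝ) := by
  unfold castM
  have := (RingHom.map_det (Int.castRingHom ℝ) B).symm
  simpa using this

lemma exists_min_basis (M : M3) (hM : M.det ≠ 0) : ∃ B : Matrix (Fin 3) (Fin 3) ℤ, B.det = 1 ∧
    ∀ B' : Matrix (Fin 3) (Fin 3) ℤ, B'.det = 1 → mcost (M * castM B) ≤ mcost (M * castM B') := by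
  set S : Set (Matrix (Fin 3) (Fin 3) ℤ) := {B | B.det = 1 ∧ mcost (M * castM B) ≤ mcost (M * castM 1)} with hS
  have hne : S.Nonempty := ⟨1, by simp, le_rfl⟩
  have hfin : S.Finite := by
    set L := √(mcost (M * castM 1)) with hL
    set C := ∑ i, ∑ k, |M⁻¹ i k| with hC
    obtain ⟨n, hn⟩ := exists_nat_ge (C * L)
    have : S ⊆ Set.Icc (α := Fin 3 → Fin 3 → ℤ) (fun _ _ => -(n : ℤ)) (fun _ _ => (n : ℤ)) := by
      rintro B ⟨-, hB⟩
      have key : ∀ i j, |B i j| ≤ (n : ℤ) := by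
        intro i j
        have e : castM B = M⁻¹ * (M * castM B) := by
          rw [← Matrix.mul_assoc, Matrix.nonsing_inv_mul _ (by simpa using hM), Matrix.one_mul]
        have e2 : (B i j : ℝ) = ∑ k, M⁻¹ i k * (M * castM B) k j := by
          have := congrFun (congrFun e i) j
          rw [Matrix.mul_apply] at this
          rw [← this]; simp [castM]
        have e3 : |(B i j : ℝ)| ≤ C * L := by
          rw [e2]
          refine (Finset.abs_sum_le_sum_abs _ _).trans ?_
          have : ∀ k ∈ Finset.univ, |M⁻¹ i k * (M * castM B) k j| ≤ |M⁻¹ i k| * L := fun k _ => by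
            rw [abs_mul]
            exact mul_le_mul_of_nonneg_left ((mcost_entry _ k j).trans (Real.sqrt_le_sqrt hB)) (abs_nonneg _)
          refine (Finset.sum_le_sum this).trans ?_
          rw [← Finset.sum_mul]
          refine mul_le_mul_of_nonneg_right ?_ (Real.sqrt_nonneg _)
          exact Finset.single_le_sum (f := fun i => ∑ k, |M⁻¹ i k|) (fun _ _ => Finset.sum_nonneg fun _ _ => abs_nonneg _) (Finset.mem_univ i)
        exact_mod_cast e3.trans hn
      exact ⟨fun i j => (abs_le.mp (key i j)).1, fun i j => (abs_le.mp (key i j)).2⟩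
    exact (Set.finite_Icc (α := Fin 3 → Fin 3 → ℤ) _ _).subset this
  obtain ⟨B, hB, hmin⟩ := Set.exists_min_image S (fun B => mcost (M * castM B)) hfin hne
  refine ⟨B, hB.1, fun B' hB' => ?_⟩
  rcases le_total (mcost (M * castM B')) (mcost (M * castM 1)) with h | h
  · exact hmin B' ⟨hB', h⟩
  · exact hB.2.trans h

lemma gauss_matrix (M : M3) (hM : M.det ≠ 0) (r : ℝ) (hr : 0 < r)
    (h : ∀ z : Fin 3 → ℤ, z ≠ 0 → r ^ 2 ≤ ∑ i, (∑ k, M i k * (z k : ℝ)) ^ 2) : r ^ 6 / 2 ≤ M.det ^ 2 := by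
  obtain ⟨B, hB, hmin⟩ := exists_min_basis M hM
  set X := M * castM B with hX
  have hmove : ∀ E : Matrix (Fin 3) (Fin 3) ℤ, E.det = 1 → mcost X ≤ mcost (X * castM E) := fun E hE => by
    have := hmin (B * E) (by rw [Matrix.det_mul, hB, hE, one_mul])
    rwa [castM_mul, ← Matrix.mul_assoc] at this
  have hdet : X.det = M.det := by rw [hX, Matrix.det_mul, castM_det, hB]; simp
  have hcol : ∀ j, r ^ 2 ≤ ∑ i, X i j ^ 2 := fun j => by
    have := h (fun k => B k j) (fun h0 => by
      have : B.det = 0 := Matrix.det_eq_zero_of_column_eq_zero j fun i => congrFun h0 i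
      rw [hB] at this; exact one_ne_zero this)
    refine this.trans_eq (Finset.sum_congr rfl fun i _ => ?_)
    rw [hX, Matrix.mul_apply]; simp [castM]
  have r2 : 0 < r ^ 2 := by positivity
  have a1 := hcol 0
  have b1 := hcol 1
  have c1 := hcol 2
  set a := ∑ i, X i 0 ^ 2 with ha
  set b := ∑ i, X i 1 ^ 2 with hb
  set c := ∑ i, X i 2 ^ 2 with hc
  set f := ∑ i, X i 1 * X i 2 with hf
  set g := ∑ i, X i 0 * X i 2 with hg
  set k := ∑ i, X i 0 * X i 1 with hk
  have hgram : X.det ^ 2 = a * b * c + 2 * f * g * k - a * f ^ 2 - b * g ^ 2 - c * k ^ 2 := by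
    rw [ha, hb, hc, hf, hg, hk, Matrix.det_fin_three]
    simp only [Fin.sum_univ_three]
    ring
  have hred := red_all (a := a) (b := b) (c := c) (f := f) (g := g) (h := k) (by linarith) (by linarith) (by linarith)
    (fun s t => by
      have := hmove !![1, 0, 0; s, 1, 0; t, 0, 1] (by simp [Matrix.det_fin_three])
      simp only [mcost, castM, Matrix.mul_apply, Fin.sum_univ_three, Matrix.map_apply, Matrix.of_apply, Matrix.cons_val] at this
      simp only [ha, hb, hc, hf, hg, hk, Fin.sum_univ_three]
      simp at this
      linarith)
    (fun s t => by
      have := hmove !![1, s, 0; 0, 1, 0; 0, t, 1] (by simp [Matrix.det_fin_three])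
      simp only [mcost, castM, Matrix.mul_apply, Fin.sum_univ_three, Matrix.map_apply, Matrix.of_apply, Matrix.cons_val] at this
      simp only [ha, hb, hc, hf, hg, hk, Fin.sum_univ_three]
      simp at this
      linarith)
    (fun s t => by
      have := hmove !![1, 0, s; 0, 1, t; 0, 0, 1] (by simp [Matrix.det_fin_three])
      simp only [mcost, castM, Matrix.mul_apply, Fin.sum_univ_three, Matrix.map_apply, Matrix.of_apply, Matrix.cons_val] at this
      simp only [ha, hb, hc, hf, hg, hk, Fin.sum_univ_three]
      simp at this
      linarith)
  rw [← hdet, hgram]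
  refine le_trans ?_ hred
  have : r ^ 2 * r ^ 2 * r ^ 2 ≤ a * b * c := by
    have : 0 < a := by linarith
    have : 0 < b := by linarith
    gcongr
  linarith

lemma lat_coord (T : Euc 3 →ₗ[ℝ] Euc 3) (z : Fin 3 → ℝ) (i : Fin 3) :
    T (∑ k, z k • EuclideanSpace.single k 1) i = ∑ k, T (EuclideanSpace.single k 1) i * z k := by
  simp [map_sum, mul_comm]

def tmat (T : Euc 3 →ₗ[ℝ] Euc 3) : M3 := Matrix.of fun i k => T (EuclideanSpace.single k 1) i

lemma tmat_det (T : Euc 3 →ₗ[ℝ] Euc 3) : (tmat T).det = LinearMap.det T := by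
  rw [← LinearMap.det_toMatrix (EuclideanSpace.basisFun (Fin 3) ℝ).toBasis]
  congr 1

lemma gauss (T : Euc 3 →ₗ[ℝ] Euc 3) (hT : LinearMap.det T ≠ 0) {r : ℝ} (hr : 0 < r)
    (h : ∀ v ∈ latticeSet T, v ≠ 0 → r ≤ ‖v‖) : r ^ 3 / √2 ≤ |LinearMap.det T| := by
  have hM : (tmat T).det ≠ 0 := by rwa [tmat_det]
  have h1 := gauss_matrix (tmat T) hM r hr (fun z hz => by
    set v := T (∑ k, (z k : ℝ) • EuclideanSpace.single k 1) with hv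
    have hv0 : v ≠ 0 := by
      intro h0
      apply hz
      have : (tmat T).mulVec (fun k => (z k : ℝ)) = 0 := by
        ext i
        have h2 : v i = 0 := by rw [h0]; rfl
        rw [hv, lat_coord] at h2
        simpa [Matrix.mulVec, dotProduct, tmat] using h2
      have := Matrix.eq_zero_of_mulVec_eq_zero hM this
      ext k
      have := congrFun this k
      simpa using this
    have h2 := h v ⟨z, rfl⟩ hv0
    have h3 : ‖v‖ ^ 2 = ∑ i, (∑ k, tmat T i k * (z k : ℝ)) ^ 2 := by
      rw [EuclideanSpace.real_norm_sq_eq]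
      refine Finset.sum_congr rfl fun i _ => ?_
      rw [hv, lat_coord]; rfl
    rw [← h3]
    gcongr)
  rw [tmat_det] at h1
  rw [← Real.sqrt_sq_eq_abs]
  apply Real.le_sqrt_of_sq_le
  rw [div_pow, Real.sq_sqrt (by norm_num)]
  refine le_trans (le_of_eq ?_) h1
  ring



/-! ### Normalizing the body by a linear map -/

open scoped MatrixOrder in
lemma psd_root (Q : Matrix (Fin 3) (Fin 3) ℝ) (hQ : Q.PosSemidef) :
    ∃ B : Matrix (Fin 3) (Fin 3) ℝ, Q = Matrix.transpose B * B := by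
  refine ⟨CFC.sqrt Q, ?_⟩
  have h1 := CFC.sqrt_mul_sqrt_self Q hQ.nonneg
  have h2 : (CFC.sqrt Q).PosSemidef := Matrix.nonneg_iff_posSemidef.mp (CFC.sqrt_nonneg Q)
  have h3 : Matrix.transpose (CFC.sqrt Q) = CFC.sqrt Q := by
    have := h2.isHermitian
    rw [← Matrix.conjTranspose_eq_transpose_of_trivial]
    exact this
  rw [h3, h1]

/-- Positive quadratic forms are squares of norms of linear maps. -/
lemma form_root {q : Euc 3 → ℝ} (Q : Matrix (Fin 3) (Fin 3) ℝ) (hs : ∀ i j, Q i j = Q j i)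
    (hq : ∀ x : Euc 3, q x = ∑ i, ∑ j, x i * x j * Q i j) (hpos : ∀ x, x ≠ 0 → 0 < q x) :
    ∃ T : Euc 3 ≃ₗ[ℝ] Euc 3, ∀ x, ‖T x‖ ^ 2 = q x := by
  have hform : ∀ x : Fin 3 → ℝ, dotProduct x (Q.mulVec x) = q (WithLp.toLp 2 x) := fun x => by
    rw [hq]; simp [dotProduct, Matrix.mulVec, Fin.sum_univ_three]; ring
  have hQ : Q.PosSemidef := Matrix.PosSemidef.of_dotProduct_mulVec_nonneg
    (by ext i j; simp [hs i j]) (fun x => by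
      rw [star_trivial, hform]
      rcases eq_or_ne (WithLp.toLp 2 x) 0 with h | h
      · rw [h, hq]; simp
      · exact (hpos _ h).le)
  obtain ⟨B, hB⟩ := psd_root Q hQ
  have hn : ∀ x : Euc 3, ‖Matrix.toEuclideanLin B x‖ ^ 2 = q x := fun x => by
    rw [EuclideanSpace.real_norm_sq_eq, hq, hB]
    simp [Matrix.toEuclideanLin, Matrix.mulVec, dotProduct, Matrix.mul_apply, Fin.sum_univ_three]
    ring
  have hinj : Function.Injective (Matrix.toEuclideanLin B) := by
    rw [← LinearMap.ker_eq_bot, LinearMap.ker_eq_bot']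
    intro x hx
    by_contra hne
    have := hpos x hne
    rw [← hn, hx] at this
    simp at this
  exact ⟨LinearEquiv.ofInjectiveEndo _ hinj, fun x => by rw [← hn]; rfl⟩

lemma qp_form {w : Euc 3 → ℝ} (hw : Continuous w) : ∃ Q : Matrix (Fin 3) (Fin 3) ℝ, (∀ i j, Q i j = Q j i) ∧
    ∀ x : Euc 3, ‖x‖ ^ 2 + qp w x = ∑ i, ∑ j, x i * x j * Q i j := by
  have hwe := continuous_comp_e3 hw
  have hcoord : ∀ i : Fin 3, Continuous fun R : G3 => rot R e3 i := fun i => by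
    have := continuous_rot_left e3
    fun_prop
  refine ⟨Matrix.of fun i j => (15 * ∫ R, w (rot R e3) * (rot R e3 i * rot R e3 j) ∂mu3) / 2 +
    (if i = j then 1 - 3 * (∫ R, w (rot R e3) ∂mu3) / 2 else 0), fun i j => ?_, fun x => ?_⟩
  · simp only [Matrix.of_apply, mul_comm (rot _ e3 i), eq_comm (a := i)]
  · have hc : ∀ i j : Fin 3, Continuous fun R : G3 => x i * x j * (w (rot R e3) * (rot R e3 i * rot R e3 j)) := fun i j =>
      continuous_const.mul (hwe.mul ((hcoord i).mul (hcoord j)))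
    have h1 : ∫ R, w (rot R e3) * ⟪rot R e3, x⟫ ^ 2 ∂mu3 =
        ∑ i, ∑ j, x i * x j * ∫ R, w (rot R e3) * (rot R e3 i * rot R e3 j) ∂mu3 := by
      have : ∀ R : G3, w (rot R e3) * ⟪rot R e3, x⟫ ^ 2 = ∑ i, ∑ j, x i * x j * (w (rot R e3) * (rot R e3 i * rot R e3 j)) := fun R => by
        simp [PiLp.inner_apply, Fin.sum_univ_three]; ring
      simp_rw [this]
      rw [int_sum _ fun i => continuous_finsetSum _ fun j _ => hc i j]
      refine Finset.sum_congr rfl fun i _ => ?_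
      rw [int_sum _ fun j => hc i j]
      refine Finset.sum_congr rfl fun j _ => ?_
      rw [integral_const_mul]
    unfold qp
    rw [h1, EuclideanSpace.real_norm_sq_eq]
    simp [Fin.sum_univ_three]
    ring

lemma qp_hom (w : Euc 3 → ℝ) (c : ℝ) (x : Euc 3) : qp w (c • x) = c ^ 2 * qp w x := by
  unfold qp
  simp only [real_inner_smul_right, norm_smul, Real.norm_eq_abs, mul_pow, sq_abs]
  have : ∀ R : G3, w (rot R e3) * (c ^ 2 * ⟪rot R e3, x⟫ ^ 2) = c ^ 2 * (w (rot R e3) * ⟪rot R e3, x⟫ ^ 2) := fun R => by ring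
  simp_rw [this]
  rw [integral_const_mul]
  ring

lemma sq_int_le {F : G3 → ℝ} (hF : Continuous F) : (∫ R, F R ∂mu3) ^ 2 ≤ ∫ R, F R ^ 2 ∂mu3 := by
  set m := ∫ R, F R ∂mu3 with hm
  have h1 : ∫ R, (2 * m * F R + (- m ^ 2)) ∂mu3 ≤ ∫ R, F R ^ 2 ∂mu3 :=
    integral_mono (intG (by fun_prop)) (intG (by fun_prop)) fun R => by
      simp only
      nlinarith [sq_nonneg (F R - m)]
  have q1 : Continuous fun R => 2 * m * F R := by fun_prop
  have q2 : Continuous fun _ : G3 => - m ^ 2 := by fun_prop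
  rw [int_add q1 q2, integral_const_mul, ← hm] at h1
  simp at h1
  nlinarith

lemma tau_bound {τ : ℝ} (h1 : 999 / 1000 ≤ τ) (h2 : τ ≤ 1001 / 1000) :
    τ ^ 2 * |1 / τ ^ 7 - 1| ≤ 1 / 80 ∧ τ ^ 3 ≤ 2 ∧ 1 / 2 ≤ 1 / τ ^ 7 := by
  have h0 : 0 < τ := by linarith
  have u2 : τ ^ 2 ≤ (1001 / 1000) ^ 2 := by gcongr
  have u3 : τ ^ 3 ≤ (1001 / 1000) ^ 3 := by gcongr
  have u7 : τ ^ 7 ≤ (1001 / 1000) ^ 7 := by gcongr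
  have l7 : (999 / 1000) ^ 7 ≤ τ ^ 7 := by gcongr
  have p7 : 0 < τ ^ 7 := by positivity
  have i1 : 1 / τ ^ 7 ≤ 1 / (999 / 1000) ^ 7 := one_div_le_one_div_of_le (by positivity) l7
  have i2 : 1 / (1001 / 1000) ^ 7 ≤ 1 / τ ^ 7 := one_div_le_one_div_of_le p7 u7
  norm_num at u2 u3 i1 i2
  refine ⟨?_, by linarith, by norm_num; linarith⟩
  have : |1 / τ ^ 7 - 1| ≤ 1 / 90 := by
    rw [abs_le]; norm_num; constructor <;> linarith
  calc _ ≤ (1002001 / 1000000) * (1 / 90 : ℝ) := by gcongr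
    _ ≤ 1 / 80 := by norm_num



lemma qp_bound {w : Euc 3 → ℝ} (hw : Continuous w) {δ : ℝ} (hδ : ∀ x, ‖x‖ = 1 → |w x| ≤ δ) (x : Euc 3) :
    |qp w x| ≤ 12 * δ * ‖x‖ ^ 2 := by
  have hunit : ∀ x : Euc 3, ‖x‖ = 1 → |qp w x| ≤ 12 * δ := by
    refine fun x hx => v_second hw (fun a ha => ?_) x hx
    have := norm_integral_le_of_norm_le_const (μ := mu3) (f := fun R => w (rot R e3) * ⟪rot R e3, a⟫ ^ 2) (C := δ)
      (Filter.Eventually.of_forall fun R => by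
        have hR : ‖rot R e3‖ = 1 := by rw [rot_norm, norm_e3]
        have h1 := hδ _ hR
        have h2 : |⟪rot R e3, a⟫| ≤ 1 := by
          have := abs_real_inner_le_norm (rot R e3) a
          rwa [hR, ha, one_mul] at this
        rw [Real.norm_eq_abs, abs_mul, abs_pow]
        have h3 : |⟪rot R e3, a⟫| ^ 2 ≤ 1 := pow_le_one₀ (abs_nonneg _) h2
        nlinarith [abs_nonneg (w (rot R e3))])
    simpa using this
  rcases eq_or_ne x 0 with rfl | hx
  · have := qp_hom w 0 0
    simp at this
    simp [this]
  · have hn : 0 < ‖x‖ := norm_pos_iff.mpr hx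
    have h1 := hunit (‖x‖⁻¹ • x) (by rw [norm_smul, norm_inv, norm_norm, inv_mul_cancel₀ hn.ne'])
    have h2 : qp w x = ‖x‖ ^ 2 * qp w (‖x‖⁻¹ • x) := by
      rw [qp_hom]; field_simp
    rw [h2, abs_mul, abs_of_nonneg (by positivity)]
    nlinarith [sq_nonneg ‖x‖]

lemma transform_int {v : Euc 3 → ℝ} (hv : Continuous v) (hvh : ∀ (c : ℝ) x, v (c • x) = c ^ 2 * v x)
    (hvo : ∀ a, ∫ R, v (rot R e3) * ⟪rot R e3, a⟫ ^ 2 ∂mu3 = 0) (T : Euc 3 ≃ₗ[ℝ] Euc 3)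
    (hT : ∀ x, ‖x‖ = 1 → 999 / 1000 ≤ ‖T x‖ ∧ ‖T x‖ ≤ 1001 / 1000) (a : Euc 3) (ha : ‖a‖ = 1) :
    |∫ R, v (T.symm (rot R e3)) * ⟪rot R e3, a⟫ ^ 2 ∂mu3| ≤ (1 / 40) * √(∫ R, v (T.symm (rot R e3)) ^ 2 ∂mu3) := by
  have hTd : LinearMap.det (T : Euc 3 →ₗ[ℝ] Euc 3) ≠ 0 := (LinearEquiv.isUnit_det' T).ne_zero
  set D := |LinearMap.det (T : Euc 3 →ₗ[ℝ] Euc 3)| with hD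
  have hD0 : 0 < D := abs_pos.mpr hTd
  have hTc : Continuous T := (T : Euc 3 →ₗ[ℝ] Euc 3).continuous_of_finiteDimensional
  have hTsc : Continuous T.symm := (T.symm : Euc 3 →ₗ[ℝ] Euc 3).continuous_of_finiteDimensional
  have hvs : Continuous fun x => v (T.symm x) := hv.comp hTsc
  have hve := continuous_comp_e3 hv
  let τ : G3 → ℝ := fun R => ‖T (rot R e3)‖
  have hτc : Continuous τ := continuous_comp_e3 (f := fun x => ‖T x‖) hTc.norm
  have hτb : ∀ R, 999 / 1000 ≤ τ R ∧ τ R ≤ 1001 / 1000 := fun R => hT _ (by rw [rot_norm, norm_e3])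
  have hτ0 : ∀ R, 0 < τ R := fun R => by have := (hτb R).1; linarith
  have hi7 : Continuous fun R => 1 / τ R ^ 7 := continuous_const.div (hτc.pow 7) fun R => (pow_pos (hτ0 R) 7).ne'
  have hi3 : Continuous fun R => 1 / τ R ^ 3 := continuous_const.div (hτc.pow 3) fun R => (pow_pos (hτ0 R) 3).ne'
  have hTa : Continuous fun R => ⟪T (rot R e3), a⟫ := continuous_comp_e3 (f := fun x => ⟪T x, a⟫) (hTc.inner continuous_const)
  -- determinant bound
  have hD2 : D ≤ 2 := by
    have h := chvar (ψ := fun _ => 1) measurable_const continuousOn_const (fun _ _ _ => rfl) T hTd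
    have h1 : (1 : ℝ) / 2 ≤ ∫ R, 1 / τ R ^ 3 ∂mu3 := by
      have := integral_mono (μ := mu3) (intG (F := fun _ => (1 : ℝ) / 2) continuous_const) (intG hi3) (fun R => by
        have := (tau_bound (hτb R).1 (hτb R).2).2.1
        exact one_div_le_one_div_of_le (pow_pos (hτ0 R) 3) this)
      simpa using this
    have h2 : 1 = D * ∫ R, 1 / τ R ^ 3 ∂mu3 := by simpa using h
    nlinarith
  -- change of variables
  have hI : ∫ R, v (T.symm (rot R e3)) * ⟪rot R e3, a⟫ ^ 2 ∂mu3 =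
      D * ∫ R, v (rot R e3) * ⟪T (rot R e3), a⟫ ^ 2 * (1 / τ R ^ 7) ∂mu3 := by
    have h := chvar (ψ := fun x => v (T.symm x) * ⟪x, a⟫ ^ 2 / ‖x‖ ^ 4)
      (by have := hvs.measurable; fun_prop)
      (ContinuousOn.div (by fun_prop) (by fun_prop) (fun x hx => by
        have : x ≠ 0 := hx
        positivity))
      (fun r hr x => by
        simp only [map_smul, hvh, real_inner_smul_left, norm_smul, Real.norm_eq_abs, abs_of_pos hr]
        rcases eq_or_ne x 0 with rfl | hx
        · simp
        · have : 0 < ‖x‖ := norm_pos_iff.mpr hx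
          field_simp) T hTd
    simp only [rot_norm, norm_e3, one_pow, div_one] at h
    rw [h]
    congr 1
    refine integral_congr_ae (Filter.Eventually.of_forall fun R => ?_)
    have := hτ0 R
    simp only [LinearEquiv.coe_coe, LinearEquiv.symm_apply_apply, τ] at this ⊢
    field_simp
  have hJ : ∫ R, v (T.symm (rot R e3)) ^ 2 ∂mu3 = D * ∫ R, v (rot R e3) ^ 2 * (1 / τ R ^ 7) ∂mu3 := by
    have h := chvar (ψ := fun x => v (T.symm x) ^ 2 / ‖x‖ ^ 4)
      (by have := hvs.measurable; fun_prop)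
      (ContinuousOn.div (by fun_prop) (by fun_prop) (fun x hx => by
        have : x ≠ 0 := hx
        positivity))
      (fun r hr x => by
        simp only [map_smul, hvh, norm_smul, Real.norm_eq_abs, abs_of_pos hr]
        rcases eq_or_ne x 0 with rfl | hx
        · simp
        · have : 0 < ‖x‖ := norm_pos_iff.mpr hx
          field_simp) T hTd
    simp only [rot_norm, norm_e3, one_pow, div_one] at h
    rw [h]
    congr 1
    refine integral_congr_ae (Filter.Eventually.of_forall fun R => ?_)
    have := hτ0 R
    simp only [LinearEquiv.coe_coe, LinearEquiv.symm_apply_apply, τ] at this ⊢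
    field_simp
  -- orthogonality
  have hO : ∫ R, v (rot R e3) * ⟪T (rot R e3), a⟫ ^ 2 ∂mu3 = 0 := by
    have := hvo (LinearMap.adjoint (T : Euc 3 →ₗ[ℝ] Euc 3) a)
    simpa only [LinearMap.adjoint_inner_right, LinearEquiv.coe_coe] using this
  set I := ∫ R, v (T.symm (rot R e3)) * ⟪rot R e3, a⟫ ^ 2 ∂mu3
  set J := ∫ R, v (T.symm (rot R e3)) ^ 2 ∂mu3
  set m := ∫ R, |v (rot R e3)| ∂mu3 with hm
  have hI2 : |I| ≤ D * (m / 80) := by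
    rw [hI, abs_mul, abs_of_pos hD0]
    refine mul_le_mul_of_nonneg_left ?_ hD0.le
    have i1 : Integrable (fun R => v (rot R e3) * ⟪T (rot R e3), a⟫ ^ 2 * (1 / τ R ^ 7)) mu3 :=
      intG ((hve.mul (hTa.pow 2)).mul hi7)
    have i2 : Integrable (fun R => v (rot R e3) * ⟪T (rot R e3), a⟫ ^ 2) mu3 := intG (hve.mul (hTa.pow 2))
    rw [← sub_zero (∫ R, _ ∂mu3), ← hO, ← integral_sub i1 i2, hm, ← integral_div]
    refine (abs_integral_le_integral_abs).trans ?_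
    refine integral_mono (i1.sub i2).abs (intG (hve.abs.div_const _)) fun R => ?_
    have t1 := (tau_bound (hτb R).1 (hτb R).2).1
    have t2 : ⟪T (rot R e3), a⟫ ^ 2 ≤ τ R ^ 2 := by
      have := abs_real_inner_le_norm (T (rot R e3)) a
      rw [ha, mul_one] at this
      rw [← sq_abs]
      exact pow_le_pow_left₀ (abs_nonneg _) this 2
    have t3 : ⟪T (rot R e3), a⟫ ^ 2 * |1 / τ R ^ 7 - 1| ≤ 1 / 80 :=
      (mul_le_mul_of_nonneg_right t2 (abs_nonneg _)).trans t1
    have e : v (rot R e3) * ⟪T (rot R e3), a⟫ ^ 2 * (1 / τ R ^ 7) - v (rot R e3) * ⟪T (rot R e3), a⟫ ^ 2 =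
      v (rot R e3) * (⟪T (rot R e3), a⟫ ^ 2 * (1 / τ R ^ 7 - 1)) := by ring
    show |v (rot R e3) * ⟪T (rot R e3), a⟫ ^ 2 * (1 / τ R ^ 7) - v (rot R e3) * ⟪T (rot R e3), a⟫ ^ 2| ≤ |v (rot R e3)| / 80
    rw [e, abs_mul, abs_mul, abs_of_nonneg (sq_nonneg ⟪T (rot R e3), a⟫)]
    have := mul_le_mul_of_nonneg_left t3 (abs_nonneg (v (rot R e3)))
    linarith
  have hmJ : D * m ^ 2 ≤ 2 * J := by
    have h1 := sq_int_le hve.abs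
    rw [← hm] at h1
    simp only [sq_abs] at h1
    have h2 : ∫ R, v (rot R e3) ^ 2 ∂mu3 ≤ ∫ R, 2 * (v (rot R e3) ^ 2 * (1 / τ R ^ 7)) ∂mu3 := by
      refine integral_mono (intG (hve.pow 2)) (intG (continuous_const.mul ((hve.pow 2).mul hi7))) fun R => ?_
      have t := (tau_bound (hτb R).1 (hτb R).2).2.2
      simp only
      nlinarith [sq_nonneg (v (rot R e3))]
    rw [integral_const_mul] at h2
    rw [hJ]
    nlinarith
  have hJ0 : 0 ≤ J := integral_nonneg fun R => sq_nonneg _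
  have hm0 : 0 ≤ m := integral_nonneg fun R => abs_nonneg _
  refine abs_le_of_sq_le_sq ?_ (by positivity)
  rw [mul_pow, Real.sq_sqrt hJ0, ← sq_abs I]
  have h1 : |I| ^ 2 ≤ (D * (m / 80)) ^ 2 := pow_le_pow_left₀ (abs_nonneg _) hI2 2
  have h2 : (D * (m / 80)) ^ 2 = D * (D * m ^ 2) / 6400 := by ring
  have h3 : D * (D * m ^ 2) ≤ 2 * (2 * J) := mul_le_mul hD2 hmJ (by positivity) (by norm_num)
  linarith

lemma transform {δ : ℝ} (hδ : 0 < δ) (hδ1 : δ ≤ 1 / 12000) {f : Euc 3 → ℝ} (H : NL f δ) :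
    ∃ T : Euc 3 ≃ₗ[ℝ] Euc 3, NL (fun x => f (T.symm x)) (20 * δ) ∧
      ∀ a : Euc 3, ‖a‖ = 1 → |∫ R, (f (T.symm (rot R e3)) ^ 2 - ‖rot R e3‖ ^ 2) * ⟪rot R e3, a⟫ ^ 2 ∂mu3| ≤
        (1 / 40) * √(∫ R, (f (T.symm (rot R e3)) ^ 2 - ‖rot R e3‖ ^ 2) ^ 2 ∂mu3) := by
  set w : Euc 3 → ℝ := fun x => f x ^ 2 - ‖x‖ ^ 2 with hw
  have hwc : Continuous w := by have := H.cont; fun_prop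
  have hqb := qp_bound hwc (δ := δ) (fun x hx => by have := H.near x; rw [hx] at this; simpa [hw, hx] using this)
  obtain ⟨Q, hQs, hQ⟩ := qp_form hwc
  obtain ⟨T, hT⟩ := form_root (q := fun x => ‖x‖ ^ 2 + qp w x) Q hQs hQ (fun x hx => by
    have h1 := (abs_le.mp (hqb x)).1
    have h2 : 0 < ‖x‖ ^ 2 := by have := norm_pos_iff.mpr hx; positivity
    show 0 < ‖x‖ ^ 2 + qp w x
    nlinarith)
  have hv : ∀ x, f x ^ 2 - ‖T x‖ ^ 2 = w x - qp w x := fun x => by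
    rw [hT, hw]; ring
  refine ⟨T, ⟨fun x y => ?_, fun c x => ?_, ?_, fun y => ?_⟩, fun a ha => ?_⟩
  · rw [map_add]; exact H.sub _ _
  · rw [map_smul]; exact H.hom _ _
  · exact H.cont.comp (T.symm : Euc 3 →ₗ[ℝ] Euc 3).continuous_of_finiteDimensional
  · have e := hv (T.symm y)
    have e2 := hT (T.symm y)
    rw [LinearEquiv.apply_symm_apply] at e e2
    rw [e]
    set x := T.symm y
    have h1 := hqb x
    have h2 : |w x| ≤ δ * ‖x‖ ^ 2 := H.near x
    have h3 := abs_sub (w x) (qp w x)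
    have h4 := (abs_le.mp h1).1
    have h5 : 0 ≤ ‖x‖ ^ 2 := sq_nonneg _
    have h6 : ‖x‖ ^ 2 ≤ 20 / 13 * ‖y‖ ^ 2 := by nlinarith
    have h7 : δ * ‖x‖ ^ 2 ≤ δ * (20 / 13 * ‖y‖ ^ 2) := mul_le_mul_of_nonneg_left h6 hδ.le
    linarith
  · have h := transform_int (v := fun x => w x - qp w x) (hwc.sub (qp_cont hwc)) (fun c x => by
        simp only [hw, H.hom, norm_smul, Real.norm_eq_abs, mul_pow, sq_abs, qp_hom]; ring) (fun a => by
        have i1 : Integrable (fun R => w (rot R e3) * ⟪rot R e3, a⟫ ^ 2) mu3 :=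
          intG ((continuous_comp_e3 hwc).mul ((cont_inner_e3 a).pow 2))
        have i2 : Integrable (fun R => qp w (rot R e3) * ⟪rot R e3, a⟫ ^ 2) mu3 :=
          intG ((continuous_comp_e3 (qp_cont hwc)).mul ((cont_inner_e3 a).pow 2))
        simp_rw [sub_mul]
        rw [integral_sub i1 i2, qp_moment hwc, sub_self]) T (fun x hx => by
        have h1 := hqb x
        have h2 := hT x
        simp only [hx, one_pow, mul_one] at h1 h2
        have h3 := abs_le.mp h1
        have h4 := norm_nonneg (T x)
        constructor <;> nlinarith [h3.1, h3.2]) a ha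
    have e : ∀ y, w (T.symm y) - qp w (T.symm y) = f (T.symm y) ^ 2 - ‖y‖ ^ 2 := fun y => by
      rw [← hv, LinearEquiv.apply_symm_apply]
    simp only [e] at h
    exact h



def T0 : Euc 3 →ₗ[ℝ] Euc 3 :=
  Matrix.toEuclideanLin ((1 / √2 : ℝ) • (!![1, 1, 0; 1, 0, 1; 0, 1, 1] : Matrix (Fin 3) (Fin 3) ℝ))

lemma det_T0 : |LinearMap.det T0| = 1 / √2 := by
  have h2 : √2 ^ 2 = (2 : ℝ) := Real.sq_sqrt (by norm_num)
  have h0 : 0 < √(2 : ℝ) := by positivity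
  rw [T0, Matrix.toEuclideanLin_eq_toLin, LinearMap.det_toLin, Matrix.det_smul, Matrix.det_fin_three]
  simp
  rw [abs_of_pos h0]
  norm_num
  field_simp
  nlinarith

lemma T0_lat (z : Fin 3 → ℤ) (i : Fin 3) :
    T0 (∑ k, (z k : ℝ) • EuclideanSpace.single k 1) i
      = ((![z 0 + z 1, z 0 + z 2, z 1 + z 2] i : ℤ) : ℝ) / √2 := by
  rw [T0, Matrix.toLpLin_apply]
  fin_cases i <;> simp [Matrix.mulVec, dotProduct, Fin.sum_univ_three] <;> ring

lemma T0_cases (z : Fin 3 → ℤ) {v : Euc 3} (hv : v = T0 (∑ k, (z k : ℝ) • EuclideanSpace.single k 1)) :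
    v = 0 ∨ (∃ i, v = fcc i ∨ v = -fcc i) ∨ 2 ≤ ‖v‖ ^ 2 := by
  obtain ⟨p, hp⟩ : ∃ p, p = z 0 + z 1 := ⟨_, rfl⟩
  obtain ⟨q, hq⟩ : ∃ q, q = z 0 + z 2 := ⟨_, rfl⟩
  obtain ⟨s, hs⟩ : ∃ s, s = z 1 + z 2 := ⟨_, rfl⟩
  have hpar : (p + q + s) % 2 = 0 := by omega
  have hvi : ∀ i, v i = ((![p, q, s] i : ℤ) : ℝ) / √2 := fun i => by rw [hv, T0_lat, hp, hq, hs]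
  have h2 : √2 ^ 2 = (2 : ℝ) := Real.sq_sqrt (by norm_num)
  by_cases h : 4 ≤ p ^ 2 + q ^ 2 + s ^ 2
  · right; right
    rw [EuclideanSpace.real_norm_sq_eq, Fin.sum_univ_three, hvi, hvi, hvi]
    simp only [div_pow, h2]
    have : (4 : ℝ) ≤ (p : ℝ) ^ 2 + (q : ℝ) ^ 2 + (s : ℝ) ^ 2 := by exact_mod_cast h
    simp
    linarith
  · have hp1 : -1 ≤ p ∧ p ≤ 1 := by constructor <;> nlinarith [sq_nonneg q, sq_nonneg s]
    have hq1 : -1 ≤ q ∧ q ≤ 1 := by constructor <;> nlinarith [sq_nonneg p, sq_nonneg s]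
    have hs1 : -1 ≤ s ∧ s ≤ 1 := by constructor <;> nlinarith [sq_nonneg q, sq_nonneg p]
    have key : (![p, q, s] = 0) ∨ ∃ i, ![p, q, s] = fz i ∨ ![p, q, s] = - fz i := by
      clear hvi hp hq hs h
      obtain ⟨a, b⟩ := hp1
      obtain ⟨c, d⟩ := hq1
      obtain ⟨e, f⟩ := hs1
      interval_cases p <;> interval_cases q <;> interval_cases s <;> revert hpar <;> decide
    rcases key with k | ⟨i, k | k⟩
    · left
      ext j
      rw [hvi, k]; simp
    · right; left
      refine ⟨i, Or.inl ?_⟩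
      ext j
      rw [hvi, k, fcc_apply]
    · right; left
      refine ⟨i, Or.inr ?_⟩
      ext j
      rw [hvi, k, PiLp.neg_apply, fcc_apply]
      simp [neg_div]

lemma NL.mono {f : Euc 3 → ℝ} {a b : ℝ} (H : NL f a) (h : a ≤ b) : NL f b :=
  { H with near := fun x => (H.near x).trans (mul_le_mul_of_nonneg_right h (sq_nonneg _)) }

lemma det_rot (R : G3) : |LinearMap.det (rot R)| = 1 := by
  rw [rot, Matrix.toEuclideanLin_eq_toLin, LinearMap.det_toLin]
  have h := Matrix.det_of_mem_unitary R.2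
  have h2 : R.1.det * R.1.det = 1 := by
    have := (Unitary.mem_iff.mp h).1
    simpa using this
  rcases mul_self_eq_one_iff.mp h2 with e | e <;> rw [e] <;> simp

lemma geom : ∃ δ > (0 : ℝ), δ ≤ 1 / 12000 ∧ ∀ f : Euc 3 → ℝ, NL f δ →
    (∃ T : Euc 3 ≃ₗ[ℝ] Euc 3, ∀ x, f x = ‖T x‖) ∨
    ∃ L : Euc 3 →ₗ[ℝ] Euc 3, LinearMap.det L ≠ 0 ∧ (∀ v ∈ latticeSet L, v ≠ 0 → 1 ≤ f v) ∧
      |LinearMap.det L| * √2 * (volume (unitBall 3)).toReal < (volume {x | f x ≤ 1}).toReal := by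
  obtain ⟨ε, hε, hε1, hcore⟩ := core
  obtain ⟨c, hc, hcap⟩ := cap_bound
  refine ⟨min (1 / 12000) (ε / 20), by positivity, min_le_left _ _, fun f H => ?_⟩
  obtain ⟨T, H', hT⟩ := transform (by positivity) (min_le_left _ _) H
  replace H' : NL (fun x => f (T.symm x)) ε := H'.mono (by have := min_le_right (1 / 12000) (ε / 20); linarith)
  obtain ⟨g, hg⟩ : ∃ g : Euc 3 → ℝ, g = fun x => f (T.symm x) := ⟨_, rfl⟩
  have hgx : ∀ x, f (T.symm x) = g x := fun x => by rw [hg]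
  rw [← hg] at H'
  simp only [hgx] at hT
  have hfg : ∀ x, f x = g (T x) := fun x => by rw [hg]; simp
  have hJ : 0 ≤ ∫ R, (g (rot R e3) ^ 2 - ‖rot R e3‖ ^ 2) ^ 2 ∂mu3 := integral_nonneg fun _ => sq_nonneg _
  rcases hJ.eq_or_lt with hJ | hJ
  · left
    refine ⟨T, fun x => ?_⟩
    rw [hfg]
    have hu : ∀ p : Euc 3, ‖p‖ = 1 → g p = 1 := by
      intro p hp
      have := cap_use hcap H' hε (by linarith) hp
      rw [← hJ, mul_zero] at this
      have h0 : |g p ^ 2 - ‖p‖ ^ 2| = 0 := by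
        by_contra hne
        have : 0 < c * |g p ^ 2 - ‖p‖ ^ 2| ^ 4 := by positivity
        linarith
      have h1 := abs_eq_zero.mp h0
      rw [hp] at h1
      have := H'.nonneg p
      nlinarith
    obtain ⟨S, hS⟩ := rot_smul_e3 (T x)
    rw [hS, H'.hom, hu _ (by rw [rot_norm, norm_e3]), norm_smul, rot_norm, norm_e3]
    simp
  · right
    obtain ⟨R, A, h1, h2, h3, h4⟩ := hcore g H' hJ hT
    have hdT : LinearMap.det (T : Euc 3 →ₗ[ℝ] Euc 3) ≠ 0 := T.isUnit_det'.ne_zero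
    have hdTs : LinearMap.det (T.symm : Euc 3 →ₗ[ℝ] Euc 3) = (LinearMap.det (T : Euc 3 →ₗ[ℝ] Euc 3))⁻¹ := by
      rw [LinearEquiv.det_coe_symm]
    have hdet : |LinearMap.det ((T.symm : Euc 3 →ₗ[ℝ] Euc 3) ∘ₗ rot R ∘ₗ (1 + A) ∘ₗ T0)| =
        |LinearMap.det (T : Euc 3 →ₗ[ℝ] Euc 3)|⁻¹ * (LinearMap.det (1 + A) * (1 / √2)) := by
      rw [LinearMap.det_comp, LinearMap.det_comp, LinearMap.det_comp, abs_mul, abs_mul, abs_mul, hdTs, det_rot,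
        det_T0, abs_inv, abs_of_pos h3, one_mul]
    have hv : (volume {x | f x ≤ 1}).toReal = |LinearMap.det (T : Euc 3 →ₗ[ℝ] Euc 3)|⁻¹ *
        ((volume (unitBall 3)).toReal * ∫ R, 1 / g (rot R e3) ^ 3 ∂mu3) := by
      rw [← vol_star H'.cont (fun r hr x => by rw [H'.hom, abs_of_pos hr]) ?_]
      · have : {x | f x ≤ 1} = (T : Euc 3 →ₗ[ℝ] Euc 3) ⁻¹' {x | g x ≤ 1} := by
          ext x; simp [hfg]
        rw [this, Measure.addHaar_preimage_linearMap _ hdT, ENNReal.toReal_mul, ENNReal.toReal_ofReal (abs_nonneg _), abs_inv]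
      · intro x hx
        obtain ⟨S, hS⟩ := rot_smul_e3 x
        rw [hS, H'.hom]
        have := H'.lower (by linarith) (x := rot S e3) (by rw [rot_norm, norm_e3])
        have hx' : 0 < ‖x‖ := norm_pos_iff.mpr hx
        have : 0 < g (rot S e3) := by linarith
        positivity
    have hd0 : 0 < |LinearMap.det (T : Euc 3 →ₗ[ℝ] Euc 3)|⁻¹ := by positivity
    refine ⟨(T.symm : Euc 3 →ₗ[ℝ] Euc 3) ∘ₗ rot R ∘ₗ (1 + A) ∘ₗ T0, ?_, ?_, ?_⟩
    · rw [← abs_pos, hdet]; positivity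
    · rintro v ⟨z, hz⟩ hv0
      rw [hfg]
      have e : T v = rot R ((1 + A) (T0 (∑ k, (z k : ℝ) • EuclideanSpace.single k 1))) := by
        rw [hz]; simp only [LinearMap.comp_apply, LinearEquiv.coe_coe, LinearEquiv.apply_symm_apply]
      rw [e]
      obtain ⟨l, hl⟩ : ∃ l, l = T0 (∑ k, (z k : ℝ) • EuclideanSpace.single k 1) := ⟨_, rfl⟩
      rw [← hl] at e ⊢
      rcases T0_cases z hl with h | ⟨i, h | h⟩ | h
      · exfalso
        rw [h, map_zero, map_zero] at e
        exact hv0 (by simpa using e)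
      · rw [h]
        simpa [LinearMap.add_apply] using h1 i
      · rw [h, map_neg, map_neg, H'.neg]
        simpa [LinearMap.add_apply] using h1 i
      · have hA : ‖l‖ * (9 / 10) ≤ ‖rot R ((1 + A) l)‖ := by
          rw [rot_norm, LinearMap.add_apply, Module.End.one_apply]
          have := norm_sub_norm_le l (-(A l))
          rw [norm_neg, sub_neg_eq_add] at this
          linarith [h2 l]
        have hn := (abs_le.mp (H'.near (rot R ((1 + A) l)))).1
        have h5 : (81 / 50 : ℝ) ≤ ‖rot R ((1 + A) l)‖ ^ 2 := by nlinarith [norm_nonneg l]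
        have h6 : 1 ≤ g (rot R ((1 + A) l)) ^ 2 := by nlinarith
        have h7 := H'.nonneg (rot R ((1 + A) l))
        nlinarith
    · rw [hv, hdet]
      have hb : 0 < (volume (unitBall 3)).toReal := by
        rw [vol_unitBall]; exact ENNReal.toReal_pos vol_ball_ne_zero vol_ball_ne_top
      have h2 : √2 ≠ (0 : ℝ) := by positivity
      have : |LinearMap.det (T : Euc 3 →ₗ[ℝ] Euc 3)|⁻¹ * (LinearMap.det (1 + A) * (1 / √2)) * √2 * (volume (unitBall 3)).toReal
        = |LinearMap.det (T : Euc 3 →ₗ[ℝ] Euc 3)|⁻¹ * ((volume (unitBall 3)).toReal * LinearMap.det (1 + A)) := by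
        field_simp
      rw [this]
      gcongr



lemma det_ne_of_lattice_eq {T T' : Euc 3 →ₗ[ℝ] Euc 3} (hT : LinearMap.det T ≠ 0)
    (h : latticeSet T = latticeSet T') : LinearMap.det T' ≠ 0 := by
  have hmem : ∀ k, T (EuclideanSpace.single k 1) ∈ latticeSet T' := by
    intro k
    rw [← h]
    refine ⟨Pi.single k 1, ?_⟩
    congr 1
    rw [Finset.sum_eq_single k]
    · simp
    · intro b _ hb
      simp [Pi.single_eq_of_ne hb]
    · simp
  have hle : LinearMap.range T ≤ LinearMap.range T' := by
    rintro _ ⟨x, rfl⟩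
    have hx : x = ∑ k, x k • EuclideanSpace.single k (1 : ℝ) := by
      ext i
      fin_cases i <;> simp [Fin.sum_univ_three]
    rw [hx, map_sum]
    refine Submodule.sum_mem _ fun k _ => ?_
    rw [map_smul]
    refine Submodule.smul_mem _ _ ?_
    obtain ⟨z, hz⟩ := hmem k
    exact ⟨_, hz.symm⟩
  have hker : LinearMap.ker T = ⊥ := by
    rw [LinearMap.ker_eq_bot']
    intro x hx
    by_contra hne
    exact linear_ne_zero hT hne hx
  have htop : LinearMap.range T = ⊤ := LinearMap.ker_eq_bot_iff_range_eq_top.mp hker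
  have htop' : LinearMap.range T' = ⊤ := top_le_iff.mp (htop ▸ hle)
  have hu : IsUnit T' := LinearMap.isUnit_iff_range_eq_top _ |>.mpr htop'
  exact (hu.map LinearMap.det).ne_zero

lemma latDet_lower {K Λ : Set (Euc 3)} {r : ℝ} (hr : 0 < r) (hK : closedBall 0 r ⊆ K) (hΛ : IsLattice Λ)
    (ha : IsAdmissible Λ K) : r ^ 3 / √2 ≤ latDet Λ := by
  obtain ⟨T, hT, rfl⟩ := hΛ
  refine le_csInf ⟨_, T, rfl, rfl⟩ ?_
  rintro d ⟨T', hTT, rfl⟩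
  refine gauss T' (det_ne_of_lattice_eq hT hTT) hr fun v hv hv0 => ?_
  by_contra hlt
  push Not at hlt
  rw [← hTT] at hv
  refine hv0 (ha ⟨hv, ?_⟩)
  refine interior_mono hK (ball_subset_interior_closedBall ?_)
  simpa using hlt

lemma latDet_le (T : Euc 3 →ₗ[ℝ] Euc 3) : latDet (latticeSet T) ≤ |LinearMap.det T| :=
  csInf_le ⟨0, by rintro d ⟨T', -, rfl⟩; exact abs_nonneg _⟩ ⟨T, rfl, rfl⟩

lemma critDet_le {K : Set (Euc 3)} {r : ℝ} (hr : 0 < r) (hK : closedBall 0 r ⊆ K) {T : Euc 3 →ₗ[ℝ] Euc 3}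
    (hT : LinearMap.det T ≠ 0) (ha : IsAdmissible (latticeSet T) K) :
    critDet K ≤ |LinearMap.det T| := by
  refine le_trans (csInf_le ⟨r ^ 3 / √2, ?_⟩ ⟨_, ⟨T, hT, rfl⟩, ha, rfl⟩) (latDet_le T)
  rintro d ⟨Λ, hΛ, ha, rfl⟩
  exact latDet_lower hr hK hΛ ha

lemma le_critDet {K : Set (Euc 3)} {r : ℝ} (hr : 0 < r) (hK : closedBall 0 r ⊆ K) {T : Euc 3 →ₗ[ℝ] Euc 3}
    (hT : LinearMap.det T ≠ 0) (ha : IsAdmissible (latticeSet T) K) :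
    r ^ 3 / √2 ≤ critDet K := by
  refine le_csInf ⟨_, _, ⟨T, hT, rfl⟩, ha, rfl⟩ ?_
  rintro d ⟨Λ, hΛ, ha, rfl⟩
  exact latDet_lower hr hK hΛ ha

lemma T0_admissible : IsAdmissible (latticeSet T0) (unitBall 3) := by
  rintro v ⟨⟨z, hz⟩, hv⟩
  rw [unitBall, interior_closedBall _ one_ne_zero, mem_ball_zero_iff] at hv
  rcases T0_cases z hz with h | ⟨i, h | h⟩ | h
  · exact h
  · rw [h, norm_fcc] at hv; linarith
  · rw [h, norm_neg, norm_fcc] at hv; linarith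
  · nlinarith [norm_nonneg v]

lemma gauge_NL {K : Set (Euc 3)} (hK : IsSymCB K) {ε : ℝ} (hε : 0 < ε) (hε1 : ε ≤ 1 / 8)
    (h1 : closedBall 0 (1 - ε) ⊆ K) (h2 : K ⊆ closedBall 0 (1 + ε)) : NL (gauge K) (8 * ε) := by
  have hn : K ∈ nhds (0 : Euc 3) := Filter.mem_of_superset (closedBall_mem_nhds _ (by linarith)) h1
  have hab : Absorbent ℝ K := absorbent_nhds_zero hn
  have hsym : ∀ x ∈ K, -x ∈ K := fun x hx => by
    have : x ∈ -K := by rw [hK.symm]; exact hx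
    exact this
  refine ⟨fun x y => gauge_add_le hK.convex hab x y, fun c x => ?_, continuous_gauge hK.convex hn, fun x => ?_⟩
  · rcases le_total 0 c with hc | hc
    · rw [gauge_smul_of_nonneg hc, abs_of_nonneg hc, smul_eq_mul]
    · rw [abs_of_nonpos hc, ← gauge_neg hsym, ← neg_smul, gauge_smul_of_nonneg (neg_nonneg.mpr hc), smul_eq_mul]
  · have a1 : gauge K x ≤ ‖x‖ / (1 - ε) := by
      rw [← gauge_closedBall (by linarith)]
      exact gauge_mono (absorbent_nhds_zero (closedBall_mem_nhds _ (by linarith))) h1 x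
    have a2 : ‖x‖ / (1 + ε) ≤ gauge K x := by
      rw [← gauge_closedBall (by linarith)]
      exact gauge_mono hab h2 x
    have hx := norm_nonneg x
    rw [le_div_iff₀ (by linarith)] at a1
    rw [div_le_iff₀ (by linarith)] at a2
    have hg : 0 ≤ gauge K x := gauge_nonneg x
    generalize gauge K x = g at *
    generalize ‖x‖ = n at *
    have b1 : g ≤ n * (1 + 2 * ε) := by
      have : g * (1 - ε) * (1 + 2 * ε) ≤ n * (1 + 2 * ε) := mul_le_mul_of_nonneg_right a1 (by linarith)
      nlinarith [mul_nonneg hg (mul_nonneg hε.le (by linarith : 0 ≤ 1 - 2 * ε))]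
    have b2 : n * (1 - ε) ≤ g := by
      have : n * (1 - ε) ≤ g * (1 + ε) * (1 - ε) := mul_le_mul_of_nonneg_right a2 (by linarith)
      nlinarith [mul_nonneg hg (sq_nonneg ε)]
    have c1 : g ^ 2 ≤ (n * (1 + 2 * ε)) ^ 2 := pow_le_pow_left₀ hg b1 2
    have c2 : (n * (1 - ε)) ^ 2 ≤ g ^ 2 := pow_le_pow_left₀ (mul_nonneg hx (by linarith)) b2 2
    have d1 : 0 ≤ n ^ 2 * (ε * (1 - ε)) := mul_nonneg (sq_nonneg _) (mul_nonneg hε.le (by linarith))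
    have d2 : 0 ≤ n ^ 2 * ε := by positivity
    have d3 : 0 ≤ n ^ 2 * ε ^ 2 := by positivity
    rw [abs_le]
    constructor <;> nlinarith


/-- Theorem 4.4, main result: there is `ε > 0` such that every
origin-symmetric convex body `K ⊂ ℝ³` with `(1-ε)B³ ⊆ K ⊆ (1+ε)B³` which is not an
ellipsoid satisfies `φ(K) > φ(B³)`: the ball `B³` is a local pessimum for lattice
packing. -/
theorem ball_is_local_pessimum :
    ∃ ε > (0 : ℝ), ∀ K : Set (Euc 3), IsSymCB K →
      Metric.closedBall 0 (1 - ε) ⊆ K → K ⊆ Metric.closedBall 0 (1 + ε) →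
      (∀ T : Euc 3 ≃ₗ[ℝ] Euc 3, K ≠ ⇑T '' unitBall 3) →
      packFrac (unitBall 3) < packFrac K := by
  obtain ⟨δ, hδ, hδ1, hgeom⟩ := geom
  refine ⟨δ / 8, by positivity, fun K hK h1 h2 hne => ?_⟩
  have hn : K ∈ nhds (0 : Euc 3) := Filter.mem_of_superset (closedBall_mem_nhds _ (by linarith)) h1
  have H := gauge_NL hK (by positivity) (by linarith) h1 h2
  rw [mul_div_cancel₀ _ (by norm_num)] at H
  have hKset : K = {x | gauge K x ≤ 1} := by
    ext x
    rw [Set.mem_ofPred_eq, gauge_le_one_iff_mem_closure hK.convex hn, hK.compact.isClosed.closure_eq]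
  rcases hgeom _ H with ⟨T, hT⟩ | ⟨L, hL, hadm, hlt⟩
  · exfalso
    refine hne T.symm ?_
    ext x
    conv_lhs => rw [hKset]
    rw [Set.mem_ofPred_eq, hT, LinearEquiv.image_symm_eq_preimage, Set.mem_preimage, unitBall, mem_closedBall_zero_iff]
  · rw [← hKset] at hlt
    have hadm' : IsAdmissible (latticeSet L) K := by
      rintro v ⟨hv, hi⟩
      by_contra h0
      have := hadm v hv h0
      rw [← gauge_lt_one_iff_mem_interior hK.convex hn] at hi
      linarith
    have hr : (0 : ℝ) < 1 - δ / 8 := by linarith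
    have k1 := critDet_le hr h1 hL hadm'
    have k2 := le_critDet hr h1 hL hadm'
    have k3 := le_critDet one_pos (K := unitBall 3) subset_rfl
      (T := T0) (by rw [← abs_pos, det_T0]; positivity) T0_admissible
    have s2 : 0 < √(2 : ℝ) := by positivity
    have k2' : 0 < critDet K := lt_of_lt_of_le (by positivity) k2
    have k3' : 0 < critDet (unitBall 3) := lt_of_lt_of_le (by positivity) k3
    have hB : 0 ≤ (volume (unitBall 3)).toReal := ENNReal.toReal_nonneg
    unfold packFrac
    rw [div_lt_div_iff₀ (by positivity) (by positivity)]
    rw [one_pow, div_le_iff₀ s2] at k3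
    have e1 : (volume (unitBall 3)).toReal * critDet K ≤ (volume (unitBall 3)).toReal * |LinearMap.det L| := by gcongr
    have e2 : (volume (unitBall 3)).toReal * |LinearMap.det L| ≤
        (volume (unitBall 3)).toReal * |LinearMap.det L| * (critDet (unitBall 3) * √2) :=
      le_mul_of_one_le_right (by positivity) k3
    have e3 := mul_lt_mul_of_pos_right hlt k3'
    nlinarith

end
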